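/- arXiv:0811.2251 — 2 statements merged into one kernel-verified Lean document; each statement's English description precedes it below -/
import Mathlib

section
/- Let n ≥ 2. For each j = 1, …, n let T_{j,1}, …, T_{j,A(j)} be finitely many unit cylinders in ℝ^n with core directions v_{j,a}, and assume that for every choice of indices a_1, …, a_n the determinant of the matrix with columns v_{1,a_1}, …, v_{n,a_n} has absolute value at least θ > 0. Let I be the set of points of ℝ^n that belong to at least one cylinder T_{j,a} for each j = 1, …, n. Then Vol(I) ≤ C(n) θ^{-1/(n-1)} ∏_{j=1}^n A(j)^{1/(n-1)}, where C(n) depends only on n. -/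
open MeasureTheory
open scoped ENNReal

/-- The cylinder of radius `r` around the line through `p` with direction `v`. -/
noncomputable def cylinder {n : ℕ} (p v : EuclideanSpace ℝ (Fin n)) (r : ℝ) :
    Set (EuclideanSpace ℝ (Fin n)) :=
  {x | Metric.infDist x {y | ∃ t : ℝ, y = p + t • v} ≤ r}


/-- the vector of monomials of degree at most `d` in each variable -/
noncomputable def mono {n : ℕ} (d : ℕ) (x : Fin n → ℝ) : (Fin n → Fin (d+1)) → ℝ :=
  fun α => ∏ i, x i ^ (α i : ℕ)

/-- the polynomial with coefficients `w` -/
noncomputable def pol {n : ℕ} (d : ℕ) (w : (Fin n → Fin (d+1)) → ℝ) (x : Fin n → ℝ) : ℝ :=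
  w ⬝ᵥ mono d x

lemma mono_continuous {n d : ℕ} : Continuous (mono (n := n) d) := by
  unfold mono; fun_prop

lemma pol_continuous {n d : ℕ} (w : (Fin n → Fin (d+1)) → ℝ) : Continuous (pol d w) := by
  unfold pol dotProduct mono; fun_prop

lemma pol_cons {n d : ℕ} (w : (Fin (n+1) → Fin (d+1)) → ℝ) (t : ℝ) (x : Fin n → ℝ) :
    pol d w (Fin.cons t x) = ∑ k : Fin (d+1), t ^ (k : ℕ) * pol d (fun β => w (Fin.cons k β)) x := by
  unfold pol dotProduct mono
  rw [← (Fin.consEquiv (fun _ => Fin (d+1))).sum_comp, Fintype.sum_prod_type]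
  refine Finset.sum_congr rfl fun k _ => ?_
  rw [Finset.mul_sum]
  refine Finset.sum_congr rfl fun β _ => ?_
  simp [Fin.prod_univ_succ, Fin.consEquiv]
  ring

lemma pol_zero_null {n d : ℕ} (w : (Fin n → Fin (d+1)) → ℝ) (hw : w ≠ 0) :
    volume {x | pol d w x = 0} = 0 := by
  induction n with
  | zero =>
    have : {x : Fin 0 → ℝ | pol d w x = 0} = ∅ := by
      ext x
      simp only [Set.mem_ofPred_eq, Set.mem_empty_iff_false, iff_false]
      intro h
      apply hw
      funext α
      have : pol d w x = w α := by
        unfold pol dotProduct mono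
        rw [Fintype.sum_eq_single α]
        · simp
        · intro b hb; exact absurd (Subsingleton.elim _ _) hb
      simpa [this] using h
    simp [this]
  | succ n ih =>
    obtain ⟨α, hα⟩ := Function.ne_iff.mp hw
    set k0 := α 0
    have hk0 : (fun β : Fin n → Fin (d+1) => w (Fin.cons k0 β)) ≠ 0 := by
      intro h
      apply hα
      have := congrFun h (Fin.tail α)
      simpa [k0, Fin.cons_self_tail] using this
    have h0 := ih _ hk0
    have mp := (volume_preserving_piFinSuccAbove (fun _ : Fin (n+1) => ℝ) 0).symm
    have hmeas : MeasurableSet {x | pol d w x = 0} :=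
      (isClosed_singleton.preimage (pol_continuous w)).measurableSet
    rw [← mp.measure_preimage hmeas.nullMeasurableSet]
    have hm2 := mp.measurable hmeas
    rw [Measure.volume_eq_prod, Measure.prod_apply_symm hm2]
    refine lintegral_eq_zero_of_ae_eq_zero ?_
    have h1 : ∀ᵐ x : Fin n → ℝ, pol d (fun β => w (Fin.cons k0 β)) x ≠ 0 := by
      rw [ae_iff]; simpa using h0
    filter_upwards [h1] with x hx
    have hfin : Set.Finite {t : ℝ | pol d w (Fin.cons t x) = 0} := by
      set P : Polynomial ℝ := ∑ k : Fin (d+1),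
        Polynomial.C (pol d (fun β => w (Fin.cons k β)) x) * Polynomial.X ^ (k : ℕ) with hP
      have hP0 : P ≠ 0 := by
        intro h
        apply hx
        have := congrArg (fun Q => Polynomial.coeff Q (k0 : ℕ)) h
        simp only [hP, Polynomial.finsetSum_coeff, Polynomial.coeff_C_mul_X_pow,
          Polynomial.coeff_zero] at this
        rw [Fintype.sum_eq_single k0] at this
        · simpa using this
        · intro b hb
          rw [if_neg]
          intro h; exact hb (Fin.ext h.symm)
      refine (P.roots.toFinset.finite_toSet).subset ?_
      intro t ht
      have ht' : pol d w (Fin.cons t x) = 0 := ht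
      simp only [Finset.mem_coe, Multiset.mem_toFinset, Polynomial.mem_roots hP0,
        Polynomial.IsRoot.def]
      rw [pol_cons] at ht'
      rw [← ht', hP, Polynomial.eval_finsetSum]
      refine Finset.sum_congr rfl fun k _ => ?_
      rw [Polynomial.eval_mul, Polynomial.eval_C, Polynomial.eval_pow, Polynomial.eval_X, mul_comm]
    refine measure_mono_null ?_ (hfin.measure_zero _)
    intro t ht
    have ht' : pol d w ((MeasurableEquiv.piFinSuccAbove (fun _ => ℝ) 0).symm (t, x)) = 0 := ht
    simpa [MeasurableEquiv.piFinSuccAbove, Fin.consEquiv] using ht'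

/-- restriction of `pol` to a line is a polynomial -/
lemma pol_line {n d : ℕ} (w : (Fin n → Fin (d+1)) → ℝ) (y v : Fin n → ℝ) :
    ∃ P : Polynomial ℝ, P.natDegree ≤ n * d ∧ ∀ t, P.eval t = pol d w (y + t • v) := by
  refine ⟨∑ α, Polynomial.C (w α) *
    ∏ i, (Polynomial.C (y i) + Polynomial.C (v i) * Polynomial.X) ^ (α i : ℕ), ?_, ?_⟩
  · refine Polynomial.natDegree_sum_le_of_forall_le _ _ fun α _ => ?_
    refine (Polynomial.natDegree_C_mul_le _ _).trans ?_
    refine (Polynomial.natDegree_prod_le _ _).trans ?_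
    calc _ ≤ ∑ i : Fin n, d := by
          refine Finset.sum_le_sum fun i _ => ?_
          refine Polynomial.natDegree_pow_le.trans ?_
          have h1 : (Polynomial.C (y i) + Polynomial.C (v i) * Polynomial.X).natDegree ≤ 1 := by
            rw [add_comm]; exact Polynomial.natDegree_linear_le
          have := (α i).is_lt
          nlinarith
      _ = n * d := by simp
  · intro t
    simp only [Polynomial.eval_finsetSum, Polynomial.eval_prod, pol, dotProduct, mono,
      Polynomial.eval_mul, Polynomial.eval_C, Polynomial.eval_pow, Polynomial.eval_X,
      Polynomial.eval_add, Pi.add_apply, Pi.smul_apply, smul_eq_mul, mul_comm t]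

/-- a sign change -/
def SC (a b : ℝ) : Prop := ¬ (0 < a ↔ 0 < b)

lemma SC_trans {a b c : ℝ} (h : SC a c) : SC a b ∨ SC b c := by
  unfold SC at *; tauto

lemma measurableSet_SC {X : Type*} [MeasurableSpace X] {f g : X → ℝ} (hf : Measurable f)
    (hg : Measurable g) : MeasurableSet {x | SC (f x) (g x)} := by
  have h1 : MeasurableSet {x | 0 < f x} := measurableSet_lt measurable_const hf
  have h2 : MeasurableSet {x | 0 < g x} := measurableSet_lt measurable_const hg
  exact (h1.iff h2).compl

lemma crossing {N : ℕ} (P : Polynomial ℝ) (hP : P.natDegree ≤ N) (σ : ℝ) :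
    volume {t | SC (P.eval t) (P.eval (t + σ))} ≤ ENNReal.ofReal (N * |σ|) := by
  have hsub : {t | SC (P.eval t) (P.eval (t + σ))} ⊆
      ⋃ r ∈ P.roots.toFinset, Set.uIcc (r - σ) r := by
    intro t ht
    have ht' : SC (P.eval t) (P.eval (t + σ)) := ht
    have hP0 : P ≠ 0 := by rintro rfl; simp [SC] at ht'
    have h0 : (0:ℝ) ∈ Set.uIcc (P.eval t) (P.eval (t+σ)) := by
      rw [Set.mem_uIcc]
      unfold SC at ht'
      by_cases h1 : 0 < P.eval t <;> by_cases h2 : 0 < P.eval (t+σ)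
      · tauto
      · right; constructor <;> linarith
      · left; constructor <;> linarith
      · tauto
    obtain ⟨r, hr, hr0⟩ := intermediate_value_uIcc (P.continuous.continuousOn) h0
    simp only [Set.mem_iUnion]
    refine ⟨r, ?_, ?_⟩
    · simpa [Polynomial.mem_roots hP0] using hr0
    · rw [Set.mem_uIcc] at hr ⊢
      rcases hr with ⟨h1, h2⟩ | ⟨h1, h2⟩
      · left; constructor <;> linarith
      · right; constructor <;> linarith
  refine (measure_mono hsub).trans ((measure_biUnion_finset_le _ _).trans ?_)
  have : ∀ r ∈ P.roots.toFinset, volume (Set.uIcc (r - σ) r) = ENNReal.ofReal |σ| := by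
    intro r _
    rw [Real.volume_interval]; simp
  rw [Finset.sum_congr rfl this, Finset.sum_const, nsmul_eq_mul, ENNReal.ofReal_mul (by positivity),
    ENNReal.ofReal_natCast]
  gcongr
  exact (Multiset.toFinset_card_le _).trans ((Polynomial.card_roots' P).trans hP)

lemma tube {n d : ℕ} (w : (Fin n → Fin (d+1)) → ℝ) (p v : Fin n → ℝ) (hv : ‖v‖ ≤ 1) (σ : ℝ)
    (U : Set (Fin n → ℝ)) (hU : MeasurableSet U) (hsub : ∀ z ∈ U, ∃ t : ℝ, ‖z - (p + t • v)‖ ≤ 3) :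
    volume (U ∩ {z | SC (pol d w z) (pol d w (z + σ • v))}) ≤
      ENNReal.ofReal (8 ^ n * (n * d * |σ|)) := by
  set S := {z | SC (pol d w z) (pol d w (z + σ • v))} with hS
  have hSm : MeasurableSet S := measurableSet_SC (pol_continuous w).measurable
    ((pol_continuous w).measurable.comp (measurable_id.add_const _))
  set B := Metric.closedBall p 4 with hB
  have hBm : MeasurableSet B := Metric.isClosed_closedBall.measurableSet
  have key : ∀ z ∈ U, 1 ≤ ∫⁻ t : ℝ, B.indicator 1 (z - t • v) := by
    intro z hz
    obtain ⟨t0, ht0⟩ := hsub z hz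
    calc (1:ℝ≥0∞) = ∫⁻ t : ℝ, (Set.Icc t0 (t0+1)).indicator 1 t := by
          rw [lintegral_indicator_one measurableSet_Icc]; simp
      _ ≤ _ := by
          refine lintegral_mono fun t => ?_
          by_cases ht : t ∈ Set.Icc t0 (t0+1)
          · have : z - t • v ∈ B := by
              rw [hB, Metric.mem_closedBall, dist_eq_norm]
              have e : z - t • v - p = (z - (p + t0 • v)) - (t - t0) • v := by
                rw [sub_smul]; abel
              rw [e]
              refine (norm_sub_le _ _).trans ?_
              rw [norm_smul, Real.norm_eq_abs, abs_of_nonneg (by linarith [ht.1])]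
              have := ht.2
              have := ht.1
              nlinarith [norm_nonneg v]
            simp [this, Set.indicator_apply]
            split_ifs <;> simp
          · simp [ht]
  have hmeas : Measurable (fun q : (Fin n → ℝ) × ℝ => S.indicator (1 : (Fin n → ℝ) → ℝ≥0∞) q.1 *
      B.indicator 1 (q.1 - q.2 • v)) := by
    refine Measurable.mul ?_ ?_
    · exact (measurable_one.indicator hSm).comp measurable_fst
    · refine (measurable_one.indicator hBm).comp ?_
      exact Continuous.measurable (by fun_prop)
  calc volume (U ∩ S) = ∫⁻ z, (U ∩ S).indicator 1 z := by
        rw [lintegral_indicator_one (hU.inter hSm)]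
    _ ≤ ∫⁻ z, ∫⁻ t : ℝ, S.indicator 1 z * B.indicator 1 (z - t • v) := by
        refine lintegral_mono fun z => ?_
        by_cases hz : z ∈ U ∩ S
        · simp only [Set.indicator_of_mem hz, Set.indicator_of_mem hz.2]
          simpa using key z hz.1
        · simp [hz]
    _ = ∫⁻ t : ℝ, ∫⁻ z, S.indicator 1 z * B.indicator 1 (z - t • v) :=
        lintegral_lintegral_swap hmeas.aemeasurable
    _ = ∫⁻ t : ℝ, ∫⁻ y, S.indicator 1 (y + t • v) * B.indicator 1 y := by
        refine lintegral_congr fun t => ?_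
        rw [← lintegral_add_right_eq_self _ (t • v)]
        simp
    _ = ∫⁻ y, ∫⁻ t : ℝ, S.indicator 1 (y + t • v) * B.indicator 1 y := by
        refine lintegral_lintegral_swap (Measurable.aemeasurable ?_)
        refine Measurable.mul ?_ ?_
        · refine (measurable_one.indicator hSm).comp (Continuous.measurable ?_)
          fun_prop
        · exact (measurable_one.indicator hBm).comp measurable_snd
    _ ≤ ∫⁻ y, B.indicator 1 y * ENNReal.ofReal ((n * d : ℕ) * |σ|) := by
        refine lintegral_mono fun y => ?_
        have hm : Measurable (fun t : ℝ => S.indicator (1 : (Fin n → ℝ) → ℝ≥0∞) (y + t • v)) := by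
          refine (measurable_one.indicator hSm).comp (Continuous.measurable ?_)
          fun_prop
        rw [lintegral_mul_const _ hm, mul_comm]
        gcongr
        obtain ⟨P, hP, hPe⟩ := pol_line w y v
        refine le_trans (le_of_eq ?_) (crossing P hP σ)
        have hm2 : MeasurableSet {t | SC (P.eval t) (P.eval (t + σ))} :=
          measurableSet_SC P.continuous.measurable
            (P.continuous.measurable.comp (measurable_id.add_const _))
        rw [← lintegral_indicator_one hm2]
        refine lintegral_congr fun t => ?_
        have : (y + t • v ∈ S) ↔ t ∈ {t | SC (P.eval t) (P.eval (t + σ))} := by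
          change SC _ _ ↔ SC _ _
          rw [hPe, hPe, add_smul, add_assoc]
        by_cases h : y + t • v ∈ S
        · rw [Set.indicator_of_mem h, Set.indicator_of_mem (this.1 h)]; rfl
        · rw [Set.indicator_of_notMem h, Set.indicator_of_notMem (fun h' => h (this.2 h'))]
    _ = _ := by
        rw [lintegral_mul_const _ (measurable_one.indicator hBm), lintegral_indicator_one hBm, hB,
          Real.volume_pi_closedBall _ (by norm_num), ← ENNReal.ofReal_mul (by positivity)]
        norm_num

lemma abs_dot_le {ι : Type*} [Fintype ι] (w y : ι → ℝ) (M : ℝ) (hM : 0 ≤ M) (hy : ∀ i, |y i| ≤ M) :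
    |w ⬝ᵥ y| ≤ ‖w‖ * (Fintype.card ι * M) := by
  unfold dotProduct
  calc |∑ i, w i * y i| ≤ ∑ i, |w i * y i| := Finset.abs_sum_le_sum_abs _ _
    _ ≤ ∑ i : ι, ‖w‖ * M := by
        refine Finset.sum_le_sum fun i _ => ?_
        rw [abs_mul]
        exact mul_le_mul (norm_le_pi_norm w i) (hy i) (abs_nonneg _) (norm_nonneg _)
    _ = _ := by simp; ring

lemma measurable_dot {X ι : Type*} [MeasurableSpace X] [Fintype ι] {f g : X → ι → ℝ}
    (hf : Measurable f) (hg : Measurable g) : Measurable fun x => f x ⬝ᵥ g x := by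
  unfold dotProduct
  exact Finset.measurable_fun_sum _ fun i _ =>
    ((measurable_pi_apply i).comp hf).mul ((measurable_pi_apply i).comp hg)

lemma measurable_mulVec {X ι : Type*} [MeasurableSpace X] [Fintype ι] (g : Matrix ι ι ℝ)
    {f : X → ι → ℝ} (hf : Measurable f) : Measurable fun x => g.mulVec (f x) := by
  refine measurable_pi_lambda _ fun i => ?_
  exact measurable_dot measurable_const hf

lemma small_ball {X ι : Type*} [MeasurableSpace X] [Fintype ι] (μ : Measure X) [IsFiniteMeasure μ]
    (φ : X → ι → ℝ) (hφ : Measurable φ) (M : ℝ) (hM0 : 0 ≤ M) (hM : ∀ᵐ x ∂μ, ∀ i, |φ x i| ≤ M)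
    (hnull : ∀ w, w ≠ 0 → μ {x | w ⬝ᵥ φ x = 0} = 0) (η : ℝ≥0∞) (hη : 0 < η) :
    ∃ δ : ℝ, 0 < δ ∧ δ ≤ 1 ∧ ∀ w : ι → ℝ, ‖w‖ = 1 → μ {x | |w ⬝ᵥ φ x| < δ} ≤ η := by
  have hms : ∀ (w : ι → ℝ) (δ : ℝ), MeasurableSet {x | |w ⬝ᵥ φ x| < δ} := fun w δ =>
    measurableSet_lt (measurable_dot measurable_const hφ).abs measurable_const
  suffices h : ∃ δ : ℝ, 0 < δ ∧ δ ≤ 1 ∧ ∀ w ∈ Metric.sphere (0 : ι → ℝ) 1,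
      μ {x | |w ⬝ᵥ φ x| < δ} ≤ η by
    obtain ⟨δ, h1, h2, h3⟩ := h
    exact ⟨δ, h1, h2, fun w hw => h3 w (by simpa using hw)⟩
  refine (isCompact_sphere (0 : ι → ℝ) 1).induction_on
    (p := fun S => ∃ δ : ℝ, 0 < δ ∧ δ ≤ 1 ∧ ∀ w ∈ S, μ {x | |w ⬝ᵥ φ x| < δ} ≤ η) ?_ ?_ ?_ ?_
  · exact ⟨1, one_pos, le_rfl, by simp⟩
  · rintro s t hst ⟨δ, h1, h2, h3⟩
    exact ⟨δ, h1, h2, fun w hw => h3 w (hst hw)⟩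
  · rintro s t ⟨δ, h1, h2, h3⟩ ⟨δ', h1', h2', h3'⟩
    refine ⟨min δ δ', lt_min h1 h1', (min_le_left _ _).trans h2, ?_⟩
    rintro w (hw | hw)
    · refine le_trans (measure_mono ?_) (h3 w hw)
      intro x hx
      exact lt_of_lt_of_le (show |w ⬝ᵥ φ x| < min δ δ' from hx) (min_le_left _ _)
    · refine le_trans (measure_mono ?_) (h3' w hw)
      intro x hx
      exact lt_of_lt_of_le (show |w ⬝ᵥ φ x| < min δ δ' from hx) (min_le_right _ _)
  · intro w hw
    have hw0 : w ≠ 0 := by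
      rintro rfl
      simp at hw
    have ht := tendsto_measure_iInter_atTop (μ := μ)
      (s := fun k : ℕ => {x | |w ⬝ᵥ φ x| < 1 / ((k : ℝ) + 1)})
      (fun k => (hms w _).nullMeasurableSet)
      (fun a b hab x hx => show |w ⬝ᵥ φ x| < 1 / ((a : ℝ) + 1) from
        lt_of_lt_of_le (show |w ⬝ᵥ φ x| < 1 / ((b : ℝ) + 1) from hx) (Nat.one_div_le_one_div hab)) ⟨0, measure_ne_top _ _⟩
    have h0 : μ (⋂ k : ℕ, {x | |w ⬝ᵥ φ x| < 1 / ((k : ℝ) + 1)}) = 0 := by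
      refine measure_mono_null ?_ (hnull w hw0)
      intro x hx
      have hx' : ∀ k : ℕ, |w ⬝ᵥ φ x| < 1 / ((k : ℝ) + 1) := fun k => Set.mem_iInter.1 hx k
      change w ⬝ᵥ φ x = 0
      by_contra hne
      obtain ⟨k, hk⟩ := exists_nat_one_div_lt (abs_pos.2 hne)
      exact absurd (hx' k) (not_lt.2 hk.le)
    rw [h0] at ht
    obtain ⟨k, hk⟩ := (ht.eventually_lt_const hη).exists
    set δ : ℝ := 1 / ((k : ℝ) + 1) with hδ
    have hδ0 : 0 < δ := by positivity
    have hδ1 : δ ≤ 1 := by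
      rw [hδ, div_le_one (by positivity)]; linarith [(Nat.cast_nonneg k : (0:ℝ) ≤ k)]
    set K : ℝ := Fintype.card ι * M + 1 with hK
    have hK0 : 0 < K := by positivity
    refine ⟨Metric.ball w (δ / 2 / K), mem_nhdsWithin_of_mem_nhds (Metric.ball_mem_nhds _ (by positivity)),
      δ / 2, by positivity, by linarith, ?_⟩
    intro w' hw'
    refine le_trans ?_ hk.le
    refine measure_mono_ae ?_
    filter_upwards [hM] with x hx hx2
    change |w' ⬝ᵥ φ x| < δ / 2 at hx2
    change |w ⬝ᵥ φ x| < δ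
    have h1 := abs_dot_le (w' - w) (φ x) M hM0 hx
    rw [sub_dotProduct] at h1
    rw [Metric.mem_ball, dist_eq_norm] at hw'
    have h2 : ‖w' - w‖ * (Fintype.card ι * M) ≤ δ / 2 := by
      have h3 : ‖w' - w‖ * K ≤ δ / 2 := by
        rw [lt_div_iff₀ hK0] at hw'; exact hw'.le
      have := norm_nonneg (w' - w)
      nlinarith
    have := abs_sub_abs_le_abs_sub (w ⬝ᵥ φ x) (w' ⬝ᵥ φ x)
    rw [abs_sub_comm] at this
    linarith

lemma dot_self_nonneg' {ι : Type*} [Fintype ι] (y : ι → ℝ) : 0 ≤ y ⬝ᵥ y :=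
  Finset.sum_nonneg fun i _ => mul_self_nonneg _

lemma dot_sq_le {ι : Type*} [Fintype ι] (a y : ι → ℝ) : (a ⬝ᵥ y) ^ 2 ≤ (a ⬝ᵥ a) * (y ⬝ᵥ y) := by
  have := Finset.sum_mul_sq_le_sq_mul_sq Finset.univ a y
  simpa [dotProduct, sq] using this

lemma det_sq_le {ι : Type*} [Fintype ι] [DecidableEq ι] (g : Matrix ι ι ℝ) (y : ι → ℝ) (i0 : ι)
    (hy : y i0 = 1) :
    g.det ^ 2 ≤ (g.adjugate i0 ⬝ᵥ g.adjugate i0) * (g.mulVec y ⬝ᵥ g.mulVec y) := by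
  have h : g.adjugate i0 ⬝ᵥ g.mulVec y = g.det := by
    have : (g.adjugate.mulVec (g.mulVec y)) i0 = g.det := by
      rw [Matrix.mulVec_mulVec, Matrix.adjugate_mul, Matrix.smul_mulVec, Matrix.one_mulVec]
      simp [hy]
    exact this
  rw [← h]
  exact dot_sq_le _ _

section forster
variable {X ι : Type*} [MeasurableSpace X] [Fintype ι] [DecidableEq ι] (μ : Measure X)
  [IsFiniteMeasure μ] (φ : X → ι → ℝ)

/-- the squared norm -/
def NN (g : Matrix ι ι ℝ) (x : X) : ℝ := g.mulVec (φ x) ⬝ᵥ g.mulVec (φ x)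

/-- the functional to be minimized -/
noncomputable def GG (g : Matrix ι ι ℝ) : ℝ :=
  ∫ x, Real.log (NN φ g x) ∂μ - (2 * μ.real Set.univ / Fintype.card ι) * Real.log |g.det|

variable {φ}
lemma NN_pos (i0 : ι) (h1 : ∀ x, φ x i0 = 1) (g : Matrix ι ι ℝ) (hg : g.det ≠ 0) (x : X) :
    0 < NN φ g x := by
  have h := det_sq_le g (φ x) i0 (h1 x)
  have h2 : 0 < g.det ^ 2 := by positivity
  have h3 := dot_self_nonneg' (g.mulVec (φ x))
  have h4 := dot_self_nonneg' (g.adjugate i0)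
  unfold NN
  rcases h3.eq_or_lt with h5 | h5
  · rw [← h5] at h; linarith
  · exact h5

lemma NN_measurable (hφ : Measurable φ) (g : Matrix ι ι ℝ) : Measurable (NN φ g) :=
  measurable_dot (measurable_mulVec g hφ) (measurable_mulVec g hφ)

lemma NN_log_integrable (hφ : Measurable φ) (i0 : ι) (h1 : ∀ x, φ x i0 = 1) (M : ℝ) (hM0 : 0 ≤ M)
    (hM : ∀ᵐ x ∂μ, ∀ i, |φ x i| ≤ M) (g : Matrix ι ι ℝ) (hg : g.det ≠ 0) :
    Integrable (fun x => Real.log (NN φ g x)) μ := by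
  set S := g.adjugate i0 ⬝ᵥ g.adjugate i0 with hS
  set U := ∑ i, (‖g i‖ * (Fintype.card ι * M)) ^ 2 with hU
  refine Integrable.of_bound (C := |Real.log (g.det ^ 2 / S)| + |Real.log U|)
    ((NN_measurable hφ g).log.aestronglyMeasurable) ?_
  filter_upwards [hM] with x hx
  have hpos := NN_pos i0 h1 g hg x
  have h := det_sq_le g (φ x) i0 (h1 x)
  have h2 : 0 < g.det ^ 2 := by positivity
  have hS0 : 0 < S := by
    rcases (dot_self_nonneg' (g.adjugate i0)).eq_or_lt with h5 | h5
    · rw [← h5] at h; linarith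
    · exact h5
  have hup : NN φ g x ≤ U := by
    unfold NN dotProduct
    refine Finset.sum_le_sum fun i _ => ?_
    rw [← sq]
    refine sq_le_sq' ?_ ?_
    · exact (abs_le.1 (abs_dot_le (g i) (φ x) M hM0 hx)).1
    · exact (abs_le.1 (abs_dot_le (g i) (φ x) M hM0 hx)).2
  have hlow : g.det ^ 2 / S ≤ NN φ g x := by
    rw [div_le_iff₀ hS0, mul_comm]; exact h
  have l1 := Real.log_le_log (by positivity) hlow
  have l2 := Real.log_le_log hpos hup
  rw [Real.norm_eq_abs, abs_le]
  constructor
  · linarith [neg_abs_le (Real.log (g.det ^ 2 / S)), abs_nonneg (Real.log U)]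
  · linarith [le_abs_self (Real.log U), abs_nonneg (Real.log (g.det ^ 2 / S))]

lemma GG_smul (hφ : Measurable φ) (i0 : ι) (h1 : ∀ x, φ x i0 = 1) (M : ℝ) (hM0 : 0 ≤ M)
    (hM : ∀ᵐ x ∂μ, ∀ i, |φ x i| ≤ M) (g : Matrix ι ι ℝ) (hg : g.det ≠ 0) (s : ℝ) (hs : 0 < s) :
    GG μ φ (s • g) = GG μ φ g := by
  have hc : (0:ℝ) < Fintype.card ι := by
    exact_mod_cast Fintype.card_pos_iff.2 ⟨i0⟩
  have e1 : ∀ x, Real.log (NN φ (s • g) x) = 2 * Real.log s + Real.log (NN φ g x) := by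
    intro x
    have : NN φ (s • g) x = s ^ 2 * NN φ g x := by
      simp only [NN, Matrix.smul_mulVec, smul_dotProduct, dotProduct_smul, smul_eq_mul]; ring
    rw [this, Real.log_mul (by positivity) (NN_pos i0 h1 g hg x).ne', Real.log_pow]
    norm_num
  have e2 : Real.log |(s • g).det| = Fintype.card ι * Real.log s + Real.log |g.det| := by
    rw [Matrix.det_smul, abs_mul, Real.log_mul (by positivity) (by positivity), abs_of_pos (by positivity),
      Real.log_pow]
  unfold GG
  simp_rw [e1]
  rw [integral_add (integrable_const _) (NN_log_integrable μ hφ i0 h1 M hM0 hM g hg), e2]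
  simp
  field_simp
  ring

lemma GG_bdd (hφ : Measurable φ) (i0 : ι) (h1 : ∀ x, φ x i0 = 1) (M : ℝ) (hM0 : 0 ≤ M)
    (hM : ∀ᵐ x ∂μ, ∀ i, |φ x i| ≤ M) (hnull : ∀ w, w ≠ 0 → μ {x | w ⬝ᵥ φ x = 0} = 0)
    (hμ : 0 < μ.real Set.univ) :
    ∃ B : ℝ, ∀ g : Matrix ι ι ℝ, g.det ≠ 0 → B ≤ GG μ φ g := by
  have hc : (0:ℝ) < Fintype.card ι := by
    exact_mod_cast Fintype.card_pos_iff.2 ⟨i0⟩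
  set m := μ.real Set.univ with hm
  set D : ℝ := (Fintype.card ι : ℝ) with hD
  obtain ⟨δ, hδ0, hδ1, hδ⟩ := small_ball μ φ hφ M hM0 hM hnull (ENNReal.ofReal (m / D))
    (by rw [ENNReal.ofReal_pos]; positivity)
  set F : ℝ := ((Fintype.card ι).factorial : ℝ) with hF
  have hF1 : 1 ≤ F := by
    rw [hF]; exact_mod_cast Nat.succ_le_of_lt (Nat.factorial_pos _)
  set c0 : ℝ := 1 / (D * F ^ 2) with hc0
  have hc0p : 0 < c0 := by positivity
  refine ⟨m * Real.log (δ ^ 2) + (m / D) * Real.log c0, ?_⟩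
  intro g0 hg0
  obtain ⟨i, -, hi⟩ := Finset.exists_max_image (Finset.univ : Finset ι) (fun i => ‖g0 i‖) ⟨i0, by simp⟩
  set s := ‖g0 i‖ with hs
  have hs0 : 0 < s := by
    rcases (norm_nonneg (g0 i)).eq_or_lt with h | h
    · exfalso
      apply hg0
      exact Matrix.det_eq_zero_of_row_eq_zero i (fun j => by
        have := norm_eq_zero.1 h.symm
        exact congrFun this j)
    · exact h
  set g : Matrix ι ι ℝ := s⁻¹ • g0 with hgdef
  have hg : g.det ≠ 0 := by
    rw [hgdef, Matrix.det_smul]; positivity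
  have hrow : ∀ k, ‖g k‖ ≤ 1 := by
    intro k
    have : g k = s⁻¹ • g0 k := rfl
    rw [this, norm_smul, norm_inv, Real.norm_eq_abs, abs_of_pos hs0, inv_mul_le_iff₀ hs0, mul_one]
    exact hi k (by simp)
  have hrowi : ‖g i‖ = 1 := by
    have : g i = s⁻¹ • g0 i := rfl
    rw [this, norm_smul, norm_inv, Real.norm_eq_abs, abs_of_pos hs0, inv_mul_cancel₀ hs0.ne']
  have hent : ∀ k l, |g k l| ≤ 1 := fun k l => (norm_le_pi_norm (g k) l).trans (hrow k)
  rw [← GG_smul μ hφ i0 h1 M hM0 hM g0 hg0 s⁻¹ (by positivity), ← hgdef]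
  have hdetle : ∀ A : Matrix ι ι ℝ, (∀ k l, |A k l| ≤ 1) → |A.det| ≤ F := by
    intro A hA
    have := Matrix.det_le (A := A) (abv := AbsoluteValue.abs) (x := 1) (fun k l => hA k l)
    simpa [hF] using this
  have hadj : ∀ k, |g.adjugate i0 k| ≤ F := by
    intro k
    rw [Matrix.adjugate_apply]
    apply hdetle
    intro a b
    rw [Matrix.updateRow_apply]
    split_ifs
    · rw [Pi.single_apply]; split_ifs <;> simp
    · exact hent a b
  have hS : g.adjugate i0 ⬝ᵥ g.adjugate i0 ≤ D * F ^ 2 := by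
    unfold dotProduct
    calc _ ≤ ∑ _k : ι, F ^ 2 := by
          refine Finset.sum_le_sum fun k _ => ?_
          rw [← sq]; exact sq_le_sq' (abs_le.1 (hadj k)).1 (abs_le.1 (hadj k)).2
      _ = _ := by simp [hD]
  have hlow : ∀ x, c0 * g.det ^ 2 ≤ NN φ g x := by
    intro x
    have h := det_sq_le g (φ x) i0 (h1 x)
    have hp := (NN_pos i0 h1 g hg x).le
    rw [hc0, one_div, inv_mul_le_iff₀ (by positivity)]
    exact h.trans (mul_le_mul_of_nonneg_right hS hp)
  have hcd0 : 0 < c0 * g.det ^ 2 := by positivity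
  have hcd : c0 * g.det ^ 2 ≤ 1 := by
    have h2 : g.det ^ 2 ≤ F ^ 2 := sq_le_sq' (abs_le.1 (hdetle g hent)).1 (abs_le.1 (hdetle g hent)).2
    have hD1 : 1 ≤ D := by
      rw [hD]; exact_mod_cast Nat.succ_le_of_lt (Fintype.card_pos_iff.2 ⟨i0⟩)
    rw [hc0, one_div, inv_mul_le_iff₀ (by positivity), mul_one]
    nlinarith [sq_nonneg F]
  set bad := {x | |g i ⬝ᵥ φ x| < δ} with hbad
  have hbadm : MeasurableSet bad :=
    measurableSet_lt (measurable_dot measurable_const hφ).abs measurable_const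
  have hbadμ : μ.real bad ≤ m / D := by
    refine ENNReal.toReal_le_of_le_ofReal (by positivity) (hδ (g i) hrowi)
  have hlc : Real.log (c0 * g.det ^ 2) ≤ 0 := Real.log_nonpos hcd0.le hcd
  have hlδ : Real.log (δ ^ 2) ≤ 0 := Real.log_nonpos (by positivity) (pow_le_one₀ hδ0.le hδ1)
  have hpt : ∀ x, Real.log (δ ^ 2) + bad.indicator (fun _ => Real.log (c0 * g.det ^ 2)) x
      ≤ Real.log (NN φ g x) := by
    intro x
    by_cases hx : x ∈ bad
    · rw [Set.indicator_of_mem hx]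
      linarith [Real.log_le_log hcd0 (hlow x)]
    · rw [Set.indicator_of_notMem hx, add_zero]
      apply Real.log_le_log (by positivity)
      have hx' : δ ≤ |g i ⬝ᵥ φ x| := not_lt.1 hx
      calc δ ^ 2 ≤ |g i ⬝ᵥ φ x| ^ 2 := pow_le_pow_left₀ hδ0.le hx' 2
        _ = (g.mulVec (φ x) i) * (g.mulVec (φ x) i) := by rw [sq_abs, sq]; rfl
        _ ≤ NN φ g x := by
            unfold NN
            exact Finset.single_le_sum (f := fun k => (g.mulVec (φ x) k) * (g.mulVec (φ x) k))
              (fun k _ => mul_self_nonneg _) (Finset.mem_univ i)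
  have hInteg := integral_mono ((integrable_const (Real.log (δ ^ 2))).add
    ((integrable_const (μ := μ) (Real.log (c0 * g.det ^ 2))).indicator hbadm))
    (NN_log_integrable μ hφ i0 h1 M hM0 hM g hg) hpt
  simp only [Pi.add_apply] at hInteg
  rw [integral_add (integrable_const _)
    ((integrable_const (μ := μ) (Real.log (c0 * g.det ^ 2))).indicator hbadm),
    integral_indicator hbadm] at hInteg
  simp only [integral_const, smul_eq_mul, measureReal_restrict_apply_univ] at hInteg
  have h3 : (m / D) * Real.log (c0 * g.det ^ 2) ≤ μ.real bad * Real.log (c0 * g.det ^ 2) :=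
    mul_le_mul_of_nonpos_right hbadμ hlc
  have h4 : Real.log (c0 * g.det ^ 2) = Real.log c0 + 2 * Real.log |g.det| := by
    rw [Real.log_mul hc0p.ne' (by positivity), Real.log_pow, Real.log_abs]; norm_num
  unfold GG
  rw [h4] at h3 hInteg
  have e : 2 * m / D * Real.log |g.det| = (m / D) * (2 * Real.log |g.det|) := by ring
  rw [e]
  linarith

lemma forster (hφ : Measurable φ) (i0 : ι) (h1 : ∀ x, φ x i0 = 1) (M : ℝ) (hM0 : 0 ≤ M)
    (hM : ∀ᵐ x ∂μ, ∀ i, |φ x i| ≤ M) (hnull : ∀ w, w ≠ 0 → μ {x | w ⬝ᵥ φ x = 0} = 0)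
    (hμ : 0 < μ.real Set.univ) :
    ∃ g : Matrix ι ι ℝ, g.det ≠ 0 ∧ ∀ c : ι → ℝ, c ⬝ᵥ c = 1 →
      ∫ x, (c ⬝ᵥ g.mulVec (φ x)) ^ 2 / NN φ g x ∂μ ≤ 4 * μ.real Set.univ / Fintype.card ι := by
  have hc : (0:ℝ) < Fintype.card ι := by
    exact_mod_cast Fintype.card_pos_iff.2 ⟨i0⟩
  obtain ⟨B, hB⟩ := GG_bdd μ hφ i0 h1 M hM0 hM hnull hμ
  set m := μ.real Set.univ with hm
  set D : ℝ := (Fintype.card ι : ℝ) with hD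
  set S := (GG μ φ) '' {g | g.det ≠ 0} with hS
  have hne : S.Nonempty := ⟨_, 1, by simp, rfl⟩
  have hbdd : BddBelow S := ⟨B, by rintro _ ⟨g, hg, rfl⟩; exact hB g hg⟩
  obtain ⟨_, ⟨g, hg, rfl⟩, hlt⟩ := exists_lt_of_csInf_lt hne
    (show sInf S < sInf S + m / D by linarith [show 0 < m / D by positivity])
  have hg : g.det ≠ 0 := hg
  refine ⟨g, hg, ?_⟩
  intro c hcc
  set T : Matrix ι ι ℝ := 1 + Matrix.replicateCol Unit ((-1/2 : ℝ) • c) * Matrix.replicateRow Unit c with hT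
  have hTdet : T.det = 1 / 2 := by
    rw [hT, Matrix.det_one_add_replicateCol_mul_replicateRow, dotProduct_smul, hcc]; norm_num
  have hTy : ∀ y, T.mulVec y = y - (1/2 * (c ⬝ᵥ y)) • c := by
    intro y
    rw [hT, Matrix.add_mulVec, Matrix.one_mulVec, ← Matrix.vecMulVec_eq, Matrix.vecMulVec_mulVec]
    ext k
    simp
    ring
  have hdet' : (T * g).det ≠ 0 := by
    rw [Matrix.det_mul, hTdet]; positivity
  have hge : sInf S ≤ GG μ φ (T * g) := csInf_le hbdd ⟨T * g, hdet', rfl⟩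
  set q : X → ℝ := fun x => (c ⬝ᵥ g.mulVec (φ x)) ^ 2 / NN φ g x with hq
  have hq0 : ∀ x, 0 ≤ q x := fun x => div_nonneg (sq_nonneg _) (NN_pos i0 h1 g hg x).le
  have hq1 : ∀ x, q x ≤ 1 := by
    intro x
    rw [hq]
    simp only
    rw [div_le_one (NN_pos i0 h1 g hg x)]
    have := dot_sq_le c (g.mulVec (φ x))
    rwa [hcc, one_mul] at this
  have hqm : Measurable q :=
    ((measurable_dot measurable_const (measurable_mulVec g hφ)).pow_const 2).div (NN_measurable hφ g)
  have hqi : Integrable q μ := Integrable.of_bound (C := 1) hqm.aestronglyMeasurable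
    (Filter.Eventually.of_forall fun x => by
      rw [Real.norm_eq_abs, abs_of_nonneg (hq0 x)]; exact hq1 x)
  have hN : ∀ x, NN φ (T * g) x = NN φ g x * (1 - 3/4 * q x) := by
    intro x
    have hp := (NN_pos i0 h1 g hg x).ne'
    have e : NN φ (T * g) x = NN φ g x - 3/4 * (c ⬝ᵥ g.mulVec (φ x)) ^ 2 := by
      simp only [NN, ← Matrix.mulVec_mulVec, hTy, sub_dotProduct, dotProduct_sub, smul_dotProduct,
        dotProduct_smul, hcc, smul_eq_mul, dotProduct_comm (g.mulVec (φ x)) c]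
      ring
    rw [e, hq]
    field_simp
  have hlog : ∀ x, Real.log (NN φ (T * g) x) ≤ Real.log (NN φ g x) - 3/4 * q x := by
    intro x
    have hp := NN_pos i0 h1 g hg x
    have h5 : 0 < 1 - 3/4 * q x := by linarith [hq1 x]
    rw [hN, Real.log_mul hp.ne' h5.ne']
    linarith [Real.log_le_sub_one_of_pos h5]
  have hi1 := NN_log_integrable μ hφ i0 h1 M hM0 hM g hg
  have hInteg := integral_mono (NN_log_integrable μ hφ i0 h1 M hM0 hM (T * g) hdet')
    (hi1.sub (hqi.const_mul (3/4))) hlog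
  simp only [Pi.sub_apply] at hInteg
  rw [integral_sub hi1 (hqi.const_mul (3/4)), integral_const_mul] at hInteg
  have hld : Real.log |(T * g).det| = Real.log |g.det| - Real.log 2 := by
    rw [Matrix.det_mul, hTdet, abs_mul, Real.log_mul (by norm_num) (by positivity)]
    rw [abs_of_pos (by norm_num), one_div, Real.log_inv]; ring
  unfold GG at hge hlt
  rw [hld] at hge
  have hl2 : Real.log 2 < 0.7 := Real.log_two_lt_d9.trans (by norm_num)
  have hmD : 0 < m / D := by positivity
  have e1 : 2 * m / D * (Real.log |g.det| - Real.log 2) =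
    2 * m / D * Real.log |g.det| - (m / D) * (2 * Real.log 2) := by ring
  rw [e1] at hge
  have e2 : 4 * m / D = 4 * (m / D) := by ring
  rw [e2]
  have h7 : (m / D) * (2 * Real.log 2) ≤ (m / D) * 1.4 := by
    apply mul_le_mul_of_nonneg_left _ hmD.le; linarith
  linarith
end forster

/-- sign of a boolean -/
def sg (b : Bool) : ℝ := if b then 1 else -1

lemma sg_sq (b : Bool) : sg b ^ 2 = 1 := by cases b <;> simp [sg]
lemma sg_not (b : Bool) : sg (!b) = - sg b := by cases b <;> simp [sg]

/-- the sign vector -/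
def sgv {ι : Type*} (ε : ι → Bool) : ι → ℝ := fun i => sg (ε i)

lemma flip_sum {ι : Type*} [Fintype ι] [DecidableEq ι] (s : Finset ι) (a : ι) (ha : a ∉ s)
    (u : ι → ℝ) (k : ℕ) :
    ∑ ε : ι → Bool, (∑ i ∈ s, sg (ε i) * u i) ^ k * sg (ε a) = 0 := by
  have hinv : Function.Involutive (fun ε : ι → Bool => Function.update ε a (!ε a)) := by
    intro ε; simp
  have h := Equiv.sum_comp (hinv.toPerm _) (fun ε : ι → Bool => (∑ i ∈ s, sg (ε i) * u i) ^ k * sg (ε a))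
  have h2 : ∀ ε : ι → Bool, (∑ i ∈ s, sg ((hinv.toPerm _) ε i) * u i) ^ k * sg ((hinv.toPerm _) ε a)
      = - ((∑ i ∈ s, sg (ε i) * u i) ^ k * sg (ε a)) := by
    intro ε
    have e1 : ∑ i ∈ s, sg ((hinv.toPerm _) ε i) * u i = ∑ i ∈ s, sg (ε i) * u i := by
      refine Finset.sum_congr rfl fun i hi => ?_
      have : i ≠ a := fun h => ha (h ▸ hi)
      simp [this]
    rw [e1]
    simp [sg_not]
  simp_rw [h2] at h
  rw [Finset.sum_neg_distrib] at h
  linarith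

lemma rad_aux {ι : Type*} [Fintype ι] [DecidableEq ι] (u : ι → ℝ) (s : Finset ι) :
    (∑ ε : ι → Bool, (∑ i ∈ s, sg (ε i) * u i) ^ 2 = 2 ^ Fintype.card ι * ∑ i ∈ s, u i ^ 2) ∧
    (∑ ε : ι → Bool, (∑ i ∈ s, sg (ε i) * u i) ^ 4 ≤
      2 ^ Fintype.card ι * (3 * (∑ i ∈ s, u i ^ 2) ^ 2)) := by
  have hcard : ∑ _ε : ι → Bool, (1:ℝ) = 2 ^ Fintype.card ι := by simp
  induction s using Finset.induction_on with
  | empty => simp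
  | insert a s ha ih =>
    obtain ⟨ih2, ih4⟩ := ih
    have f1 := flip_sum s a ha u 1
    have f3 := flip_sum s a ha u 3
    constructor
    · have : ∀ ε : ι → Bool, (∑ i ∈ insert a s, sg (ε i) * u i) ^ 2 =
          (∑ i ∈ s, sg (ε i) * u i) ^ 2 + 2 * u a * ((∑ i ∈ s, sg (ε i) * u i) ^ 1 * sg (ε a))
          + u a ^ 2 * 1 := by
        intro ε
        rw [Finset.sum_insert ha]
        have := sg_sq (ε a)
        linear_combination (u a ^ 2) * this
      simp_rw [this, Finset.sum_add_distrib, ← Finset.mul_sum]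
      rw [f1, ih2, hcard, Finset.sum_insert ha]
      ring
    · have : ∀ ε : ι → Bool, (∑ i ∈ insert a s, sg (ε i) * u i) ^ 4 =
          (∑ i ∈ s, sg (ε i) * u i) ^ 4 + 4 * u a * ((∑ i ∈ s, sg (ε i) * u i) ^ 3 * sg (ε a))
          + 6 * u a ^ 2 * (∑ i ∈ s, sg (ε i) * u i) ^ 2
          + 4 * u a ^ 3 * ((∑ i ∈ s, sg (ε i) * u i) ^ 1 * sg (ε a)) + u a ^ 4 * 1 := by
        intro ε
        rw [Finset.sum_insert ha]
        have := sg_sq (ε a)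
        set Z := ∑ i ∈ s, sg (ε i) * u i
        linear_combination (6 * u a ^ 2 * Z ^ 2 + 4 * u a ^ 3 * Z * sg (ε a)
          + u a ^ 4 * (sg (ε a) ^ 2 + 1)) * this
      simp_rw [this, Finset.sum_add_distrib, ← Finset.mul_sum]
      rw [f1, f3, ih2, hcard, Finset.sum_insert ha]
      have hp : (0:ℝ) < 2 ^ Fintype.card ι := by positivity
      nlinarith [mul_nonneg hp.le (sq_nonneg (u a ^ 2))]

lemma rad_two {ι : Type*} [Fintype ι] [DecidableEq ι] (u : ι → ℝ) :
    ∑ ε : ι → Bool, (sgv ε ⬝ᵥ u) ^ 2 = 2 ^ Fintype.card ι * (u ⬝ᵥ u) := by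
  have := (rad_aux u Finset.univ).1
  simp only [sgv, dotProduct]
  rw [this]; simp [sq]

lemma rad_abs {ι : Type*} [Fintype ι] [DecidableEq ι] (u : ι → ℝ) (hu : u ⬝ᵥ u = 1) :
    2 ^ Fintype.card ι * (9 / 16) ≤ ∑ ε : ι → Bool, |sgv ε ⬝ᵥ u| := by
  have h2 := rad_two u
  have h4 : ∑ ε : ι → Bool, (sgv ε ⬝ᵥ u) ^ 4 ≤ 2 ^ Fintype.card ι * (3 * (u ⬝ᵥ u) ^ 2) := by
    have := (rad_aux u Finset.univ).2
    simpa only [sgv, dotProduct, sq] using this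
  rw [hu] at h2 h4
  have hpt : ∀ t : ℝ, 3/4 * t ^ 2 - 1/16 * t ^ 4 ≤ |t| := by
    intro t
    have h0 := abs_nonneg t
    have e2 : t ^ 2 = |t| ^ 2 := (sq_abs t).symm
    have e4 : t ^ 4 = |t| ^ 4 := by rw [show (4:ℕ) = 2 * 2 by norm_num, pow_mul, pow_mul, sq_abs]
    rw [e2, e4]
    set r := |t|
    have : 0 ≤ r * ((r - 2) ^ 2 * (r + 4)) := by positivity
    nlinarith
  calc _ ≤ ∑ ε : ι → Bool, (3/4 * (sgv ε ⬝ᵥ u) ^ 2 - 1/16 * (sgv ε ⬝ᵥ u) ^ 4) := by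
        rw [Finset.sum_sub_distrib, ← Finset.mul_sum, ← Finset.mul_sum, h2]
        linarith
    _ ≤ _ := Finset.sum_le_sum fun ε _ => hpt _

lemma box_sign {Y ι : Type*} [MeasurableSpace Y] [Fintype ι] [DecidableEq ι] (ν : Measure Y)
    [IsProbabilityMeasure ν] (u : Y → ι → ℝ) (hu : Measurable u) (h1 : ∀ t, u t ⬝ᵥ u t = 1)
    (hc : ∀ c : ι → ℝ, ∫ t, (c ⬝ᵥ u t) ^ 2 ∂ν ≤ (c ⬝ᵥ c) / 16) :
    ENNReal.ofReal (2 ^ Fintype.card ι / 64) ≤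
      ∑ ε : ι → Bool, (ν.prod ν) {p | SC (sgv ε ⬝ᵥ u p.1) (sgv ε ⬝ᵥ u p.2)} := by
  have hdm : ∀ c : ι → ℝ, Measurable fun t => c ⬝ᵥ u t := fun c => measurable_dot measurable_const hu
  have hbd : ∀ (c : ι → ℝ) t, |c ⬝ᵥ u t| ≤ 1 + c ⬝ᵥ c := by
    intro c t
    have := dot_sq_le c (u t)
    rw [h1, mul_one] at this
    rw [← sq_abs] at this
    nlinarith [sq_nonneg (|c ⬝ᵥ u t| - 1), abs_nonneg (c ⬝ᵥ u t)]
  have hi1 : ∀ c : ι → ℝ, Integrable (fun t => c ⬝ᵥ u t) ν := fun c =>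
    Integrable.of_bound (C := 1 + c ⬝ᵥ c) (hdm c).aestronglyMeasurable
      (Filter.Eventually.of_forall fun t => hbd c t)
  have hi2 : ∀ c : ι → ℝ, Integrable (fun t => (c ⬝ᵥ u t) ^ 2) ν := fun c =>
    Integrable.of_bound (C := c ⬝ᵥ c) ((hdm c).pow_const 2).aestronglyMeasurable
      (Filter.Eventually.of_forall fun t => by
        have := dot_sq_le c (u t)
        rw [h1, mul_one] at this
        rw [Real.norm_eq_abs, abs_of_nonneg (sq_nonneg _)]; exact this)
  have hui : ∀ i, Integrable (fun t => u t i) ν := by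
    intro i
    have := hi1 (Pi.single i 1)
    simpa using this
  set ub : ι → ℝ := fun i => ∫ t, u t i ∂ν with hub
  have hmean : ∀ c : ι → ℝ, ∫ t, c ⬝ᵥ u t ∂ν = c ⬝ᵥ ub := by
    intro c
    simp only [dotProduct]
    rw [integral_finsetSum _ (fun i _ => (hui i).const_mul (c i))]
    simp [integral_const_mul, hub]
  have hub16 : ub ⬝ᵥ ub ≤ 1 / 16 := by
    set r := ub ⬝ᵥ ub with hr
    have hr0 : 0 ≤ r := Finset.sum_nonneg fun i _ => mul_self_nonneg _
    have hvar : 0 ≤ ∫ t, (ub ⬝ᵥ u t - r) ^ 2 ∂ν := integral_nonneg fun t => sq_nonneg _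
    have e : ∀ t, (ub ⬝ᵥ u t - r) ^ 2 = (ub ⬝ᵥ u t) ^ 2 - 2 * r * (ub ⬝ᵥ u t) + r ^ 2 := fun t => by ring
    simp_rw [e] at hvar
    have i3 : Integrable (fun t => (ub ⬝ᵥ u t) ^ 2 - 2 * r * (ub ⬝ᵥ u t)) ν :=
      (hi2 ub).sub ((hi1 ub).const_mul (2 * r))
    rw [integral_add i3 (integrable_const _),
      integral_sub (hi2 ub) ((hi1 ub).const_mul (2 * r)), integral_const_mul, hmean ub] at hvar
    simp only [integral_const, probReal_univ, smul_eq_mul, one_mul] at hvar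
    have := hc ub
    rw [← hr] at this hvar
    have h5 : r ^ 2 ≤ r / 16 := by nlinarith
    by_contra hlt
    push Not at hlt
    nlinarith
  set P : (ι → Bool) → Set Y := fun ε => {t | 0 < sgv ε ⬝ᵥ u t} with hP
  have hPm : ∀ ε, MeasurableSet (P ε) := fun ε => measurableSet_lt measurable_const (hdm _)
  set h : (ι → Bool) → ℝ := fun ε => ν.real (P ε) with hh
  have hcompl : ∀ ε, ν.real (P ε)ᶜ = 1 - h ε := fun ε => by
    rw [measureReal_compl (hPm ε), probReal_univ]
  have hh0 : ∀ ε, 0 ≤ h ε := fun ε => measureReal_nonneg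
  have hh1 : ∀ ε, h ε ≤ 1 := fun ε => measureReal_le_one
  set k : (ι → Bool) → ℝ := fun ε => min (h ε) (1 - h ε) with hk
  have hprod : ∀ ε, ENNReal.ofReal (k ε) ≤
      (ν.prod ν) {p | SC (sgv ε ⬝ᵥ u p.1) (sgv ε ⬝ᵥ u p.2)} := by
    intro ε
    have hsub : (P ε ×ˢ (P ε)ᶜ) ∪ ((P ε)ᶜ ×ˢ P ε) ⊆
        {p | SC (sgv ε ⬝ᵥ u p.1) (sgv ε ⬝ᵥ u p.2)} := by
      rintro ⟨a, b⟩ (⟨ha, hb⟩ | ⟨ha, hb⟩)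
      · have ha : 0 < sgv ε ⬝ᵥ u a := ha
        have hb : ¬ 0 < sgv ε ⬝ᵥ u b := hb
        change SC (sgv ε ⬝ᵥ u a) (sgv ε ⬝ᵥ u b)
        unfold SC; tauto
      · have ha : ¬ 0 < sgv ε ⬝ᵥ u a := ha
        have hb : 0 < sgv ε ⬝ᵥ u b := hb
        change SC (sgv ε ⬝ᵥ u a) (sgv ε ⬝ᵥ u b)
        unfold SC; tauto
    refine le_trans ?_ (measure_mono hsub)
    have hdisj : Disjoint (P ε ×ˢ (P ε)ᶜ) ((P ε)ᶜ ×ˢ P ε) := by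
      rw [Set.disjoint_left]
      rintro ⟨a, b⟩ ⟨ha, hb⟩ ⟨ha', hb'⟩
      exact ha' ha
    rw [measure_union hdisj ((hPm ε).compl.prod (hPm ε)), Measure.prod_prod, Measure.prod_prod]
    rw [← ofReal_measureReal (μ := ν) (s := P ε), ← ofReal_measureReal (μ := ν) (s := (P ε)ᶜ), hcompl]
    rw [← ENNReal.ofReal_mul (hh0 ε), ← ENNReal.ofReal_mul (by linarith [hh1 ε]),
      ← ENNReal.ofReal_add (mul_nonneg (hh0 ε) (by linarith [hh1 ε]))
        (mul_nonneg (by linarith [hh1 ε]) (hh0 ε))]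
    apply ENNReal.ofReal_le_ofReal
    change min (h ε) (1 - h ε) ≤ h ε * (1 - h ε) + (1 - h ε) * h ε
    have a0 := hh0 ε
    have a1 := hh1 ε
    rcases le_total (h ε) (1/2) with hl | hl
    · refine (min_le_left _ _).trans ?_; nlinarith
    · refine (min_le_right _ _).trans ?_; nlinarith
  refine le_trans ?_ (Finset.sum_le_sum fun ε _ => hprod ε)
  have hk0 : ∀ ε, 0 ≤ k ε := fun ε => le_min (hh0 ε) (by linarith [hh1 ε])
  rw [← ENNReal.ofReal_sum_of_nonneg fun ε _ => hk0 ε]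
  apply ENNReal.ofReal_le_ofReal
  have hper : ∀ ε, ∫ t, |sgv ε ⬝ᵥ u t| ∂ν - |sgv ε ⬝ᵥ ub| ≤
      5/32 * ∫ t, (sgv ε ⬝ᵥ u t) ^ 2 ∂ν + 32/5 * k ε := by
    intro ε
    have ia := (hi1 (sgv ε)).abs
    have iq := (hi2 (sgv ε)).const_mul (5/32)
    have key : ∀ (Q : Set Y) (τ : ℝ), MeasurableSet Q →
        (∀ t, |sgv ε ⬝ᵥ u t| + τ * (sgv ε ⬝ᵥ u t) ≤
          5/32 * (sgv ε ⬝ᵥ u t) ^ 2 + Q.indicator (fun _ => (32/5 : ℝ)) t) →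
        ∫ t, |sgv ε ⬝ᵥ u t| ∂ν + τ * (sgv ε ⬝ᵥ ub) ≤
          5/32 * ∫ t, (sgv ε ⬝ᵥ u t) ^ 2 ∂ν + 32/5 * ν.real Q := by
      intro Q τ hQ hpt
      have iQ : Integrable (Q.indicator (fun _ => (32/5 : ℝ))) ν := (integrable_const _).indicator hQ
      have := integral_mono (ia.add ((hi1 (sgv ε)).const_mul τ)) (iq.add iQ) hpt
      simp only [Pi.add_apply] at this
      rw [integral_add ia ((hi1 (sgv ε)).const_mul τ), integral_add iq iQ, integral_const_mul,
        integral_const_mul, hmean, integral_indicator hQ] at this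
      simp only [integral_const, measureReal_restrict_apply_univ, smul_eq_mul] at this
      linarith
    have hA := key (P ε) 1 (hPm ε) (by
      intro t
      by_cases ht : 0 < sgv ε ⬝ᵥ u t
      · rw [Set.indicator_of_mem (show t ∈ P ε from ht), abs_of_pos ht]
        nlinarith [sq_nonneg (sgv ε ⬝ᵥ u t - 32/5)]
      · rw [Set.indicator_of_notMem (show t ∉ P ε from ht), abs_of_nonpos (not_lt.1 ht)]
        nlinarith [sq_nonneg (sgv ε ⬝ᵥ u t)])
    have hB := key (P ε)ᶜ (-1) (hPm ε).compl (by
      intro t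
      by_cases ht : 0 < sgv ε ⬝ᵥ u t
      · rw [Set.indicator_of_notMem (show t ∉ (P ε)ᶜ from fun h => h ht), abs_of_pos ht]
        nlinarith [sq_nonneg (sgv ε ⬝ᵥ u t)]
      · rw [Set.indicator_of_mem (show t ∈ (P ε)ᶜ from ht), abs_of_nonpos (not_lt.1 ht)]
        nlinarith [sq_nonneg (sgv ε ⬝ᵥ u t + 32/5)])
    rw [hcompl] at hB
    have hA : ∫ t, |sgv ε ⬝ᵥ u t| ∂ν + 1 * (sgv ε ⬝ᵥ ub) ≤
          5/32 * ∫ t, (sgv ε ⬝ᵥ u t) ^ 2 ∂ν + 32/5 * h ε := hA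
    have l1 := neg_abs_le (sgv ε ⬝ᵥ ub)
    have l2 := le_abs_self (sgv ε ⬝ᵥ ub)
    rcases min_choice (h ε) (1 - h ε) with hm | hm
    · rw [show k ε = h ε from hm]; linarith
    · rw [show k ε = 1 - h ε from hm]; linarith
  have hsum := Finset.sum_le_sum fun ε (_ : ε ∈ (Finset.univ : Finset (ι → Bool))) => hper ε
  rw [Finset.sum_sub_distrib, Finset.sum_add_distrib, ← Finset.mul_sum, ← Finset.mul_sum,
    ← integral_finsetSum _ (fun ε _ => (hi1 (sgv ε)).abs),
    ← integral_finsetSum _ (fun ε _ => (hi2 (sgv ε)))] at hsum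
  have s1 : 2 ^ Fintype.card ι * (9 / 16) ≤ ∫ t, ∑ ε : ι → Bool, |sgv ε ⬝ᵥ u t| ∂ν := by
    have := integral_mono (μ := ν) (integrable_const (2 ^ Fintype.card ι * (9 / 16 : ℝ)))
      (integrable_finsetSum Finset.univ (fun ε _ => (hi1 (sgv ε)).abs)) (fun t => rad_abs (u t) (h1 t))
    simpa using this
  have s2 : ∫ t, ∑ ε : ι → Bool, (sgv ε ⬝ᵥ u t) ^ 2 ∂ν = 2 ^ Fintype.card ι := by
    simp_rw [rad_two, h1]; simp
  have s3 : ∑ ε : ι → Bool, |sgv ε ⬝ᵥ ub| ≤ 2 ^ Fintype.card ι * (1 / 4) := by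
    calc _ ≤ ∑ ε : ι → Bool, (2 * (sgv ε ⬝ᵥ ub) ^ 2 + 1/8) := by
          refine Finset.sum_le_sum fun ε _ => ?_
          rw [← sq_abs]
          nlinarith [sq_nonneg (|sgv ε ⬝ᵥ ub| - 1/4)]
      _ = 2 ^ Fintype.card ι * (2 * (ub ⬝ᵥ ub) + 1/8) := by
          rw [Finset.sum_add_distrib, ← Finset.mul_sum, rad_two]; simp; ring
      _ ≤ _ := by
          apply mul_le_mul_of_nonneg_left _ (by positivity); linarith
  rw [s2] at hsum
  have hp : (0:ℝ) < 2 ^ Fintype.card ι := by positivity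
  linarith

lemma hybrid {n : ℕ} (f : (Fin n → ℝ) → ℝ) (e : Fin n → Fin n → ℝ) (t t' x : Fin n → ℝ)
    (h : SC (f (x + ∑ i, t i • e i)) (f (x + ∑ i, t' i • e i))) :
    ∃ j : Fin n, SC (f (x + ∑ i, (if i < j then t' i else t i) • e i))
      (f (x + ∑ i, (if i < j then t' i else t i) • e i + (t' j - t j) • e j)) := by
  by_contra hcon
  push Not at hcon
  have key : ∀ k : ℕ, k ≤ n → ¬ SC (f (x + ∑ i, t i • e i))
      (f (x + ∑ i : Fin n, (if (i : ℕ) < k then t' i else t i) • e i)) := by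
    intro k
    induction k with
    | zero => intro _; simp [SC]
    | succ k ih =>
      intro hk hS
      rcases SC_trans (b := f (x + ∑ i : Fin n, (if (i : ℕ) < k then t' i else t i) • e i)) hS with h1 | h1
      · exact ih (by omega) h1
      · have h2 := hcon ⟨k, by omega⟩
        apply h2
        have e1 : x + ∑ i : Fin n, (if (i : ℕ) < k + 1 then t' i else t i) • e i =
            x + ∑ i, (if i < (⟨k, by omega⟩ : Fin n) then t' i else t i) • e i
              + (t' ⟨k, by omega⟩ - t ⟨k, by omega⟩) • e ⟨k, by omega⟩ := by
          rw [add_assoc]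
          congr 1
          have : (t' ⟨k, by omega⟩ - t ⟨k, by omega⟩) • e ⟨k, by omega⟩ =
              ∑ i : Fin n, if i = (⟨k, by omega⟩ : Fin n) then (t' i - t i) • e i else 0 := by
            simp
          rw [this, ← Finset.sum_add_distrib]
          refine Finset.sum_congr rfl fun i _ => ?_
          rcases lt_trichotomy (i : ℕ) k with hlt | heq | hgt
          · have a1 : i < (⟨k, by omega⟩ : Fin n) := hlt
            have a2 : (i : ℕ) < k + 1 := by omega
            simp [a1, a2, a1.ne]
          · have a1 : i = (⟨k, by omega⟩ : Fin n) := Fin.ext heq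
            simp [a1, sub_smul]
          · have a1 : (⟨k, by omega⟩ : Fin n) < i := hgt
            have a2 : ¬ (i : ℕ) < k + 1 := by omega
            simp [a1.not_gt, a2, a1.ne']
        rw [e1] at h1
        exact h1
  have := key n le_rfl
  simp only [Fin.is_lt, if_true] at this
  exact this h

lemma norm_comb_le {n : ℕ} (v : Fin n → Fin n → ℝ) (hv : ∀ j, ‖v j‖ ≤ 1) (s : ℝ) (hs : 0 ≤ s)
    (q : Fin n → ℝ) (hq0 : ∀ j, 0 ≤ q j) (hq : ∀ j, q j ≤ s)
    (t : Fin n → ℝ) (ht : t ∈ Set.Icc (0 : Fin n → ℝ) 1) :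
    ‖∑ i, t i • q i • v i‖ ≤ n * s := by
  calc ‖∑ i, t i • q i • v i‖ ≤ ∑ i, ‖t i • q i • v i‖ := norm_sum_le _ _
    _ ≤ ∑ i : Fin n, s := by
        refine Finset.sum_le_sum fun i _ => ?_
        rw [norm_smul, norm_smul, Real.norm_eq_abs, Real.norm_eq_abs, abs_of_nonneg (ht.1 i),
          abs_of_nonneg (hq0 i)]
        have h1 : t i ≤ 1 := ht.2 i
        have h0 : 0 ≤ t i := ht.1 i
        calc t i * (q i * ‖v i‖) ≤ 1 * (s * 1) := by
              refine mul_le_mul h1 (mul_le_mul (hq i) (hv i) (norm_nonneg _) hs) ?_ zero_le_one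
              exact mul_nonneg (hq0 i) (norm_nonneg _)
          _ = s := by ring
    _ = n * s := by simp

lemma count {n d : ℕ} (w : (Fin n → Fin (d+1)) → ℝ) (A : Fin n → ℕ) (hA : ∀ j, 0 < A j)
    (p v : ∀ j : Fin n, Fin (A j) → Fin n → ℝ) (hv : ∀ j a, ‖v j a‖ ≤ 1)
    (C : (∀ j, Fin (A j)) → Set (Fin n → ℝ)) (hC : ∀ a, MeasurableSet (C a))
    (hcyl : ∀ a, ∀ x ∈ C a, ∀ j, ∃ t : ℝ, ‖x - (p j (a j) + t • v j (a j))‖ ≤ 2)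
    (r s : ℝ) (hr1 : r ≤ 1) (hs : 0 < s) (hsr : n * s ≤ r)
    (hdisj : ∀ a a', a ≠ a' → ∀ x ∈ C a, ∀ y ∈ C a', ∀ u u' : Fin n → ℝ, ‖u‖ ≤ r → ‖u'‖ ≤ r →
      x + u ≠ y + u')
    (t t' : Fin n → ℝ) (ht : t ∈ Set.Icc (0 : Fin n → ℝ) 1) (ht' : t' ∈ Set.Icc (0 : Fin n → ℝ) 1) :
    ∑ a, volume (C a ∩ {x | SC (pol d w (x + ∑ i, t i • (s / A i) • v i (a i)))
        (pol d w (x + ∑ i, t' i • (s / A i) • v i (a i)))})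
      ≤ ENNReal.ofReal (n * (8 ^ n * (n * d * s))) := by
  set h : Fin n → Fin n → ℝ := fun j i => if i < j then t' i else t i with hh
  have hhI : ∀ j, h j ∈ Set.Icc (0 : Fin n → ℝ) 1 := by
    intro j
    constructor <;> intro i <;> simp only [hh] <;> split_ifs
    · exact ht'.1 i
    · exact ht.1 i
    · exact ht'.2 i
    · exact ht.2 i
  have hA1 : ∀ j, (1:ℝ) ≤ A j := fun j => by exact_mod_cast hA j
  have hq0 : ∀ j, 0 ≤ s / A j := fun j => div_nonneg hs.le (Nat.cast_nonneg _)
  have hq1 : ∀ j, s / A j ≤ s := fun j => div_le_self hs.le (hA1 j)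
  set Q : (∀ j, Fin (A j)) → Fin n → Fin n → ℝ :=
    fun a j => ∑ i, h j i • (s / A i) • v i (a i) with hQ
  have hQn : ∀ a j, ‖Q a j‖ ≤ r := fun a j =>
    (norm_comb_le (fun i => v i (a i)) (fun i => hv i _) s hs.le (fun i => s / A i) hq0 hq1 _ (hhI j)).trans hsr
  set E : (j : Fin n) → Fin (A j) → Set (Fin n → ℝ) := fun j b =>
    {z | SC (pol d w z) (pol d w (z + ((t' j - t j) * (s / A j)) • v j b))} with hE
  have hEm : ∀ j b, MeasurableSet (E j b) := fun j b =>
    measurableSet_SC (pol_continuous w).measurable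
      ((pol_continuous w).measurable.comp (measurable_id.add_const _))
  set S : (∀ j, Fin (A j)) → Fin n → Set (Fin n → ℝ) := fun a j => (fun x => x + Q a j) '' (C a) with hSd
  have hSm : ∀ a j, MeasurableSet (S a j) := by
    intro a j
    exact (MeasurableEquiv.addRight (Q a j)).measurableEmbedding.measurableSet_image.2 (hC a)
  have step1 : ∀ a, volume (C a ∩ {x | SC (pol d w (x + ∑ i, t i • (s / A i) • v i (a i)))
        (pol d w (x + ∑ i, t' i • (s / A i) • v i (a i)))}) ≤
      ∑ j, volume (S a j ∩ E j (a j)) := by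
    intro a
    calc _ ≤ volume (⋃ j, (fun x => x + Q a j) ⁻¹' (S a j ∩ E j (a j))) := by
          apply measure_mono
          rintro x ⟨hx, hx2⟩
          obtain ⟨j, hj⟩ := hybrid (pol d w) (fun i => (s / A i) • v i (a i)) t t' x hx2
          rw [Set.mem_iUnion]
          refine ⟨j, ⟨x, hx, rfl⟩, ?_⟩
          rw [smul_smul] at hj
          exact hj
      _ ≤ ∑ j, volume ((fun x => x + Q a j) ⁻¹' (S a j ∩ E j (a j))) := measure_iUnion_fintype_le _ _
      _ = _ := by simp only [measure_preimage_add_right]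
  have step2 : ∀ j, ∀ b : Fin (A j), ∑ a with a j = b, volume (S a j ∩ E j (a j)) ≤
      ENNReal.ofReal (8 ^ n * (n * d * (s / A j))) := by
    intro j b
    have e1 : ∑ a with a j = b, volume (S a j ∩ E j (a j)) =
        ∑ a with a j = b, volume (S a j ∩ E j b) := by
      refine Finset.sum_congr rfl fun a ha => ?_
      rw [Finset.mem_filter] at ha
      rw [ha.2]
    rw [e1, ← measure_biUnion_finset]
    · rw [← Set.iUnion₂_inter]
      refine (tube w (p j b) (v j b) (hv j b) ((t' j - t j) * (s / A j)) _
        (Finset.measurableSet_biUnion _ fun a _ => hSm a j) ?_).trans ?_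
      · intro z hz
        simp only [Set.mem_iUnion, Finset.mem_filter] at hz
        obtain ⟨a, ⟨_, ha⟩, x, hx, rfl⟩ := hz
        obtain ⟨τ, hτ⟩ := hcyl a x hx j
        rw [ha] at hτ
        refine ⟨τ, ?_⟩
        have : x + Q a j - (p j b + τ • v j b) = (x - (p j b + τ • v j b)) + Q a j := by abel
        rw [this]
        have := norm_add_le (x - (p j b + τ • v j b)) (Q a j)
        have := hQn a j
        linarith
      · apply ENNReal.ofReal_le_ofReal
        have : |(t' j - t j) * (s / A j)| ≤ s / A j := by
          rw [abs_mul, abs_of_nonneg (hq0 j)]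
          have h1 := ht.1 j; have h2 := ht.2 j; have h3 := ht'.1 j; have h4 := ht'.2 j
          simp only [Pi.zero_apply, Pi.one_apply] at h1 h2 h3 h4
          have : |t' j - t j| ≤ 1 := abs_le.2 ⟨by linarith, by linarith⟩
          exact mul_le_of_le_one_left (hq0 j) this
        gcongr
    · intro a ha a' ha' hne
      refine Set.disjoint_left.2 ?_
      rintro z ⟨⟨x, hx, hxz⟩, _⟩ ⟨⟨y, hy, hyz⟩, _⟩
      exact hdisj a a' hne x hx y hy (Q a j) (Q a' j) (hQn a j) (hQn a' j) (hxz.trans hyz.symm)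
    · intro a _
      exact (hSm a j).inter (hEm j b)
  calc _ ≤ ∑ a, ∑ j, volume (S a j ∩ E j (a j)) := Finset.sum_le_sum fun a _ => step1 a
    _ = ∑ j, ∑ a, volume (S a j ∩ E j (a j)) := Finset.sum_comm
    _ = ∑ j, ∑ b : Fin (A j), ∑ a with a j = b, volume (S a j ∩ E j (a j)) := by
        refine Finset.sum_congr rfl fun j _ => ?_
        rw [Finset.sum_fiberwise]
    _ ≤ ∑ j : Fin n, ∑ b : Fin (A j), ENNReal.ofReal (8 ^ n * (n * d * (s / A j))) :=
        Finset.sum_le_sum fun j _ => Finset.sum_le_sum fun b _ => step2 j b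
    _ = ∑ j : Fin n, ENNReal.ofReal (8 ^ n * (n * d * s)) := by
        refine Finset.sum_congr rfl fun j _ => ?_
        rw [Finset.sum_const, Finset.card_univ, Fintype.card_fin, nsmul_eq_mul,
          ← ENNReal.ofReal_natCast, ← ENNReal.ofReal_mul (Nat.cast_nonneg _)]
        congr 1
        have := hA1 j
        field_simp
    _ = _ := by
        rw [Finset.sum_const, Finset.card_univ, Fintype.card_fin, nsmul_eq_mul,
          ← ENNReal.ofReal_natCast, ← ENNReal.ofReal_mul (Nat.cast_nonneg _)]

lemma cov {n : ℕ} (e : Fin n → Fin n → ℝ) (hdet : (Matrix.of fun i j => e j i).det ≠ 0)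
    (x : Fin n → ℝ) (W : Set (Fin n → ℝ))
    (hxW : ∀ t ∈ Set.Icc (0 : Fin n → ℝ) 1, x + ∑ i, t i • e i ∈ W)
    (F : (Fin n → ℝ) → ℝ) (hF0 : ∀ y, 0 ≤ F y) (hF : IntegrableOn F W) :
    ∫ t in Set.Icc (0 : Fin n → ℝ) 1, F (x + ∑ i, t i • e i) ≤
      (∫ y in W, F y) / |(Matrix.of fun i j => e j i).det| := by
  set B : Matrix (Fin n) (Fin n) ℝ := Matrix.of fun i j => e j i with hB
  have hmul : ∀ t : Fin n → ℝ, ∑ i, t i • e i = B.mulVec t := by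
    intro t
    ext k
    simp [B, Matrix.mulVec, dotProduct, mul_comm]
  set T : (Fin n → ℝ) →L[ℝ] (Fin n → ℝ) := LinearMap.toContinuousLinearMap (Matrix.toLin' B) with hT
  have hTd : T.det = B.det := by
    rw [hT]; simp [LinearMap.det_toContinuousLinearMap, LinearMap.det_toLin']
  have hTa : ∀ t, T t = B.mulVec t := fun t => rfl
  have hinj : Function.Injective fun t => x + T t := by
    intro a b hab
    have h1 : B.mulVec a = B.mulVec b := by simpa [hTa] using hab
    exact Matrix.mulVec_injective_of_isUnit (by rwa [Matrix.isUnit_iff_isUnit_det, isUnit_iff_ne_zero]) h1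
  have key := integral_image_eq_integral_abs_det_fderiv_smul volume
    (measurableSet_Icc (a := (0 : Fin n → ℝ)) (b := 1)) (f := fun t => x + T t) (f' := fun _ => T)
    (fun t _ => (T.hasFDerivAt.const_add x).hasFDerivWithinAt) hinj.injOn F
  have hle : ∫ y in (fun t => x + T t) '' Set.Icc (0 : Fin n → ℝ) 1, F y ≤ ∫ y in W, F y := by
    apply setIntegral_mono_set hF
    · exact Filter.Eventually.of_forall hF0
    · apply Filter.Eventually.of_forall
      rintro y ⟨t, ht, rfl⟩
      have := hxW t ht
      rw [hmul] at this
      exact this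
  rw [key] at hle
  simp only [hTd, smul_eq_mul] at hle
  rw [integral_const_mul] at hle
  rw [le_div_iff₀ (by positivity), mul_comm]
  simp only [hmul]
  exact hle

/-- normalized vectors -/
noncomputable def uu {n d : ℕ} (g : Matrix (Fin n → Fin (d+1)) (Fin n → Fin (d+1)) ℝ)
    (x : Fin n → ℝ) : (Fin n → Fin (d+1)) → ℝ :=
  (√(NN (mono d) g x))⁻¹ • g.mulVec (mono d x)

lemma mono_zero {n d : ℕ} (x : Fin n → ℝ) : mono d x 0 = 1 := by
  simp [mono]

section uu
variable {n d : ℕ} (g : Matrix (Fin n → Fin (d+1)) (Fin n → Fin (d+1)) ℝ)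

lemma uu_measurable : Measurable (uu g) := by
  unfold uu
  exact ((NN_measurable mono_continuous.measurable g).sqrt.inv).smul
    (measurable_mulVec g mono_continuous.measurable)

lemma uu_sq (hg : g.det ≠ 0) (c : (Fin n → Fin (d+1)) → ℝ) (x : Fin n → ℝ) :
    (c ⬝ᵥ uu g x) ^ 2 = (c ⬝ᵥ g.mulVec (mono d x)) ^ 2 / NN (mono d) g x := by
  have hpos := NN_pos (φ := mono (n := n) d) 0 mono_zero g hg x
  unfold uu
  rw [dotProduct_smul, smul_eq_mul, mul_pow, inv_pow, Real.sq_sqrt hpos.le]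
  field_simp

lemma uu_unit (hg : g.det ≠ 0) (x : Fin n → ℝ) : uu g x ⬝ᵥ uu g x = 1 := by
  have hpos := NN_pos (φ := mono (n := n) d) 0 mono_zero g hg x
  unfold uu
  rw [dotProduct_smul, smul_dotProduct, smul_eq_mul, smul_eq_mul]
  have h2 := Real.sq_sqrt hpos.le
  have h3 : g.mulVec (mono d x) ⬝ᵥ g.mulVec (mono d x) = NN (mono d) g x := rfl
  rw [h3, ← mul_assoc, ← mul_inv, ← sq, h2, inv_mul_cancel₀ hpos.ne']

lemma uu_SC (hg : g.det ≠ 0) (c : (Fin n → Fin (d+1)) → ℝ) (x y : Fin n → ℝ) :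
    SC (c ⬝ᵥ uu g x) (c ⬝ᵥ uu g y) ↔
      SC (pol d (Matrix.vecMul c g) x) (pol d (Matrix.vecMul c g) y) := by
  have h : ∀ x, 0 < c ⬝ᵥ uu g x ↔ 0 < pol d (Matrix.vecMul c g) x := by
    intro x
    have hpos := NN_pos (φ := mono (n := n) d) 0 mono_zero g hg x
    unfold uu pol
    rw [dotProduct_smul, smul_eq_mul, Matrix.dotProduct_mulVec]
    have : 0 < (√(NN (mono d) g x))⁻¹ := by positivity
    exact mul_pos_iff_of_pos_left this
  unfold SC
  rw [h x, h y]

lemma uu_bound (hg : g.det ≠ 0) (μ : Measure (Fin n → ℝ)) (K : ℝ)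
    (hK : ∀ c : (Fin n → Fin (d+1)) → ℝ, c ⬝ᵥ c = 1 →
      ∫ x, (c ⬝ᵥ g.mulVec (mono d x)) ^ 2 / NN (mono d) g x ∂μ ≤ K)
    (c : (Fin n → Fin (d+1)) → ℝ) : ∫ x, (c ⬝ᵥ uu g x) ^ 2 ∂μ ≤ K * (c ⬝ᵥ c) := by
  rcases (dot_self_nonneg' c).eq_or_lt with h0 | h0
  · have : c = 0 := dotProduct_self_eq_zero.1 h0.symm
    subst this
    simp
  · set l := √(c ⬝ᵥ c) with hl
    have hl0 : 0 < l := Real.sqrt_pos.2 h0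
    have hl2 : l ^ 2 = c ⬝ᵥ c := Real.sq_sqrt h0.le
    have h1 := hK (l⁻¹ • c) (by
      rw [dotProduct_smul, smul_dotProduct, smul_eq_mul, smul_eq_mul, ← hl2]; field_simp)
    have e : ∀ x, (c ⬝ᵥ uu g x) ^ 2 =
        l ^ 2 * (((l⁻¹ • c) ⬝ᵥ g.mulVec (mono d x)) ^ 2 / NN (mono d) g x) := by
      intro x
      rw [uu_sq g hg, smul_dotProduct, smul_eq_mul, mul_pow]
      field_simp
    simp_rw [e]
    rw [integral_const_mul, ← hl2, mul_comm K]
    exact mul_le_mul_of_nonneg_left h1 (by positivity)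
end uu

lemma prob_cube (n : ℕ) : IsProbabilityMeasure (volume.restrict (Set.Icc (0 : Fin n → ℝ) 1)) := by
  constructor
  simp [Real.volume_Icc_pi]

/-- the lower bound at a single point -/
lemma point {n d : ℕ} (g : Matrix (Fin n → Fin (d+1)) (Fin n → Fin (d+1)) ℝ) (hg : g.det ≠ 0)
    (W : Set (Fin n → ℝ)) (hWf : volume W ≠ ⊤) (K : ℝ)
    (hK : ∀ c : (Fin n → Fin (d+1)) → ℝ, c ⬝ᵥ c = 1 →
      ∫ x in W, (c ⬝ᵥ g.mulVec (mono d x)) ^ 2 / NN (mono d) g x ≤ K)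
    (e : Fin n → Fin n → ℝ) (hdet : (Matrix.of fun i j => e j i).det ≠ 0)
    (hKd : K ≤ |(Matrix.of fun i j => e j i).det| / 16)
    (x : Fin n → ℝ)
    (hxW : ∀ t ∈ Set.Icc (0 : Fin n → ℝ) 1, x + ∑ i, t i • e i ∈ W) :
    ENNReal.ofReal (2 ^ ((d+1)^n) / 64) ≤
      ∑ ε : (Fin n → Fin (d+1)) → Bool,
        ((volume.restrict (Set.Icc (0 : Fin n → ℝ) 1)).prod (volume.restrict (Set.Icc (0 : Fin n → ℝ) 1)))
          {p | SC (pol d (Matrix.vecMul (sgv ε) g) (x + ∑ i, p.1 i • e i))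
            (pol d (Matrix.vecMul (sgv ε) g) (x + ∑ i, p.2 i • e i))} := by
  have := prob_cube n
  have hm : Measurable fun t : Fin n → ℝ => x + ∑ i, t i • e i := by
    apply Continuous.measurable; fun_prop
  have h := box_sign (volume.restrict (Set.Icc (0 : Fin n → ℝ) 1))
    (fun t => uu g (x + ∑ i, t i • e i)) ((uu_measurable g).comp hm) (fun t => uu_unit g hg _) (by
      intro c
      have hInteg : IntegrableOn (fun y => (c ⬝ᵥ uu g y) ^ 2) W := by
        have : IsFiniteMeasure (volume.restrict W) := ⟨by simpa using hWf.lt_top⟩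
        refine Integrable.of_bound (C := c ⬝ᵥ c)
          ((measurable_dot measurable_const (uu_measurable g)).pow_const 2).aestronglyMeasurable ?_
        refine Filter.Eventually.of_forall fun y => ?_
        have := dot_sq_le c (uu g y)
        rw [uu_unit g hg, mul_one] at this
        rw [Real.norm_eq_abs, abs_of_nonneg (sq_nonneg _)]
        exact this
      refine (cov e hdet x W hxW (fun y => (c ⬝ᵥ uu g y) ^ 2) (fun y => sq_nonneg _) hInteg).trans ?_
      have h2 := uu_bound g hg (volume.restrict W) K hK c
      have hd : 0 < |(Matrix.of fun i j => e j i).det| := by positivity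
      rw [div_le_iff₀ hd]
      refine h2.trans ?_
      have := mul_le_mul_of_nonneg_right hKd (dot_self_nonneg' c)
      linarith)
  have hc : Fintype.card (Fin n → Fin (d+1)) = (d+1)^n := by simp
  rw [hc] at h
  refine h.trans (le_of_eq ?_)
  refine Finset.sum_congr rfl fun ε _ => ?_
  congr 1
  ext q
  exact uu_SC g hg _ _ _

lemma core {n : ℕ} (hn : 1 ≤ n) (A : Fin n → ℕ) (hA : ∀ j, 0 < A j)
    (p v : ∀ j : Fin n, Fin (A j) → Fin n → ℝ) (hv : ∀ j a, ‖v j a‖ ≤ 1)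
    (θ : ℝ) (hθ : 0 < θ)
    (hdet : ∀ a : ∀ j : Fin n, Fin (A j), θ ≤ |(Matrix.of fun i j : Fin n => v j (a j) i).det|)
    (C : (∀ j, Fin (A j)) → Set (Fin n → ℝ)) (hC : ∀ a, IsCompact (C a))
    (hcyl : ∀ a, ∀ x ∈ C a, ∀ j, ∃ t : ℝ, ‖x - (p j (a j) + t • v j (a j))‖ ≤ 2)
    (r : ℝ) (hr0 : 0 < r) (hr1 : r ≤ 1)
    (hdisj : ∀ a a', a ≠ a' → ∀ x ∈ C a, ∀ y ∈ C a', ∀ u u' : Fin n → ℝ, ‖u‖ ≤ r → ‖u'‖ ≤ r →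
      x + u ≠ y + u')
    (W : Set (Fin n → ℝ)) (hW : IsCompact W)
    (hCW : ∀ a, ∀ x ∈ C a, ∀ u : Fin n → ℝ, ‖u‖ ≤ r → x + u ∈ W)
    (m : ℝ) (hm : 0 < m) (hmC : ENNReal.ofReal m = ∑ a, volume (C a))
    (hWm : volume W ≤ ENNReal.ofReal (2 * m))
    (X : ℝ) (hX0 : 0 < X) (hX : X ^ n * θ = 128 * m * ∏ j, (A j : ℝ)) :
    m ≤ 64 * n ^ 2 * 8 ^ n * X := by
  have hn0 : (0:ℝ) < n := by exact_mod_cast hn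
  set s : ℝ := r / n with hs
  have hs0 : 0 < s := by positivity
  have hsr : n * s ≤ r := by rw [hs]; field_simp; exact le_rfl
  set d : ℕ := ⌊X / s⌋₊ with hd
  have hds : d * s ≤ X := by
    have := Nat.floor_le (show 0 ≤ X / s by positivity)
    rwa [le_div_iff₀ hs0] at this
  have hd1 : X ≤ (d + 1) * s := by
    have := (Nat.lt_floor_add_one (X / s)).le
    rwa [div_le_iff₀ hs0] at this
  have hA0 : ∀ j, (0:ℝ) < A j := fun j => by exact_mod_cast hA j
  have hP : 0 < ∏ j, (A j : ℝ) := Finset.prod_pos fun j _ => hA0 j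
  have : IsFiniteMeasure (volume.restrict W) := ⟨by simpa using hW.measure_lt_top⟩
  obtain ⟨a0⟩ : Nonempty (∀ j, Fin (A j)) := ⟨fun j => ⟨0, hA j⟩⟩
  have hmW : m ≤ volume.real W := by
    have h1 : ENNReal.ofReal m ≤ volume W := by
      rw [hmC, ← measure_biUnion_finset]
      · apply measure_mono
        intro x hx
        simp only [Set.mem_iUnion] at hx
        obtain ⟨a, _, hx⟩ := hx
        have := hCW a x hx 0 (by simpa using hr0.le)
        simpa using this
      · intro a _ a' _ hne
        refine Set.disjoint_left.2 fun x hx hx' => ?_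
        exact hdisj a a' hne x hx x hx' 0 0 (by simpa using hr0.le) (by simpa using hr0.le) rfl
      · intro a _; exact (hC a).measurableSet
    rw [ENNReal.ofReal_le_iff_le_toReal hW.measure_lt_top.ne] at h1
    exact h1
  have hWm' : volume.real W ≤ 2 * m := ENNReal.toReal_le_of_le_ofReal (by positivity) hWm
  obtain ⟨M, hM⟩ : ∃ M, ∀ x ∈ W, ‖mono d x‖ ≤ M :=
    hW.exists_bound_of_continuousOn (mono_continuous (n := n) (d := d)).continuousOn
  obtain ⟨g, hg, hK⟩ := forster (volume.restrict W) (φ := mono (n := n) d) mono_continuous.measurable 0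
    mono_zero (max M 0) (le_max_right _ _) (by
      filter_upwards [ae_restrict_mem hW.measurableSet] with x hx i
      exact ((norm_le_pi_norm (mono d x) i).trans (hM x hx)).trans (le_max_left _ _))
    (by
      intro w hw
      exact le_antisymm ((Measure.restrict_apply_le _ _).trans_eq (pol_zero_null w hw)) bot_le)
    (by simpa using hm.trans_le hmW)
  have hcard : (Fintype.card (Fin n → Fin (d+1)) : ℝ) = (d+1)^n := by simp
  rw [hcard] at hK
  set e : (∀ j, Fin (A j)) → Fin n → Fin n → ℝ := fun a i => (s / A i) • v i (a i) with he
  have hq0 : ∀ j, 0 ≤ s / A j := fun j => div_nonneg hs0.le (Nat.cast_nonneg _)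
  have hq1 : ∀ j, s / A j ≤ s := fun j => div_le_self hs0.le (by exact_mod_cast hA j)
  have hde : ∀ a, |(Matrix.of fun i j => e a j i).det| =
      s ^ n / (∏ j, (A j : ℝ)) * |(Matrix.of fun i j : Fin n => v j (a j) i).det| := by
    intro a
    have := Matrix.det_mul_row (fun j => s / (A j : ℝ)) (Matrix.of fun i j : Fin n => v j (a j) i)
    have h2 : (Matrix.of fun i j => e a j i) =
      Matrix.of fun i j => (s / (A j : ℝ)) * (Matrix.of fun i j : Fin n => v j (a j) i) i j := by
      ext i j; simp [he]
    rw [h2, this, abs_mul, abs_of_nonneg (Finset.prod_nonneg fun j _ => hq0 j), Finset.prod_div_distrib]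
    simp
  have hde2 : ∀ a, s ^ n / (∏ j, (A j : ℝ)) * θ ≤ |(Matrix.of fun i j => e a j i).det| := by
    intro a
    rw [hde a]
    exact mul_le_mul_of_nonneg_left (hdet a) (by positivity)
  have hXd : X ^ n ≤ (d+1)^n * s^n := by
    rw [← mul_pow]; exact pow_le_pow_left₀ hX0.le hd1 n
  have hlow : ∀ a x, x ∈ C a → ENNReal.ofReal (2 ^ ((d+1)^n) / 64) ≤
      ∑ ε : (Fin n → Fin (d+1)) → Bool,
        ((volume.restrict (Set.Icc (0 : Fin n → ℝ) 1)).prod (volume.restrict (Set.Icc (0 : Fin n → ℝ) 1)))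
          {p | SC (pol d (Matrix.vecMul (sgv ε) g) (x + ∑ i, p.1 i • e a i))
            (pol d (Matrix.vecMul (sgv ε) g) (x + ∑ i, p.2 i • e a i))} := by
    intro a x hx
    refine point g hg W hW.measure_lt_top.ne _ hK (e a) ?_ ?_ x ?_
    · have := hde2 a
      have h2 : 0 < s ^ n / (∏ j, (A j : ℝ)) * θ := by positivity
      exact abs_pos.1 (h2.trans_le this)
    · refine le_trans ?_ (div_le_div_of_nonneg_right (hde2 a) (by norm_num))
      simp only [measureReal_restrict_apply_univ]
      rw [div_le_iff₀ (by positivity)]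
      have h3 : X ^ n * θ ≤ ((d+1)^n * s^n) * θ := mul_le_mul_of_nonneg_right hXd hθ.le
      rw [hX] at h3
      have h4 : s ^ n / (∏ j, (A j : ℝ)) * θ / 16 * (d+1)^n
          = (((d+1)^n * s^n) * θ) / (∏ j, (A j : ℝ)) / 16 := by ring
      rw [h4]
      have h5 : 128 * m ≤ (((d+1)^n * s^n) * θ) / (∏ j, (A j : ℝ)) := by
        rwa [le_div_iff₀ hP]
      linarith
    · intro t ht
      exact hCW a x hx _ ((norm_comb_le (fun i => v i (a i)) (fun i => hv i _) s hs0.le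
        (fun i => s / A i) hq0 hq1 _ ht).trans hsr)
  set ν := (volume.restrict (Set.Icc (0 : Fin n → ℝ) 1)) with hν
  have : IsProbabilityMeasure ν := prob_cube n
  set S : ((Fin n → Fin (d+1)) → Bool) → (∀ j, Fin (A j)) →
      Set ((Fin n → ℝ) × ((Fin n → ℝ) × (Fin n → ℝ))) := fun ε a =>
    {q | SC (pol d (Matrix.vecMul (sgv ε) g) (q.1 + ∑ i, q.2.1 i • e a i))
            (pol d (Matrix.vecMul (sgv ε) g) (q.1 + ∑ i, q.2.2 i • e a i))} with hS
  have hSm : ∀ ε a, MeasurableSet (S ε a) := by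
    intro ε a
    refine measurableSet_SC ?_ ?_
    · exact ((pol_continuous _).comp (by fun_prop)).measurable
    · exact ((pol_continuous _).comp (by fun_prop)).measurable
  have hswap : ∀ ε a, ∫⁻ x in C a, (ν.prod ν) (Prod.mk x ⁻¹' S ε a) =
      ∫⁻ q, volume (C a ∩ (fun x => (x, q)) ⁻¹' S ε a) ∂(ν.prod ν) := by
    intro ε a
    rw [← Measure.prod_apply (hSm ε a), Measure.prod_apply_symm (hSm ε a)]
    refine lintegral_congr fun q => ?_
    rw [Measure.restrict_apply (measurable_prodMk_right (hSm ε a)), Set.inter_comm]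
  have h1 : ∀ a, ENNReal.ofReal (2 ^ ((d+1)^n) / 64) * volume (C a) ≤
      ∑ ε, ∫⁻ q, volume (C a ∩ (fun x => (x, q)) ⁻¹' S ε a) ∂(ν.prod ν) := by
    intro a
    calc ENNReal.ofReal (2 ^ ((d+1)^n) / 64) * volume (C a)
        = ∫⁻ x in C a, ENNReal.ofReal (2 ^ ((d+1)^n) / 64) := by simp
      _ ≤ ∫⁻ x in C a, ∑ ε, (ν.prod ν) (Prod.mk x ⁻¹' S ε a) :=
          setLIntegral_mono' (hC a).measurableSet fun x hx => hlow a x hx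
      _ = ∑ ε, ∫⁻ x in C a, (ν.prod ν) (Prod.mk x ⁻¹' S ε a) :=
          lintegral_finsetSum _ fun ε _ => measurable_measure_prodMk_left (hSm ε a)
      _ = _ := Finset.sum_congr rfl fun ε _ => hswap ε a
  have hmeas : ∀ ε a, Measurable fun q => volume (C a ∩ (fun x => (x, q)) ⁻¹' S ε a) := by
    intro ε a
    have := measurable_measure_prodMk_right (μ := volume.restrict (C a)) (hSm ε a)
    convert this using 2 with q
    rw [Measure.restrict_apply (measurable_prodMk_right (hSm ε a)), Set.inter_comm]
  have h2 : ENNReal.ofReal (2 ^ ((d+1)^n) / 64) * ENNReal.ofReal m ≤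
      2 ^ ((d+1)^n) * ENNReal.ofReal (n * (8 ^ n * (n * d * s))) := by
    calc ENNReal.ofReal (2 ^ ((d+1)^n) / 64) * ENNReal.ofReal m
        = ∑ a, ENNReal.ofReal (2 ^ ((d+1)^n) / 64) * volume (C a) := by rw [hmC, Finset.mul_sum]
      _ ≤ ∑ a, ∑ ε, ∫⁻ q, volume (C a ∩ (fun x => (x, q)) ⁻¹' S ε a) ∂(ν.prod ν) :=
          Finset.sum_le_sum fun a _ => h1 a
      _ = ∑ ε, ∑ a, ∫⁻ q, volume (C a ∩ (fun x => (x, q)) ⁻¹' S ε a) ∂(ν.prod ν) := Finset.sum_comm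
      _ = ∑ ε, ∫⁻ q, ∑ a, volume (C a ∩ (fun x => (x, q)) ⁻¹' S ε a) ∂(ν.prod ν) :=
          Finset.sum_congr rfl fun ε _ => (lintegral_finsetSum _ fun a _ => hmeas ε a).symm
      _ ≤ ∑ ε : (Fin n → Fin (d+1)) → Bool, ENNReal.ofReal (n * (8 ^ n * (n * d * s))) := by
          refine Finset.sum_le_sum fun ε _ => ?_
          calc _ ≤ ∫⁻ q, ENNReal.ofReal (n * (8 ^ n * (n * d * s))) ∂(ν.prod ν) := by
                apply lintegral_mono_ae
                rw [hν, Measure.prod_restrict]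
                filter_upwards [ae_restrict_mem (measurableSet_Icc.prod measurableSet_Icc)] with q hq
                exact count (Matrix.vecMul (sgv ε) g) A hA p v hv C (fun a => (hC a).measurableSet) hcyl
                  r s hr1 hs0 hsr hdisj q.1 q.2 hq.1 hq.2
            _ = _ := by simp
      _ = _ := by simp
  have h3 : ENNReal.ofReal (2 ^ ((d+1)^n) / 64 * m) ≤
      ENNReal.ofReal (2 ^ ((d+1)^n) * (n * (8 ^ n * (n * d * s)))) := by
    rw [ENNReal.ofReal_mul (by positivity), ENNReal.ofReal_mul (by positivity)]
    refine h2.trans (le_of_eq ?_)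
    congr 1
    rw [ENNReal.ofReal_pow (by norm_num)]
    norm_num
  rw [ENNReal.ofReal_le_ofReal_iff (by positivity)] at h3
  have h4 : (0:ℝ) < 2 ^ ((d+1)^n) := by positivity
  have h5 : m / 64 ≤ n * (8 ^ n * (n * d * s)) := by
    rw [← mul_le_mul_iff_right₀ h4]
    linarith
  have h6 : (n:ℝ) * (8 ^ n * (n * d * s)) = n ^ 2 * 8 ^ n * (d * s) := by ring
  have h7 : (n:ℝ) ^ 2 * 8 ^ n * (d * s) ≤ n ^ 2 * 8 ^ n * X :=
    mul_le_mul_of_nonneg_left hds (by positivity)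
  linarith

lemma algebra_step {k : ℕ} (hk : 1 ≤ k) (m K θ P : ℝ) (hm : 0 < m) (hK : 0 < K) (hθ : 0 < θ) (hP : 0 < P)
    (h : ∀ X : ℝ, 0 < X → X ^ (k+1) * θ = 128 * m * P → m ≤ K * X) :
    m ≤ (128 * K ^ (k+1)) ^ ((1:ℝ) / k) * θ ^ (-(1:ℝ) / k) * P ^ ((1:ℝ) / k) := by
  have hk0 : k ≠ 0 := by omega
  set Z := 128 * m * P / θ with hZ
  have hZ0 : 0 < Z := by positivity
  have hX : (Z ^ (((k+1 : ℕ):ℝ)⁻¹)) ^ (k+1) = Z := Real.rpow_inv_natCast_pow hZ0.le (by omega)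
  have h1 := h (Z ^ (((k+1 : ℕ):ℝ)⁻¹)) (by positivity) (by rw [hX, hZ]; field_simp)
  have h2 : m ^ (k+1) ≤ K ^ (k+1) * Z := by
    calc m ^ (k+1) ≤ (K * Z ^ (((k+1 : ℕ):ℝ)⁻¹)) ^ (k+1) := pow_le_pow_left₀ hm.le h1 _
      _ = K ^ (k+1) * Z := by rw [mul_pow, hX]
  have h3 : m ^ k ≤ 128 * K ^ (k+1) * θ⁻¹ * P := by
    have : m ^ k * m ≤ (128 * K ^ (k+1) * θ⁻¹ * P) * m := by
      rw [← pow_succ]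
      refine h2.trans (le_of_eq ?_)
      rw [hZ, div_eq_mul_inv]; ring
    exact le_of_mul_le_mul_right this hm
  have h4 : m = (m ^ k) ^ ((1:ℝ) / k) := by
    rw [one_div, Real.pow_rpow_inv_natCast hm.le hk0]
  rw [h4]
  refine (Real.rpow_le_rpow (by positivity) h3 (by positivity)).trans (le_of_eq ?_)
  rw [Real.mul_rpow (by positivity) hP.le, Real.mul_rpow (by positivity) (by positivity),
    Real.inv_rpow hθ.le, neg_div, Real.rpow_neg hθ.le]

lemma core2 {k : ℕ} (hk : 1 ≤ k) (A : Fin (k+1) → ℕ) (hA : ∀ j, 0 < A j)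
    (p v : ∀ j : Fin (k+1), Fin (A j) → Fin (k+1) → ℝ) (hv : ∀ j a, ‖v j a‖ ≤ 1)
    (θ : ℝ) (hθ : 0 < θ)
    (hdet : ∀ a : ∀ j : Fin (k+1), Fin (A j), θ ≤ |(Matrix.of fun i j : Fin (k+1) => v j (a j) i).det|)
    (C : (∀ j, Fin (A j)) → Set (Fin (k+1) → ℝ)) (hC : ∀ a, IsCompact (C a))
    (hcyl : ∀ a, ∀ x ∈ C a, ∀ j, ∃ t : ℝ, ‖x - (p j (a j) + t • v j (a j))‖ ≤ 2)
    (hdisj : ∀ a a', a ≠ a' → Disjoint (C a) (C a')) :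
    ∑ a, volume (C a) ≤ ENNReal.ofReal
      ((128 * (64 * ((k+1 : ℕ):ℝ) ^ 2 * 8 ^ (k+1)) ^ (k+1)) ^ ((1:ℝ) / k) * θ ^ (-(1:ℝ) / k) *
        (∏ j, (A j : ℝ)) ^ ((1:ℝ) / k)) := by
  have hfin : ∑ a, volume (C a) ≠ ⊤ :=
    (ENNReal.sum_lt_top.2 fun a _ => (hC a).measure_lt_top).ne
  set m := (∑ a, volume (C a)).toReal with hm
  have hmC : ENNReal.ofReal m = ∑ a, volume (C a) := ENNReal.ofReal_toReal hfin
  rw [← hmC]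
  apply ENNReal.ofReal_le_ofReal
  have hA0 : ∀ j, (0:ℝ) < A j := fun j => by exact_mod_cast hA j
  have hP : 0 < ∏ j, (A j : ℝ) := Finset.prod_pos fun j _ => hA0 j
  rcases (ENNReal.toReal_nonneg : 0 ≤ m).eq_or_lt with h0 | h0
  · rw [hm, ← h0]; positivity
  have hK : IsCompact (⋃ a, C a) := isCompact_iUnion hC
  have hvK : volume (⋃ a, C a) ≤ ENNReal.ofReal m := by
    rw [hmC]; exact measure_iUnion_fintype_le _ _
  have ev1 : ∀ᶠ r in nhdsWithin (0:ℝ) (Set.Ioi 0),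
      volume (Metric.cthickening r (⋃ a, C a)) < ENNReal.ofReal (2 * m) := by
    have := (tendsto_measure_cthickening_of_isCompact (μ := volume) hK).mono_left
      (nhdsWithin_le_nhds (s := Set.Ioi (0:ℝ)))
    refine this.eventually_lt_const (hvK.trans_lt ?_)
    exact (ENNReal.ofReal_lt_ofReal_iff (by positivity)).2 (by linarith)
  have ev2 : ∀ᶠ r in nhdsWithin (0:ℝ) (Set.Ioi 0), ∀ a a', a ≠ a' →
      Disjoint (Metric.cthickening r (C a)) (Metric.cthickening r (C a')) := by
    rw [Filter.eventually_all]; intro a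
    rw [Filter.eventually_all]; intro a'
    by_cases hne : a = a'
    · simp [hne]
    obtain ⟨δ, hδ, hd⟩ := (hdisj a a' hne).exists_cthickenings (hC a) (hC a').isClosed
    filter_upwards [Ioo_mem_nhdsGT hδ] with r hr _
    exact hd.mono (Metric.cthickening_mono hr.2.le _) (Metric.cthickening_mono hr.2.le _)
  obtain ⟨r, hr1, hr2, hr3⟩ := (ev1.and (ev2.and (Ioo_mem_nhdsGT (zero_lt_one (α := ℝ))))).exists
  refine algebra_step hk m (64 * ((k+1 : ℕ):ℝ) ^ 2 * 8 ^ (k+1)) θ _ h0 (by positivity) hθ hP ?_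
  intro X hX0 hX
  have hmem : ∀ (s : Set (Fin (k+1) → ℝ)) x, x ∈ s → ∀ u : Fin (k+1) → ℝ, ‖u‖ ≤ r →
      x + u ∈ Metric.cthickening r s := by
    intro s x hx u hu
    exact Metric.mem_cthickening_of_dist_le _ x r s hx (by simpa [dist_eq_norm] using hu)
  refine core (by omega) A hA p v hv θ hθ hdet C hC hcyl r hr3.1 hr3.2.le ?_
    (Metric.cthickening r (⋃ a, C a)) hK.cthickening ?_ m h0 hmC hr1.le X hX0 hX
  · intro a a' hne x hx y hy u u' hu hu' heq
    have h1 := hmem _ x hx u hu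
    rw [heq] at h1
    exact Set.disjoint_left.1 (hr2 a a' hne) h1 (hmem _ y hy u' hu')
  · intro a x hx u hu
    exact hmem _ x (Set.mem_iUnion.2 ⟨a, hx⟩) u hu

lemma disjointify {ι Y : Type*} [Fintype ι] [MeasurableSpace Y] (S : ι → Set Y) (hS : ∀ a, MeasurableSet (S a)) :
    ∃ D : ι → Set Y, (∀ a, MeasurableSet (D a)) ∧ (∀ a, D a ⊆ S a) ∧
      (∀ a b, a ≠ b → Disjoint (D a) (D b)) ∧ (⋃ a, S a) ⊆ ⋃ a, D a := by
  set e := Fintype.equivFin ι with he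
  refine ⟨fun a => S a \ ⋃ (b : ι) (_ : e b < e a), S b, ?_, fun a => Set.sdiff_subset, ?_, ?_⟩
  · intro a
    exact (hS a).diff (MeasurableSet.iUnion fun b => MeasurableSet.iUnion fun _ => hS b)
  · intro a b hab
    refine Set.disjoint_left.2 ?_
    rintro x ⟨hxa, hxa'⟩ ⟨hxb, hxb'⟩
    simp only [Set.mem_iUnion, not_exists] at hxa' hxb'
    rcases lt_trichotomy (e a) (e b) with h | h | h
    · exact hxb' a h hxa
    · exact hab (e.injective h)
    · exact hxa' b h hxb
  · intro x hx
    obtain ⟨a, ha⟩ := Set.mem_iUnion.1 hx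
    classical
    obtain ⟨b, hb, hmin⟩ := Finset.exists_min_image (Finset.univ.filter fun b => x ∈ S b) e ⟨a, by simpa using ha⟩
    simp only [Finset.mem_filter, Finset.mem_univ, true_and] at hb hmin
    refine Set.mem_iUnion.2 ⟨b, hb, ?_⟩
    simp only [Set.mem_iUnion, not_exists]
    intro c hc hxc
    exact absurd (hmin c hxc) (not_le.2 hc)

lemma approx_compact {n : ℕ} (D : Set (Fin n → ℝ)) (hD : MeasurableSet D) :
    ∃ K : ℕ → Set (Fin n → ℝ), (∀ i, IsCompact (K i)) ∧ (∀ i, K i ⊆ D) ∧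
      Filter.Tendsto (fun i => volume (K i)) Filter.atTop (nhds (volume D)) := by
  have h := hD.measure_eq_iSup_isCompact (μ := volume)
  set T : Set ℝ≥0∞ := {c | ∃ K : Set (Fin n → ℝ), IsCompact K ∧ K ⊆ D ∧ c = volume K} with hT
  have hs : sSup T = volume D := by
    apply le_antisymm
    · refine sSup_le ?_
      rintro c ⟨K, _, hK, rfl⟩
      exact measure_mono hK
    · rw [h]
      refine iSup_le fun K => iSup_le fun h1 => iSup_le fun h2 => ?_
      exact le_sSup ⟨K, h2, h1, rfl⟩
  obtain ⟨u, _, hu, huT⟩ := exists_seq_tendsto_sSup (S := T) ⟨0, ∅, isCompact_empty, by simp, by simp⟩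
    (OrderTop.bddAbove _)
  choose K hK1 hK2 hK3 using huT
  refine ⟨K, hK1, hK2, ?_⟩
  rw [← hs]
  convert hu using 2 with i
  exact (hK3 i).symm

lemma isClosed_cylinder {n : ℕ} (p v : EuclideanSpace ℝ (Fin n)) (r : ℝ) : IsClosed (cylinder p v r) :=
  isClosed_le (Metric.continuous_infDist_pt _) continuous_const

lemma cylinder_mem {n : ℕ} (p v x : EuclideanSpace ℝ (Fin n)) (hx : x ∈ cylinder p v 1) :
    ∃ t : ℝ, ‖x.ofLp - (p.ofLp + t • v.ofLp)‖ ≤ 2 := by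
  have h : Metric.infDist x {y | ∃ t : ℝ, y = p + t • v} ≤ 1 := hx
  have hne : ({y | ∃ t : ℝ, y = p + t • v} : Set (EuclideanSpace ℝ (Fin n))).Nonempty := ⟨p, 0, by simp⟩
  obtain ⟨y, ⟨t, rfl⟩, hy⟩ := (Metric.infDist_lt_iff hne).1 (h.trans_lt one_lt_two)
  refine ⟨t, ?_⟩
  rw [dist_eq_norm] at hy
  rw [pi_norm_le_iff_of_nonneg (by norm_num)]
  intro i
  exact (PiLp.norm_apply_le (x - (p + t • v)) i).trans hy.le

/-- Transverse families of unit cylinders: the set `I` of points belonging to at least one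
cylinder `T_{j,a}` for every `j` satisfies `Vol(I) ≤ C(n) θ^{-1/(n-1)} ∏_j A(j)^{1/(n-1)}`. -/
theorem kakeya_transverse_intersection (n : ℕ) (hn : 2 ≤ n) :
    ∃ C : ℝ, 0 < C ∧
      ∀ (A : Fin n → ℕ) (p v : ∀ j : Fin n, Fin (A j) → EuclideanSpace ℝ (Fin n)) (θ : ℝ),
        0 < θ →
        (∀ j a, ‖v j a‖ = 1) →
        (∀ a : ∀ j : Fin n, Fin (A j),
          θ ≤ |Matrix.det (Matrix.of fun i j : Fin n => v j (a j) i)|) →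
        volume (⋂ j : Fin n, ⋃ a : Fin (A j), cylinder (p j a) (v j a) 1)
          ≤ ENNReal.ofReal (C * θ ^ (-(1:ℝ) / ((n:ℝ) - 1)) *
              ∏ j : Fin n, (A j : ℝ) ^ ((1:ℝ) / ((n:ℝ) - 1))) := by
  obtain ⟨k, rfl⟩ : ∃ k, n = k + 1 := ⟨n - 1, by omega⟩
  have hk : 1 ≤ k := by omega
  have hkc : (((k + 1 : ℕ) : ℝ) - 1) = k := by push_cast; ring
  refine ⟨(128 * (64 * ((k+1 : ℕ):ℝ) ^ 2 * 8 ^ (k+1)) ^ (k+1)) ^ ((1:ℝ) / k), by positivity, ?_⟩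
  intro A p v θ hθ hv hdet
  rw [hkc, Real.finsetProd_rpow _ _ (fun j _ => Nat.cast_nonneg _)]
  by_cases hA : ∀ j, 0 < A j
  swap
  · push Not at hA
    obtain ⟨j, hj⟩ := hA
    have hj0 : A j = 0 := by omega
    have : IsEmpty (Fin (A j)) := by rw [hj0]; infer_instance
    have hemp : (⋂ j : Fin (k+1), ⋃ a : Fin (A j), cylinder (p j a) (v j a) 1) = ∅ := by
      refine Set.eq_empty_of_forall_notMem fun x hx => ?_
      obtain ⟨a, _⟩ := Set.mem_iUnion.1 (Set.mem_iInter.1 hx j)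
      exact this.elim a
    rw [hemp, measure_empty]
    exact bot_le
  set S : (∀ j, Fin (A j)) → Set (Fin (k+1) → ℝ) := fun a =>
    {x | ∀ j, WithLp.toLp 2 x ∈ cylinder (p j (a j)) (v j (a j)) 1} with hS
  have hSm : ∀ a, MeasurableSet (S a) := by
    intro a
    have : S a = ⋂ j, (WithLp.toLp 2) ⁻¹' cylinder (p j (a j)) (v j (a j)) 1 := by
      ext x; simp [hS]
    rw [this]
    exact MeasurableSet.iInter fun j =>
      ((isClosed_cylinder _ _ _).preimage (PiLp.continuous_toLp 2 _)).measurableSet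
  obtain ⟨D, hDm, hDS, hDd, hDU⟩ := disjointify S hSm
  have hI : MeasurableSet (⋂ j : Fin (k+1), ⋃ a : Fin (A j), cylinder (p j a) (v j a) 1) :=
    MeasurableSet.iInter fun j => MeasurableSet.iUnion fun a => (isClosed_cylinder _ _ _).measurableSet
  rw [← (PiLp.volume_preserving_toLp (Fin (k+1))).measure_preimage hI.nullMeasurableSet]
  have hle : volume (WithLp.toLp 2 ⁻¹' (⋂ j : Fin (k+1), ⋃ a : Fin (A j), cylinder (p j a) (v j a) 1)) ≤
      ∑ a, volume (D a) := by
    refine le_trans (measure_mono ?_) (measure_iUnion_fintype_le _ _)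
    refine subset_trans ?_ hDU
    intro x hx
    have h1 : ∀ j, ∃ a, WithLp.toLp 2 x ∈ cylinder (p j a) (v j a) 1 := by
      intro j
      exact Set.mem_iUnion.1 (Set.mem_iInter.1 hx j)
    choose a ha using h1
    exact Set.mem_iUnion.2 ⟨a, ha⟩
  refine hle.trans ?_
  choose K hKc hKD hKt using fun a => approx_compact (D a) (hDm a)
  refine le_of_tendsto' (tendsto_finsetSum Finset.univ fun a _ => hKt a) fun i => ?_
  refine core2 hk A hA (fun j a => (p j a).ofLp) (fun j a => (v j a).ofLp) ?_ θ hθ hdet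
    (fun a => K a i) (fun a => hKc a i) ?_ ?_
  · intro j a
    rw [pi_norm_le_iff_of_nonneg zero_le_one]
    intro l
    exact (PiLp.norm_apply_le (v j a) l).trans (hv j a).le
  · intro a x hx j
    exact cylinder_mem _ _ (WithLp.toLp 2 x) (hDS a (hKD a i hx) j)
  · intro a a' hne
    exact (hDd a a' hne).mono (hKD a i) (hKD a' i)
end

section
/- Let n ≥ 2. For each j = 1, …, n let T_{j,1}, …, T_{j,A(j)} be finitely many unit cylinders in ℝ^n with core directions v_{j,a}, and assume that for every choice of indices a_1, …, a_n the determinant of the matrix with columns v_{1,a_1}, …, v_{n,a_n} has absolute value at least θ > 0. For each cube Q of the standard unit lattice {∏_{i=1}^n [k_i, k_i+1) : k ∈ ℤ^n}, let M_j(Q) be the number of indices a ∈ {1, …, A(j)} such that T_{j,a} ∩ Q ≠ ∅, and let F(Q) := ∏_{j=1}^n M_j(Q). Then ∑_{Q} F(Q)^{1/(n-1)} ≤ C(n) θ^{-1/(n-1)} ∏_{j=1}^n A(j)^{1/(n-1)}, where the sum is over all cubes of the unit lattice and C(n) depends only on n. -/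
open MeasureTheory
open scoped ENNReal

/-- The cube of the standard unit lattice with corner `k ∈ ℤ^n`. -/
def latticeCube {n : ℕ} (k : Fin n → ℤ) : Set (EuclideanSpace ℝ (Fin n)) :=
  {x | ∀ i : Fin n, (k i : ℝ) ≤ x i ∧ x i < (k i : ℝ) + 1}

open MeasureTheory
open scoped ENNReal

section crofton
open ProbabilityTheory

variable {E : Type*} [NormedAddCommGroup E] [InnerProductSpace ℝ E] [FiniteDimensional ℝ E]
  [MeasurableSpace E] [BorelSpace E]

lemma gauss_map_unit (a : E) (ha : ‖a‖ = 1) :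
    (stdGaussian E).map (fun w => inner ℝ a w) = gaussianReal 0 1 := by
  have h := IsGaussian.map_eq_gaussianReal (μ := stdGaussian E) (innerSL ℝ a)
  rw [integral_strongDual_stdGaussian, variance_dual_stdGaussian] at h
  simp only [innerSL_apply_norm, ha] at h
  simpa using h

lemma gauss_indep (a b : E) (hab : inner ℝ a b = 0) :
    IndepFun (fun w => inner ℝ a w) (fun w => inner ℝ b w) (stdGaussian E) := by
  apply HasGaussianLaw.indepFun_of_covariance_eq_zero
  · have : HasGaussianLaw (fun w : E => ((innerSL ℝ a).prod (innerSL ℝ b)) w) (stdGaussian E) :=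
      ⟨by infer_instance⟩
    simpa using this
  · have h := covarianceBilin_apply_eq_cov (μ := stdGaussian E) (IsGaussian.memLp_two_id) a b
    rw [covarianceBilin_stdGaussian] at h
    rw [← h]
    exact hab

lemma gauss_small : ∃ c : ℝ, 0 < c ∧ ∀ r : ℝ, 0 ≤ r → r ≤ 1 →
    c * r ≤ (gaussianReal 0 1).real {y | |y| < r} := by
  refine ⟨2 * gaussianPDFReal 0 1 1, by have := gaussianPDFReal_pos 0 1 1 one_ne_zero; positivity, ?_⟩
  intro r h0 h1
  have hset : {y : ℝ | |y| < r} = Set.Ioo (-r) r := by ext y; simp [abs_lt]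
  rw [measureReal_def, gaussianReal_apply_eq_integral 0 one_ne_zero, hset, ENNReal.toReal_ofReal
    (setIntegral_nonneg measurableSet_Ioo fun x _ => gaussianPDFReal_nonneg _ _ _)]
  calc 2 * gaussianPDFReal 0 1 1 * r = ∫ x in Set.Ioo (-r) r, gaussianPDFReal 0 1 1 := by
        simp [h0]; ring
    _ ≤ _ := by
        apply setIntegral_mono_on
        · exact integrableOn_const (by simp)
        · exact (integrable_gaussianPDFReal 0 1).integrableOn
        · exact measurableSet_Ioo
        · intro x hx
          simp only [gaussianPDFReal_def]
          apply mul_le_mul_of_nonneg_left _ (by positivity)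
          apply Real.exp_le_exp.2
          have : x ^ 2 ≤ 1 := by
            have := abs_lt.2 hx
            rw [← sq_abs]; nlinarith [abs_nonneg x]
          simp; linarith

lemma gauss_large : 0 < (gaussianReal 0 1).real {y : ℝ | 1 < |y|} := by
  rw [measureReal_def, ENNReal.toReal_pos_iff]
  refine ⟨?_, measure_lt_top _ _⟩
  rw [pos_iff_ne_zero]
  intro h
  have h2 := (gaussianReal_absolutelyContinuous' 0 one_ne_zero) h
  have h3 : (volume (Set.Ioo (1:ℝ) 2)) ≤ 0 := by
    rw [← h2]
    apply measure_mono
    intro x hx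
    exact lt_of_lt_of_le hx.1 (le_abs_self x)
  simp at h3

/-- Lower bound on the probability that a random hyperplane separates two unit vectors. -/
lemma crofton_sign : ∃ c : ℝ, 0 < c ∧ ∀ {E : Type} [NormedAddCommGroup E] [InnerProductSpace ℝ E]
    [FiniteDimensional ℝ E] [MeasurableSpace E] [BorelSpace E] (x y : E), ‖x‖ = 1 → ‖y‖ = 1 →
    c * ‖x - y‖ ≤ (stdGaussian E).real {w | inner ℝ x w * inner ℝ y w < 0} := by
  obtain ⟨c, hc, hsmall⟩ := gauss_small
  set p := (gaussianReal 0 1).real {y : ℝ | 1 < |y|} with hp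
  have hp0 : 0 < p := gauss_large
  refine ⟨c * p / 2, by positivity, ?_⟩
  intro E _ _ _ _ _ x y hx hy
  by_cases hxy : x = y
  · subst hxy; simp
  set δ := ‖x - y‖ / 2 with hδ
  have hδ0 : 0 < δ := by have := norm_pos_iff.2 (sub_ne_zero.2 hxy); positivity
  have hδ1 : δ ≤ 1 := by have := norm_sub_le x y; rw [hδ]; linarith
  set b : E := (1 / (2 * δ)) • (x - y) with hb
  have hb1 : ‖b‖ = 1 := by
    rw [hb, norm_smul, Real.norm_of_nonneg (by positivity)]
    field_simp; linarith
  have hort : inner ℝ (x + y) (x - y) = 0 := by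
    rw [inner_add_left, inner_sub_right, inner_sub_right, real_inner_self_eq_norm_sq,
      real_inner_self_eq_norm_sq, hx, hy, real_inner_comm]; ring
  -- a set inclusion
  have key : c * δ * p ≤ (stdGaussian E).real {w | inner ℝ x w * inner ℝ y w < 0} := by
    have hprod : ∀ w : E, inner ℝ x w * inner ℝ y w
        = (inner ℝ (x + y) w / 2) ^ 2 - (δ * inner ℝ b w) ^ 2 := by
      intro w
      rw [hb, inner_add_left, real_inner_smul_left, inner_sub_left]
      field_simp; ring
    have hbm : (stdGaussian E).real {w | 1 < |inner ℝ b w|} = p := by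
      rw [hp, ← gauss_map_unit b hb1, map_measureReal_apply (by fun_prop)]
      · rfl
      · exact measurableSet_lt measurable_const (by fun_prop)
    by_cases hs : x + y = 0
    · have h1 : p ≤ (stdGaussian E).real {w | inner ℝ x w * inner ℝ y w < 0} := by
        rw [← hbm]
        apply measureReal_mono _ (by finiteness)
        intro w hw
        simp only [Set.mem_ofPred_eq] at hw ⊢
        rw [hprod, hs]
        simp only [inner_zero_left]
        have : 0 < (δ * inner ℝ b w) ^ 2 := by
          have : inner ℝ b w ≠ 0 := by intro h; rw [h] at hw; norm_num at hw
          positivity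
        linarith
      have h2 : c * δ ≤ 1 := (hsmall δ hδ0.le hδ1).trans measureReal_le_one
      nlinarith
    · set a : E := (1 / ‖x + y‖) • (x + y) with ha
      have hn : 0 < ‖x + y‖ := norm_pos_iff.2 hs
      have hn2 : ‖x + y‖ ≤ 2 := by have := norm_add_le x y; linarith
      have ha1 : ‖a‖ = 1 := by
        rw [ha, norm_smul, Real.norm_of_nonneg (by positivity)]; field_simp
      have hab : inner ℝ a b = 0 := by
        rw [ha, hb, real_inner_smul_left, real_inner_smul_right, hort]; simp
      have hind := gauss_indep a b hab
      have ham : (stdGaussian E).real {w | |inner ℝ a w| < δ} = (gaussianReal 0 1).real {y | |y| < δ} := by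
        rw [← gauss_map_unit a ha1, map_measureReal_apply (by fun_prop)]
        · rfl
        · exact measurableSet_lt (by fun_prop) measurable_const
      have hmul0 := hind.measure_inter_preimage_eq_mul {y : ℝ | |y| < δ} {y : ℝ | 1 < |y|}
        (measurableSet_lt (by fun_prop) measurable_const)
        (measurableSet_lt measurable_const (by fun_prop))
      have hmul := congrArg ENNReal.toReal hmul0
      rw [ENNReal.toReal_mul] at hmul
      have : c * δ * p ≤ (stdGaussian E).real {w | |inner ℝ a w| < δ} * (stdGaussian E).real {w | 1 < |inner ℝ b w|} := by
        rw [ham, hbm]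
        gcongr
        exact hsmall δ hδ0.le hδ1
      refine this.trans ((le_of_eq hmul.symm).trans ?_)
      apply measureReal_mono _ (by finiteness)
      rintro w ⟨h1, h2⟩
      simp only [Set.mem_preimage, Set.mem_ofPred_eq] at h1 h2 ⊢
      rw [hprod]
      have e1 : inner ℝ (x + y) w = ‖x + y‖ * inner ℝ a w := by
        rw [ha, real_inner_smul_left]; field_simp
      have h3 : |inner ℝ (x + y) w / 2| < |δ * inner ℝ b w| := by
        rw [e1, abs_div, abs_mul, abs_mul, abs_of_pos hn, abs_of_pos hδ0, abs_two]
        nlinarith [abs_nonneg (inner ℝ a w)]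
      have := sq_lt_sq.2 h3
      linarith
  calc c * p / 2 * ‖x - y‖ = c * δ * p := by rw [hδ]; ring
    _ ≤ _ := key

/-- Sign changes of a polynomial along an increasing sequence. -/
lemma sign_changes_le (q : Polynomial ℝ) (t : ℕ → ℝ) (ht : Monotone t) (m : ℕ) :
    ((Finset.range m).filter (fun i => q.eval (t i) * q.eval (t (i+1)) < 0)).card ≤ q.natDegree := by
  classical
  by_cases hq : q = 0
  · subst hq; simp
  set S := (Finset.range m).filter (fun i => q.eval (t i) * q.eval (t (i+1)) < 0)
  have h : ∀ i, q.eval (t i) * q.eval (t (i+1)) < 0 → ∃ z ∈ Set.Ioo (t i) (t (i+1)), q.eval z = 0 := by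
    intro i hi
    have hle : t i ≤ t (i+1) := ht (Nat.le_succ i)
    have hc : ContinuousOn (fun z => q.eval z) (Set.Icc (t i) (t (i+1))) := q.continuous.continuousOn
    rcases mul_neg_iff.1 hi with ⟨h1, h2⟩ | ⟨h1, h2⟩
    · exact intermediate_value_Ioo' hle hc ⟨h2, h1⟩
    · exact intermediate_value_Ioo hle hc ⟨h1, h2⟩
  choose! z hz1 hz2 using h
  have hS : ∀ i ∈ S, q.eval (t i) * q.eval (t (i+1)) < 0 := fun i hi => (Finset.mem_filter.1 hi).2
  have hlt : ∀ i ∈ S, ∀ j ∈ S, i < j → z i < z j := by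
    intro i hi j hj hij
    have h1 := (hz1 i (hS i hi)).2
    have h2 := (hz1 j (hS j hj)).1
    have h3 : t (i+1) ≤ t j := ht hij
    linarith
  have hinj : Set.InjOn z S := by
    intro i hi j hj hij
    rcases lt_trichotomy i j with h | h | h
    · exact absurd hij (hlt i hi j hj h).ne
    · exact h
    · exact absurd hij (hlt j hj i hi h).ne'
  calc S.card = (S.image z).card := (Finset.card_image_of_injOn hinj).symm
    _ ≤ q.roots.toFinset.card := by
      apply Finset.card_le_card
      intro y hy
      obtain ⟨i, hi, rfl⟩ := Finset.mem_image.1 hy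
      rw [Multiset.mem_toFinset, Polynomial.mem_roots hq]
      exact hz2 i (hS i hi)
    _ ≤ q.roots.card := Multiset.toFinset_card_le _
    _ ≤ _ := q.card_roots'

/-- Discrete length bound for normalised polynomial curves. -/
lemma variation_bound : ∃ C : ℝ, 0 < C ∧ ∀ {E : Type} [NormedAddCommGroup E] [InnerProductSpace ℝ E]
    [FiniteDimensional ℝ E] [MeasurableSpace E] [BorelSpace E] (G : ℝ → E) (D : ℕ),
    (∀ t, G t ≠ 0) → (∀ w, ∃ q : Polynomial ℝ, q.natDegree ≤ D ∧ ∀ t, inner ℝ (G t) w = q.eval t) →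
    ∀ (t : ℕ → ℝ) (m : ℕ), Monotone t →
      ∑ i ∈ Finset.range m, ‖(‖G (t (i+1))‖⁻¹ • G (t (i+1))) - (‖G (t i)‖⁻¹ • G (t i))‖ ≤ C * D := by
  obtain ⟨c, hc, hsign⟩ := crofton_sign
  refine ⟨c⁻¹, by positivity, ?_⟩
  intro E _ _ _ _ _ G D hG hpoly t m ht
  rw [inv_mul_eq_div, le_div_iff₀' hc, Finset.mul_sum]
  set u : ℝ → E := fun t => ‖G t‖⁻¹ • G t with hu
  have hu1 : ∀ t, ‖u t‖ = 1 := fun t => by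
    simp only [hu]; rw [norm_smul, norm_inv, norm_norm]; exact inv_mul_cancel₀ (norm_ne_zero_iff.2 (hG t))
  have hmeas : ∀ i, MeasurableSet {w : E | inner ℝ (u (t (i+1))) w * inner ℝ (u (t i)) w < 0} := fun i =>
    measurableSet_lt (by fun_prop) measurable_const
  calc ∑ i ∈ Finset.range m, c * ‖u (t (i+1)) - u (t i)‖
      ≤ ∑ i ∈ Finset.range m, (stdGaussian E).real {w | inner ℝ (u (t (i+1))) w * inner ℝ (u (t i)) w < 0} :=
        Finset.sum_le_sum fun i _ => hsign _ _ (hu1 _) (hu1 _)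
    _ = ∑ i ∈ Finset.range m, ∫ w, Set.indicator {w | inner ℝ (u (t (i+1))) w * inner ℝ (u (t i)) w < 0} (fun _ => (1:ℝ)) w ∂(stdGaussian E) := by
        refine Finset.sum_congr rfl fun i _ => ?_
        rw [integral_indicator (hmeas i)]; simp
    _ = ∫ w, ∑ i ∈ Finset.range m, Set.indicator {w | inner ℝ (u (t (i+1))) w * inner ℝ (u (t i)) w < 0} (fun _ => (1:ℝ)) w ∂(stdGaussian E) := by
        rw [integral_finsetSum]
        intro i _
        exact (integrable_const _).indicator (hmeas i)
    _ ≤ ∫ w, (D : ℝ) ∂(stdGaussian E) := by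
        apply integral_mono
        · apply integrable_finsetSum
          intro i _
          exact (integrable_const _).indicator (hmeas i)
        · exact integrable_const _
        · intro w
          obtain ⟨q, hq, hqe⟩ := hpoly w
          have h1 := sign_changes_le q t ht m
          simp only [Set.indicator_apply, Set.mem_ofPred_eq]
          rw [Finset.sum_boole]
          have h2 : (Finset.range m).filter (fun i => inner ℝ (u (t (i+1))) w * inner ℝ (u (t i)) w < 0)
            = (Finset.range m).filter (fun i => q.eval (t i) * q.eval (t (i+1)) < 0) := by
            apply Finset.filter_congr
            intro i _
            have hp1 : 0 < ‖G (t (i+1))‖⁻¹ := inv_pos.2 (norm_pos_iff.2 (hG _))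
            have hp2 : 0 < ‖G (t i)‖⁻¹ := inv_pos.2 (norm_pos_iff.2 (hG _))
            simp only [hu, real_inner_smul_left, hqe]
            rw [show ‖G (t (i + 1))‖⁻¹ * Polynomial.eval (t (i + 1)) q * (‖G (t i)‖⁻¹ * Polynomial.eval (t i) q)
              = (‖G (t (i + 1))‖⁻¹ * ‖G (t i)‖⁻¹) * (Polynomial.eval (t i) q * Polynomial.eval (t (i + 1)) q) by ring]
            have hpp : 0 < ‖G (t (i + 1))‖⁻¹ * ‖G (t i)‖⁻¹ := by positivity
            constructor
            · intro h; by_contra h'; push Not at h'; nlinarith [mul_nonneg hpp.le h']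
            · intro h; exact mul_neg_of_pos_of_neg hpp h
          rw [h2]
          exact_mod_cast h1.trans hq
    _ = D := by simp

/-- Length bound for normalised polynomial curves. -/
lemma length_bound : ∃ C : ℝ, 0 < C ∧ ∀ {E : Type} [NormedAddCommGroup E] [InnerProductSpace ℝ E]
    [FiniteDimensional ℝ E] [MeasurableSpace E] [BorelSpace E] (G : ℝ → E) (D : ℕ) (g' : ℝ → E),
    (∀ t, G t ≠ 0) → (∀ w, ∃ q : Polynomial ℝ, q.natDegree ≤ D ∧ ∀ t, inner ℝ (G t) w = q.eval t) →
    (∀ t, HasDerivAt (fun t => ‖G t‖⁻¹ • G t) (g' t) t) → Continuous g' →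
    ∫⁻ t, ‖g' t‖ₑ ≤ ENNReal.ofReal (C * D) := by
  obtain ⟨C, hC, hvar⟩ := variation_bound
  refine ⟨C, hC, ?_⟩
  intro E _ _ _ _ _ G D g' hG hpoly hder hcont
  set γ : ℝ → E := fun t => ‖G t‖⁻¹ • G t with hγ
  have main : ∀ a b : ℝ, a ≤ b → ∫ t in a..b, ‖g' t‖ ≤ C * D := by
    intro a b hab
    apply le_of_forall_pos_le_add
    intro ε hε
    set η := ε / (2 * (b - a + 1)) with hη
    have hη0 : 0 < η := by have : 0 < b - a + 1 := by linarith
                           positivity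
    have huc : UniformContinuousOn g' (Set.Icc a b) :=
      isCompact_Icc.uniformContinuousOn_of_continuous hcont.continuousOn
    obtain ⟨r, hr, hrr⟩ := Metric.uniformContinuousOn_iff.1 huc η hη0
    obtain ⟨m, hm⟩ := exists_nat_gt ((b - a) / r)
    have hm0 : (0:ℝ) < m := lt_of_le_of_lt (div_nonneg (by linarith) hr.le) hm
    set h := (b - a) / m with hh
    have hh0 : 0 ≤ h := div_nonneg (by linarith) hm0.le
    have hhr : h < r := by rw [hh, div_lt_iff₀ hm0]; rw [div_lt_iff₀ hr] at hm; linarith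
    set t : ℕ → ℝ := fun i => a + i * h with ht
    have htmono : Monotone t := by
      intro i j hij
      simp only [ht]
      have : (i:ℝ) ≤ j := by exact_mod_cast hij
      nlinarith
    have ht0 : t 0 = a := by simp [ht]
    have htm : t m = b := by simp only [ht, hh]; field_simp; ring
    have hstep : ∀ i < m, ∫ s in (t i)..(t (i+1)), ‖g' s‖ ≤ ‖γ (t (i+1)) - γ (t i)‖ + 2 * η * h := by
      intro i hi
      have hle : t i ≤ t (i+1) := htmono (Nat.le_succ i)
      have hd : t (i+1) - t i = h := by simp only [ht]; push_cast; ring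
      have hia : a ≤ t i := by rw [← ht0]; exact htmono (Nat.zero_le i)
      have hib : t (i+1) ≤ b := by rw [← htm]; exact htmono hi
      have hclose : ∀ s ∈ Set.Icc (t i) (t (i+1)), ‖g' s - g' (t i)‖ ≤ η := by
        intro s hs
        rw [← dist_eq_norm]
        apply (hrr s ⟨by linarith [hs.1], by linarith [hs.2]⟩ (t i) ⟨hia, by linarith⟩ _).le
        rw [Real.dist_eq, abs_of_nonneg (by linarith [hs.1])]
        linarith [hs.2]
      have h1 : ∫ s in (t i)..(t (i+1)), ‖g' s‖ ≤ ∫ s in (t i)..(t (i+1)), (‖g' (t i)‖ + η) := by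
        apply intervalIntegral.integral_mono_on hle
        · exact hcont.norm.intervalIntegrable _ _
        · exact intervalIntegrable_const
        · intro s hs
          have := hclose s hs
          have h2 := norm_sub_norm_le (g' s) (g' (t i))
          linarith
      rw [intervalIntegral.integral_const, hd, smul_eq_mul] at h1
      have h2 : ∫ s in (t i)..(t (i+1)), g' s = γ (t (i+1)) - γ (t i) :=
        intervalIntegral.integral_eq_sub_of_hasDerivAt (fun x _ => hder x)
          (hcont.intervalIntegrable _ _)
      have h3 : ‖∫ s in (t i)..(t (i+1)), (g' s - g' (t i))‖ ≤ η * |t (i+1) - t i| := by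
        apply intervalIntegral.norm_integral_le_of_norm_le_const
        intro s hs
        rw [Set.uIoc_of_le hle] at hs
        exact hclose s ⟨hs.1.le, hs.2⟩
      rw [intervalIntegral.integral_sub (hcont.intervalIntegrable _ _) intervalIntegrable_const,
        intervalIntegral.integral_const, h2, hd, abs_of_nonneg hh0] at h3
      have h4 : h * ‖g' (t i)‖ ≤ ‖γ (t (i+1)) - γ (t i)‖ + η * h := by
        have := norm_sub_norm_le (h • g' (t i)) (γ (t (i+1)) - γ (t i))
        rw [norm_sub_rev (h • g' (t i)), norm_smul, Real.norm_of_nonneg hh0] at this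
        linarith
      nlinarith
    have hsum : ∑ i ∈ Finset.range m, ∫ s in (t i)..(t (i+1)), ‖g' s‖ = ∫ s in a..b, ‖g' s‖ := by
      rw [intervalIntegral.sum_integral_adjacent_intervals, ht0, htm]
      intro i _
      exact hcont.norm.intervalIntegrable _ _
    rw [← hsum]
    calc ∑ i ∈ Finset.range m, ∫ s in (t i)..(t (i+1)), ‖g' s‖
        ≤ ∑ i ∈ Finset.range m, (‖γ (t (i+1)) - γ (t i)‖ + 2 * η * h) :=
          Finset.sum_le_sum fun i hi => hstep i (Finset.mem_range.1 hi)
      _ = (∑ i ∈ Finset.range m, ‖γ (t (i+1)) - γ (t i)‖) + 2 * η * (b - a) := by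
          rw [Finset.sum_add_distrib]; simp only [Finset.sum_const, Finset.card_range, nsmul_eq_mul, hh]
          field_simp
      _ ≤ C * D + ε := by
          apply add_le_add (hvar G D hG hpoly t m htmono)
          have hpos : 0 < b - a + 1 := by linarith
          have : η * (2 * (b - a + 1)) = ε := by rw [hη]; field_simp
          nlinarith
  have hU : (⋃ R : ℕ, Set.Ioc (-(R:ℝ)) R) = Set.univ := by
    apply Set.eq_univ_of_forall
    intro x
    obtain ⟨R, hR⟩ := exists_nat_gt |x|
    exact Set.mem_iUnion.2 ⟨R, (abs_lt.1 hR).1, (abs_lt.1 hR).2.le⟩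
  have hmon : Monotone (fun R : ℕ => Set.Ioc (-(R:ℝ)) R) := by
    intro i j hij
    have : (i:ℝ) ≤ j := by exact_mod_cast hij
    exact Set.Ioc_subset_Ioc (by linarith) this
  rw [← setLIntegral_univ, ← hU, setLIntegral_iUnion_of_directed _ hmon.directed_le]
  apply iSup_le
  intro R
  have hR : -(R:ℝ) ≤ R := by have : (0:ℝ) ≤ R := Nat.cast_nonneg R
                             linarith
  have := main (-(R:ℝ)) R hR
  rw [intervalIntegral.integral_of_le hR] at this
  rw [← ofReal_integral_norm_eq_lintegral_enorm]
  · exact ENNReal.ofReal_le_ofReal this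
  · exact (hcont.integrableOn_Icc).mono_set Set.Ioc_subset_Icc_self
end crofton

open MeasureTheory
open scoped ENNReal

section isotropic

lemma hadamard_ineq {ι : Type} [Fintype ι] [DecidableEq ι] {E : Type} [NormedAddCommGroup E]
    [InnerProductSpace ℝ E] (b : OrthonormalBasis ι ℝ E) (v : ι → E) :
    |b.toBasis.det v| ≤ ∏ i, ‖v i‖ := by
  classical
  have e : ι ≃ Fin (Fintype.card ι) := Fintype.equivFin ι
  have : FiniteDimensional ℝ E := b.toBasis.finiteDimensional_of_finite
  have : Fact (Module.finrank ℝ E = Fintype.card ι) := ⟨Module.finrank_eq_card_basis b.toBasis⟩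
  set b' := b.reindex e with hb'
  have h1 := (b'.toBasis.orientation).abs_volumeForm_apply_le (v ∘ e.symm)
  rw [(b'.toBasis.orientation).volumeForm_robust' b'] at h1
  rw [hb', OrthonormalBasis.reindex_toBasis, Module.Basis.det_reindex] at h1
  have h2 : (v ∘ e.symm) ∘ e = v := by ext i; simp
  rw [h2] at h1
  refine h1.trans (le_of_eq ?_)
  exact Equiv.prod_comp e.symm (fun i => ‖v i‖)

/-- Approximate radial isotropic position. -/
lemma isotropic_position {ι κ : Type} [Fintype ι] [DecidableEq ι] {n : ℕ}
    (K : Finset κ) (M : κ → ℝ) (hM : ∀ q ∈ K, 0 ≤ M q) (hM1 : ∑ q ∈ K, M q = 1)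
    (e : κ → (Fin n → ℝ) → ι → EuclideanSpace ℝ ι) (he : ∀ q i, Continuous (fun s => e q s i))
    (hdet : ∀ q s, (EuclideanSpace.basisFun ι ℝ).toBasis.det (e q s) ≠ 0) :
    ∃ A : EuclideanSpace ℝ ι →ₗ[ℝ] EuclideanSpace ℝ ι, LinearMap.det A ≠ 0 ∧
      ∀ w, ‖w‖ = 1 → ∑ q ∈ K, M q * ∫ s in Set.Icc (0 : Fin n → ℝ) 1,
        ∑ i, (inner ℝ w (A (e q s i))) ^ 2 / ‖A (e q s i)‖ ^ 2 ≤ 2 := by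
  set b := (EuclideanSpace.basisFun ι ℝ) with hb
  set B : Set (Fin n → ℝ) := Set.Icc 0 1 with hB
  have hBv : volume.real B = 1 := by
    rw [measureReal_def, hB, Real.volume_Icc_pi]; simp
  have hBfin : volume B ≠ ∞ := by
    rw [hB, Real.volume_Icc_pi]; simp
  have hBc : IsCompact B := isCompact_Icc
  have hBm : MeasurableSet B := measurableSet_Icc
  have he0 : ∀ q s i, e q s i ≠ 0 := by
    intro q s i h
    apply hdet q s
    exact b.toBasis.det.map_coord_zero i h
  have hA0 : ∀ A : EuclideanSpace ℝ ι →ₗ[ℝ] EuclideanSpace ℝ ι, LinearMap.det A ≠ 0 →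
      ∀ q s i, A (e q s i) ≠ 0 := by
    intro A hA q s i h
    have hinj : Function.Injective A := by
      have := LinearMap.isUnit_iff_isUnit_det (f := A)
      have hu : IsUnit A := this.2 (isUnit_iff_ne_zero.2 hA)
      exact ((Module.End.isUnit_iff A).1 hu).1
    exact he0 q s i (hinj (by rw [h, map_zero]))
  have hAcont : ∀ (A : EuclideanSpace ℝ ι →ₗ[ℝ] EuclideanSpace ℝ ι) q i,
      Continuous (fun s => A (e q s i)) := fun A q i =>
    (LinearMap.continuous_of_finiteDimensional A).comp (he q i)
  have hlogcont : ∀ (A : EuclideanSpace ℝ ι →ₗ[ℝ] EuclideanSpace ℝ ι), LinearMap.det A ≠ 0 →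
      ∀ q, Continuous (fun s => ∑ i, Real.log ‖A (e q s i)‖) := by
    intro A hA q
    refine continuous_finsetSum _ fun i _ => ?_
    exact Continuous.log (hAcont A q i).norm fun s => norm_ne_zero_iff.2 (hA0 A hA q s i)
  have hzcont : ∀ (A : EuclideanSpace ℝ ι →ₗ[ℝ] EuclideanSpace ℝ ι), LinearMap.det A ≠ 0 →
      ∀ w q, Continuous (fun s => ∑ i, (inner ℝ w (A (e q s i))) ^ 2 / ‖A (e q s i)‖ ^ 2) := by
    intro A hA w q
    refine continuous_finsetSum _ fun i _ => ?_
    refine Continuous.div ?_ ((hAcont A q i).norm.pow 2)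
      fun s => pow_ne_zero 2 (norm_ne_zero_iff.2 (hA0 A hA q s i))
    exact (Continuous.inner continuous_const (hAcont A q i)).pow 2
  set Φ : {A : EuclideanSpace ℝ ι →ₗ[ℝ] EuclideanSpace ℝ ι // LinearMap.det A ≠ 0} → ℝ :=
    fun A => ∑ q ∈ K, M q * (∫ s in B, ∑ i, Real.log ‖A.1 (e q s i)‖) - Real.log |LinearMap.det A.1|
    with hΦ
  have hbdd : BddBelow (Set.range Φ) := by
    refine ⟨∑ q ∈ K, M q * ∫ s in B, Real.log |b.toBasis.det (e q s)|, ?_⟩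
    rintro _ ⟨⟨A, hA⟩, rfl⟩
    simp only [hΦ]
    have hdc : ∀ q, Continuous (fun s => Real.log |b.toBasis.det (e q s)|) := by
      intro q
      refine Continuous.log (Continuous.abs ?_) fun s => abs_ne_zero.2 (hdet q s)
      simp only [Module.Basis.det_apply]
      refine Continuous.matrix_det (continuous_matrix fun i j => ?_)
      have : ∀ s, b.toBasis.toMatrix (e q s) i j = e q s j i := fun s => by
        simp [Module.Basis.toMatrix_apply, hb]
      simp only [this]
      have := he q j
      fun_prop
    have hstep : ∀ q, Real.log |LinearMap.det A| + ∫ s in B, Real.log |b.toBasis.det (e q s)|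
        ≤ ∫ s in B, ∑ i, Real.log ‖A (e q s i)‖ := by
      intro q
      have h1 : Real.log |LinearMap.det A| = ∫ s in B, Real.log |LinearMap.det A| := by
        rw [setIntegral_const, hBv]; simp
      rw [h1, ← integral_add]
      · apply setIntegral_mono_on
        · exact ((continuous_const.add (hdc q)).continuousOn.integrableOn_compact hBc)
        · exact ((hlogcont A hA q).continuousOn.integrableOn_compact hBc)
        · exact hBm
        · intro s _
          rw [← Real.log_mul (abs_ne_zero.2 hA) (abs_ne_zero.2 (hdet q s)), ← abs_mul,
            ← Real.log_prod (fun i _ => norm_ne_zero_iff.2 (hA0 A hA q s i))]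
          apply Real.log_le_log
          · exact abs_pos.2 (mul_ne_zero hA (hdet q s))
          · have := hadamard_ineq b (fun i => A (e q s i))
            rw [← Module.Basis.det_comp] 
            exact this
      · exact integrableOn_const hBfin
      · exact ((hdc q).continuousOn.integrableOn_compact hBc)
    have : ∑ q ∈ K, M q * (Real.log |LinearMap.det A| + ∫ s in B, Real.log |b.toBasis.det (e q s)|)
        ≤ ∑ q ∈ K, M q * ∫ s in B, ∑ i, Real.log ‖A (e q s i)‖ :=
      Finset.sum_le_sum fun q hq => mul_le_mul_of_nonneg_left (hstep q) (hM q hq)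
    simp only [mul_add, Finset.sum_add_distrib, ← Finset.sum_mul, hM1] at this
    linarith
  have : Nonempty {A : EuclideanSpace ℝ ι →ₗ[ℝ] EuclideanSpace ℝ ι // LinearMap.det A ≠ 0} :=
    ⟨⟨LinearMap.id, by simp⟩⟩
  obtain ⟨⟨A, hA⟩, hAinf⟩ := exists_lt_of_ciInf_lt (f := Φ) (a := iInf Φ + 1/20) (by linarith)
  refine ⟨A, hA, ?_⟩
  intro w hw
  set f : Module.Dual ℝ (EuclideanSpace ℝ ι) := (-(1/2:ℝ)) • (innerₛₗ ℝ w) with hf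
  set T := LinearMap.transvection f w with hT
  have hTdet : LinearMap.det T = 1 / 2 := by
    rw [hT, LinearMap.transvection.det]
    simp only [hf, LinearMap.smul_apply, innerₛₗ_apply_apply, real_inner_self_eq_norm_sq, hw]
    norm_num
  have hTx : ∀ x, ‖T x‖ ^ 2 = ‖x‖ ^ 2 - 3/4 * (inner ℝ w x) ^ 2 := by
    intro x
    rw [hT, LinearMap.transvection.apply]
    simp only [hf, LinearMap.smul_apply, innerₛₗ_apply_apply, smul_eq_mul]
    rw [norm_add_sq_real, norm_smul, hw, real_inner_smul_right, real_inner_comm, mul_one, Real.norm_eq_abs, sq_abs]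
    ring
  have hTA : LinearMap.det (T ∘ₗ A) ≠ 0 := by
    rw [LinearMap.det_comp, hTdet]; exact mul_ne_zero (by norm_num) hA
  have h1 : iInf Φ ≤ Φ ⟨T ∘ₗ A, hTA⟩ := ciInf_le hbdd _
  set G := ∑ q ∈ K, M q * ∫ s in B, ∑ i, (inner ℝ w (A (e q s i))) ^ 2 / ‖A (e q s i)‖ ^ 2 with hG
  have h2 : Φ ⟨T ∘ₗ A, hTA⟩ ≤ Φ ⟨A, hA⟩ - 3/8 * G + Real.log 2 := by
    simp only [hΦ]
    have hl : Real.log |LinearMap.det (T ∘ₗ A)| = Real.log |LinearMap.det A| - Real.log 2 := by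
      rw [LinearMap.det_comp, hTdet, abs_mul, Real.log_mul (by norm_num) (abs_ne_zero.2 hA)]
      rw [abs_of_pos (by norm_num : (0:ℝ) < 1/2), one_div, Real.log_inv]; ring
    rw [hl]
    have hs : ∀ q, ∫ s in B, ∑ i, Real.log ‖(T ∘ₗ A) (e q s i)‖ ≤
        (∫ s in B, ∑ i, Real.log ‖A (e q s i)‖)
          - 3/8 * ∫ s in B, ∑ i, (inner ℝ w (A (e q s i))) ^ 2 / ‖A (e q s i)‖ ^ 2 := by
      intro q
      rw [← integral_const_mul, ← integral_sub]
      · apply setIntegral_mono_on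
        · exact ((hlogcont _ hTA q).continuousOn.integrableOn_compact hBc)
        · exact (((hlogcont A hA q).sub (continuous_const.mul (hzcont A hA w q))).continuousOn.integrableOn_compact hBc)
        · exact hBm
        · intro s _
          rw [Finset.mul_sum, ← Finset.sum_sub_distrib]
          apply Finset.sum_le_sum
          intro i _
          have hx := hA0 A hA q s i
          have hTx0 : T (A (e q s i)) ≠ 0 := hA0 _ hTA q s i
          set x := A (e q s i) with hxd
          have hxn : 0 < ‖x‖ := norm_pos_iff.2 hx
          have e1 : Real.log (‖T x‖ ^ 2) ≤ Real.log (‖x‖ ^ 2) - 3/4 * ((inner ℝ w x) ^ 2 / ‖x‖ ^ 2) := by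
            have hTp : 0 < ‖T x‖ ^ 2 := by have := norm_pos_iff.2 hTx0; positivity
            have e2 : ‖T x‖ ^ 2 = ‖x‖ ^ 2 * (‖T x‖ ^ 2 / ‖x‖ ^ 2) := by field_simp
            have e3 : ‖T x‖ ^ 2 / ‖x‖ ^ 2 = 1 - 3/4 * ((inner ℝ w x) ^ 2 / ‖x‖ ^ 2) := by
              rw [hTx]; field_simp
            have e4 := Real.log_le_sub_one_of_pos (x := ‖T x‖ ^ 2 / ‖x‖ ^ 2) (by positivity)
            rw [e2, Real.log_mul (by positivity) (by positivity)]
            linarith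
          rw [Real.log_pow, Real.log_pow] at e1
          push_cast at e1
          change Real.log ‖T x‖ ≤ _
          linarith
      · exact ((hlogcont A hA q).continuousOn.integrableOn_compact hBc)
      · exact ((continuous_const.mul (hzcont A hA w q)).continuousOn.integrableOn_compact hBc)
    have : ∑ q ∈ K, M q * ∫ s in B, ∑ i, Real.log ‖(T ∘ₗ A) (e q s i)‖ ≤ ∑ q ∈ K, M q *
        ((∫ s in B, ∑ i, Real.log ‖A (e q s i)‖)
          - 3/8 * ∫ s in B, ∑ i, (inner ℝ w (A (e q s i))) ^ 2 / ‖A (e q s i)‖ ^ 2) :=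
      Finset.sum_le_sum fun q hq => mul_le_mul_of_nonneg_left (hs q) (hM q hq)
    have h5 : ∑ q ∈ K, M q *
        ((∫ s in B, ∑ i, Real.log ‖A (e q s i)‖)
          - 3/8 * ∫ s in B, ∑ i, (inner ℝ w (A (e q s i))) ^ 2 / ‖A (e q s i)‖ ^ 2)
        = ∑ q ∈ K, M q * (∫ s in B, ∑ i, Real.log ‖A (e q s i)‖) - 3/8 * G := by
      rw [hG, Finset.mul_sum, ← Finset.sum_sub_distrib]
      exact Finset.sum_congr rfl fun q _ => by ring
    linarith
  have h3 := Real.log_two_lt_d9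
  linarith

end isotropic


section concrete

/-- The vector of all monomials of degree at most `d` in each variable. -/
noncomputable def monVec (n d : ℕ) (x : Fin n → ℝ) : EuclideanSpace ℝ (Fin n → Fin (d+1)) :=
  WithLp.toLp 2 (fun α => ∏ i, x i ^ (α i : ℕ))

lemma monVec_ne_zero (n d : ℕ) (x : Fin n → ℝ) : monVec n d x ≠ 0 := by
  intro h
  have := congrArg (fun z : EuclideanSpace ℝ (Fin n → Fin (d+1)) => z (fun _ => 0)) h
  simp [monVec] at this

lemma monVec_contDiff (n d : ℕ) : ContDiff ℝ 1 (monVec n d) := by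
  rw [contDiff_euclidean]
  intro α
  simp only [monVec]
  fun_prop

lemma monVec_det (n d : ℕ) (y : Fin n → Fin (d+1) → ℝ) (hy : ∀ i, Function.Injective (y i)) :
    (EuclideanSpace.basisFun (Fin n → Fin (d+1)) ℝ).toBasis.det
      (fun β => monVec n d (fun i => y i (β i))) ≠ 0 := by
  classical
  rw [Module.Basis.det_apply]
  intro h0
  rw [← Matrix.exists_vecMul_eq_zero_iff] at h0
  obtain ⟨c, hc, hc0⟩ := h0
  apply hc
  set P : MvPolynomial (Fin n) ℝ := ∑ α : Fin n → Fin (d+1),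
    MvPolynomial.monomial (Finsupp.equivFunOnFinite.symm (fun i => (α i : ℕ))) (c α) with hP
  have hP0 : P = 0 := by
    apply MvPolynomial.eq_zero_of_eval_zero_at_prod_finset P (fun i => Finset.univ.image (y i))
    · intro i
      rw [Finset.card_image_of_injective _ (hy i), Finset.card_univ, Fintype.card_fin]
      apply Nat.lt_succ_of_le
      apply (MvPolynomial.degreeOf_sum_le i _ _).trans
      apply Finset.sup_le
      intro α _
      apply (MvPolynomial.degreeOf_le_iff).2
      intro m hm
      have := MvPolynomial.support_monomial_subset hm
      simp only [Finset.mem_singleton] at this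
      subst this
      simp only [Finsupp.equivFunOnFinite_symm_apply_apply]
      exact Nat.lt_succ_iff.1 (α i).2
    · intro x hx
      have : ∀ i, ∃ b, y i b = x i := fun i => by simpa using hx i
      choose β hβ using this
      have h1 := congrFun hc0 β
      rw [hP, map_sum]
      simp only [Matrix.vecMul, dotProduct, Module.Basis.toMatrix_apply] at h1
      simp only [MvPolynomial.eval_monomial]
      rw [← Pi.zero_apply (M := fun _ => ℝ) β, ← h1]
      apply Finset.sum_congr rfl
      intro α _
      congr 1
      rw [Finsupp.prod_fintype _ _ (by simp)]
      simp [monVec, hβ]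
  funext α
  have h2 := congrArg (MvPolynomial.coeff (Finsupp.equivFunOnFinite.symm (fun i => (α i : ℕ)))) hP0
  rw [hP, MvPolynomial.coeff_sum] at h2
  simp only [MvPolynomial.coeff_monomial, MvPolynomial.coeff_zero] at h2
  rw [Finset.sum_eq_single α] at h2
  · simpa using h2
  · intro b _ hb
    rw [if_neg]
    intro h
    apply hb
    have := Finsupp.equivFunOnFinite.symm.injective h
    funext i
    exact Fin.ext (congrFun this i)
  · simp

lemma monVec_line (n d : ℕ)
    (A : EuclideanSpace ℝ (Fin n → Fin (d+1)) →ₗ[ℝ] EuclideanSpace ℝ (Fin n → Fin (d+1)))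
    (p v : Fin n → ℝ) (w : EuclideanSpace ℝ (Fin n → Fin (d+1))) :
    ∃ q : Polynomial ℝ, q.natDegree ≤ n * d ∧
      ∀ t : ℝ, inner ℝ (A (monVec n d (p + t • v))) w = q.eval t := by
  refine ⟨∑ α, Polynomial.C ((LinearMap.adjoint A w) α) *
    ∏ i, (Polynomial.C (p i) + Polynomial.C (v i) * Polynomial.X) ^ (α i : ℕ), ?_, ?_⟩
  · apply Polynomial.natDegree_sum_le_of_forall_le
    intro α _
    apply (Polynomial.natDegree_C_mul_le _ _).trans
    apply (Polynomial.natDegree_prod_le _ _).trans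
    calc ∑ i, ((Polynomial.C (p i) + Polynomial.C (v i) * Polynomial.X) ^ (α i : ℕ)).natDegree
        ≤ ∑ i : Fin n, d := by
          apply Finset.sum_le_sum
          intro i _
          apply Polynomial.natDegree_pow_le.trans
          have h1 : (Polynomial.C (p i) + Polynomial.C (v i) * Polynomial.X).natDegree ≤ 1 := by
            rw [add_comm]; exact Polynomial.natDegree_linear_le
          have h2 : (α i : ℕ) ≤ d := Nat.lt_succ_iff.1 (α i).2
          nlinarith
      _ = n * d := by simp
  · intro t
    rw [← LinearMap.adjoint_inner_right, PiLp.inner_apply, Polynomial.eval_finsetSum]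
    apply Finset.sum_congr rfl
    intro α _
    simp only [monVec, Polynomial.eval_mul, Polynomial.eval_prod, Polynomial.eval_C,
      Polynomial.eval_pow, Polynomial.eval_add, Polynomial.eval_X, Pi.add_apply, Pi.smul_apply,
      smul_eq_mul]
    rw [show ∀ x y : ℝ, inner ℝ x y = y * x from fun x y => rfl]
    congr 1
    apply Finset.prod_congr rfl
    intro i _
    rw [mul_comm (v i) t]

lemma lintegral_affine {n : ℕ} (L : (Fin n → ℝ) →ₗ[ℝ] (Fin n → ℝ)) (hL : LinearMap.det L ≠ 0)
    (x0 : Fin n → ℝ) (F : (Fin n → ℝ) → ℝ≥0∞) (hF : Measurable F) :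
    ∫⁻ c, F (x0 + L c) = ENNReal.ofReal |(LinearMap.det L)⁻¹| * ∫⁻ x, F x := by
  have hLm : Measurable L := (LinearMap.continuous_of_finiteDimensional L).measurable
  have h1 : ∫⁻ c, F (x0 + L c) = ∫⁻ y, F (x0 + y) ∂(Measure.map L volume) := by
    rw [lintegral_map (by fun_prop) hLm]
  rw [h1, Measure.map_linearMap_addHaar_eq_smul_addHaar volume hL, lintegral_smul_measure,
    lintegral_add_left_eq_self, smul_eq_mul]

/-- The half-open unit cube with corner `k`. -/
def cubeSet {n : ℕ} (k : Fin n → ℤ) : Set (Fin n → ℝ) :=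
  {x | ∀ i : Fin n, (k i : ℝ) ≤ x i ∧ x i < (k i : ℝ) + 1}

lemma cubeSet_meas {n : ℕ} (k : Fin n → ℤ) : MeasurableSet (cubeSet k) := by
  have : cubeSet k = Set.pi Set.univ (fun i => Set.Ico (k i : ℝ) (k i + 1)) := by
    ext x; simp [cubeSet]
  rw [this]
  exact MeasurableSet.univ_pi fun i => measurableSet_Ico

/-- A point of the subcell `β` of the cube `q`. -/
noncomputable def cellPt {n : ℕ} (d : ℕ) (q : Fin n → ℤ) (β : Fin n → Fin (d+1)) (s : Fin n → ℝ) :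
    Fin n → ℝ := fun i => (q i : ℝ) + (((β i : ℕ) : ℝ) + s i) / ((d:ℝ) + 1)

lemma cellPt_continuous {n : ℕ} (d : ℕ) (q : Fin n → ℤ) (β : Fin n → Fin (d+1)) :
    Continuous (cellPt d q β) := by
  unfold cellPt
  fun_prop

lemma cellPt_det {n : ℕ} (d : ℕ) (q : Fin n → ℤ) (s : Fin n → ℝ) :
    (EuclideanSpace.basisFun (Fin n → Fin (d+1)) ℝ).toBasis.det
      (fun β => monVec n d (cellPt d q β s)) ≠ 0 := by
  have hd : (0:ℝ) < (d:ℝ) + 1 := by positivity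
  have h := monVec_det n d
    (fun i (b : Fin (d+1)) => (q i : ℝ) + (((b : ℕ) : ℝ) + s i) / ((d:ℝ) + 1)) (fun i b b' h => by
      simp only at h
      have h1 := add_left_cancel h
      rw [div_left_inj' hd.ne'] at h1
      have h2 := add_right_cancel h1
      exact Fin.ext (by exact_mod_cast h2))
  have h3 : (fun β : Fin n → Fin (d+1) => monVec n d (cellPt d q β s)) =
      (fun β => monVec n d (fun i => (q i : ℝ) + (((β i : ℕ) : ℝ) + s i) / ((d:ℝ) + 1))) := by
    funext β
    rw [show cellPt d q β s = (fun i => (q i : ℝ) + (((β i : ℕ) : ℝ) + s i) / ((d:ℝ) + 1)) from rfl]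
  rw [h3]
  exact h

lemma cell_integral {n : ℕ} (d : ℕ) (q : Fin n → ℤ) (β : Fin n → Fin (d+1))
    (F : (Fin n → ℝ) → ℝ≥0∞) (hF : Measurable F) :
    ∫⁻ x, F x = ENNReal.ofReal (1 / ((d:ℝ)+1)^n) * ∫⁻ s, F (cellPt d q β s) := by
  have hd : (0:ℝ) < (d:ℝ) + 1 := by positivity
  set r : ℝ := ((d:ℝ) + 1)⁻¹ with hr
  have hr0 : 0 < r := by positivity
  have hdetL : LinearMap.det (r • (LinearMap.id : (Fin n → ℝ) →ₗ[ℝ] (Fin n → ℝ))) = r ^ n := by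
    rw [LinearMap.det_smul]; simp
  have h1 := lintegral_affine (r • LinearMap.id) (by rw [hdetL]; positivity)
    (fun i => (q i : ℝ) + ((β i : ℕ) : ℝ) * r) F hF
  rw [hdetL, abs_of_pos (by positivity)] at h1
  have h2 : ∀ s, cellPt d q β s = (fun i => (q i : ℝ) + ((β i : ℕ) : ℝ) * r) +
      (r • (LinearMap.id : (Fin n → ℝ) →ₗ[ℝ] (Fin n → ℝ))) s := by
    intro s
    funext i
    simp only [cellPt, LinearMap.smul_apply, LinearMap.id_apply, Pi.add_apply, Pi.smul_apply,
      smul_eq_mul, hr]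
    ring
  simp only [h2]
  rw [h1, ← mul_assoc, ← ENNReal.ofReal_mul (by positivity)]
  have : 1 / ((d:ℝ)+1)^n * (r ^ n)⁻¹ = 1 := by
    rw [hr, inv_pow, inv_inv, one_div]
    exact inv_mul_cancel₀ (by positivity)
  rw [this]; simp

lemma cube_cover {n : ℕ} (d : ℕ) (q : Fin n → ℤ) (g : (Fin n → ℝ) → ℝ≥0∞) (hg : Measurable g) :
    ∫⁻ x in cubeSet q, g x ≤ ENNReal.ofReal (1 / ((d:ℝ)+1)^n) *
      ∑ β : Fin n → Fin (d+1), ∫⁻ s in Set.Icc (0 : Fin n → ℝ) 1, g (cellPt d q β s) := by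
  classical
  have hd : (0:ℝ) < (d:ℝ) + 1 := by positivity
  let S : (Fin n → Fin (d+1)) → Set (Fin n → ℝ) := fun β =>
    {x | (fun i => (x i - q i) * ((d:ℝ)+1) - ((β i : ℕ) : ℝ)) ∈ Set.Icc (0 : Fin n → ℝ) 1}
  have hS : ∀ β, MeasurableSet (S β) := by
    intro β
    exact measurableSet_preimage (f := fun (x : Fin n → ℝ) (i : Fin n) =>
      (x i - q i) * ((d:ℝ)+1) - ((β i : ℕ) : ℝ)) (by fun_prop) measurableSet_Icc
  have hcell : ∀ β s, cellPt d q β s ∈ S β ↔ s ∈ Set.Icc (0 : Fin n → ℝ) 1 := by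
    intro β s
    have : (fun i => (cellPt d q β s i - q i) * ((d:ℝ)+1) - ((β i : ℕ) : ℝ)) = s := by
      funext i
      simp only [cellPt]
      field_simp
      ring
    change (fun i => (cellPt d q β s i - q i) * ((d:ℝ)+1) - ((β i : ℕ) : ℝ)) ∈ Set.Icc (0 : Fin n → ℝ) 1 ↔ _
    rw [this]
  have hint : ∀ β, ∫⁻ x, (S β).indicator g x =
      ENNReal.ofReal (1 / ((d:ℝ)+1)^n) * ∫⁻ s in Set.Icc (0 : Fin n → ℝ) 1, g (cellPt d q β s) := by
    intro β
    rw [cell_integral d q β _ (hg.indicator (hS β)), ← lintegral_indicator measurableSet_Icc]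
    congr 1
    apply lintegral_congr
    intro s
    by_cases h : s ∈ Set.Icc (0 : Fin n → ℝ) 1
    · rw [Set.indicator_of_mem h, Set.indicator_of_mem ((hcell β s).2 h)]
    · rw [Set.indicator_of_notMem h, Set.indicator_of_notMem (fun h' => h ((hcell β s).1 h'))]
  rw [Finset.mul_sum, ← Finset.sum_congr rfl (fun β _ => hint β),
    ← lintegral_finsetSum _ (fun β _ => hg.indicator (hS β)),
    ← lintegral_indicator (cubeSet_meas q)]
  apply lintegral_mono
  intro x
  by_cases hx : x ∈ cubeSet q
  · rw [Set.indicator_of_mem hx]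
    have hfl : ∀ i, ⌊(x i - q i) * ((d:ℝ)+1)⌋₊ < d + 1 := by
      intro i
      rw [Nat.floor_lt (mul_nonneg (by linarith [(hx i).1]) hd.le)]
      push_cast
      nlinarith [(hx i).2]
    let β : Fin n → Fin (d+1) := fun i => ⟨⌊(x i - q i) * ((d:ℝ)+1)⌋₊, hfl i⟩
    have hmem : x ∈ S β := by
      constructor
      · intro i
        have := Nat.floor_le (mul_nonneg (by linarith [(hx i).1] : 0 ≤ x i - q i) hd.le)
        simp only [Pi.zero_apply, β]; linarith
      · intro i
        have := Nat.lt_floor_add_one ((x i - q i) * ((d:ℝ)+1))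
        simp only [Pi.one_apply, β]; linarith
    calc g x = (S β).indicator g x := by rw [Set.indicator_of_mem hmem]
      _ ≤ ∑ β, (S β).indicator g x :=
          Finset.single_le_sum (f := fun β => (S β).indicator g x) (fun _ _ => zero_le)
            (Finset.mem_univ β)
  · rw [Set.indicator_of_notMem hx]
    exact zero_le

/-- The normalised polynomial map. -/
noncomputable def nmap {n d : ℕ}
    (A : EuclideanSpace ℝ (Fin n → Fin (d+1)) →ₗ[ℝ] EuclideanSpace ℝ (Fin n → Fin (d+1)))
    (x : Fin n → ℝ) : EuclideanSpace ℝ (Fin n → Fin (d+1)) :=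
  ‖A (monVec n d x)‖⁻¹ • A (monVec n d x)

section nmap
variable {n d : ℕ}
    (A : EuclideanSpace ℝ (Fin n → Fin (d+1)) →ₗ[ℝ] EuclideanSpace ℝ (Fin n → Fin (d+1)))

lemma nmap_contDiff (hA : ∀ x, A (monVec n d x) ≠ 0) : ContDiff ℝ 1 (nmap A) := by
  have hGc : ContDiff ℝ 1 (fun x => A (monVec n d x)) :=
    (LinearMap.toContinuousLinearMap A).contDiff.comp (monVec_contDiff n d)
  have h1 : ContDiff ℝ 1 (fun x => ‖A (monVec n d x)‖⁻¹) :=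
    (hGc.norm ℝ hA).inv fun x => norm_ne_zero_iff.2 (hA x)
  exact h1.smul hGc

lemma nmap_norm (hA : ∀ x, A (monVec n d x) ≠ 0) (x) : ‖nmap A x‖ = 1 := by
  rw [nmap, norm_smul, norm_inv, norm_norm]
  exact inv_mul_cancel₀ (norm_ne_zero_iff.2 (hA x))

lemma nmap_inner (w) (x) : (inner ℝ w (A (monVec n d x))) ^ 2 / ‖A (monVec n d x)‖ ^ 2
    = (inner ℝ w (nmap A x)) ^ 2 := by
  rw [nmap, real_inner_smul_right, mul_pow, inv_pow, inv_mul_eq_div]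

lemma nmap_cube (hA : ∀ x, A (monVec n d x) ≠ 0) (q : Fin n → ℤ) (m : ℝ) (hm : 0 ≤ m)
    (w : EuclideanSpace ℝ (Fin n → Fin (d+1)))
    (h : m * ∫ s in Set.Icc (0 : Fin n → ℝ) 1, ∑ β, (inner ℝ w (A (monVec n d (cellPt d q β s)))) ^ 2
      / ‖A (monVec n d (cellPt d q β s))‖ ^ 2 ≤ 2) :
    ENNReal.ofReal m * ∫⁻ x in cubeSet q, ENNReal.ofReal ((inner ℝ w (nmap A x)) ^ 2)
        ≤ ENNReal.ofReal (2 / ((d:ℝ)+1)^n) := by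
  simp only [nmap_inner] at h
  have hc : Continuous (nmap A) := (nmap_contDiff A hA).continuous
  have hgc : Continuous (fun x => (inner ℝ w (nmap A x)) ^ 2) := (continuous_const.inner hc).pow 2
  have hgm : Measurable (fun x => ENNReal.ofReal ((inner ℝ w (nmap A x)) ^ 2)) :=
    hgc.measurable.ennreal_ofReal
  have hint : ∑ β, ∫⁻ s in Set.Icc (0 : Fin n → ℝ) 1,
      ENNReal.ofReal ((inner ℝ w (nmap A (cellPt d q β s))) ^ 2) =
      ENNReal.ofReal (∫ s in Set.Icc (0 : Fin n → ℝ) 1,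
        ∑ β, (inner ℝ w (nmap A (cellPt d q β s))) ^ 2) := by
    rw [ofReal_integral_eq_lintegral_ofReal]
    · rw [← lintegral_finsetSum]
      · apply lintegral_congr
        intro s
        rw [ENNReal.ofReal_sum_of_nonneg (fun _ _ => sq_nonneg _)]
      · intro β _
        exact hgm.comp (cellPt_continuous d q β).measurable
    · apply Continuous.integrableOn_Icc
      exact continuous_finsetSum _ fun β _ => hgc.comp (cellPt_continuous d q β)
    · exact Filter.Eventually.of_forall fun s => Finset.sum_nonneg fun _ _ => sq_nonneg _
  have hcov := cube_cover d q _ hgm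
  rw [hint] at hcov
  calc _ ≤ ENNReal.ofReal m * (ENNReal.ofReal (1 / ((d:ℝ)+1)^n) *
        ENNReal.ofReal (∫ s in Set.Icc (0 : Fin n → ℝ) 1,
        ∑ β, (inner ℝ w (nmap A (cellPt d q β s))) ^ 2)) := by gcongr
    _ = ENNReal.ofReal (1 / ((d:ℝ)+1)^n * (m * ∫ s in Set.Icc (0 : Fin n → ℝ) 1,
        ∑ β, (inner ℝ w (nmap A (cellPt d q β s))) ^ 2)) := by
          rw [ENNReal.ofReal_mul (by positivity), ENNReal.ofReal_mul hm]
          ring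
    _ ≤ ENNReal.ofReal (2 / ((d:ℝ)+1)^n) := by
          apply ENNReal.ofReal_le_ofReal
          rw [div_mul_eq_mul_div, one_mul]
          gcongr

lemma nmap_line (hA : ∀ x, A (monVec n d x) ≠ 0) (p v : Fin n → ℝ) (t : ℝ) :
    HasDerivAt (fun t : ℝ => nmap A (p + t • v)) (fderiv ℝ (nmap A) (p + t • v) v) t := by
  have h1 : HasFDerivAt (nmap A) (fderiv ℝ (nmap A) (p + t • v)) (p + t • v) :=
    (((nmap_contDiff A hA).differentiable (by norm_num)) _).hasFDerivAt
  have h2 : HasDerivAt (fun t : ℝ => p + t • v) v t := by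
    simpa using ((hasDerivAt_id t).smul_const v).const_add p
  exact h1.comp_hasDerivAt t h2

lemma nmap_line_cont (hA : ∀ x, A (monVec n d x) ≠ 0) (p v : Fin n → ℝ) :
    Continuous (fun t : ℝ => fderiv ℝ (nmap A) (p + t • v) v) := by
  have h1 : Continuous (fderiv ℝ (nmap A)) := (nmap_contDiff A hA).continuous_fderiv (by norm_num)
  have h2 : Continuous (fun t : ℝ => p + t • v) := by fun_prop
  exact (h1.comp h2).clm_apply continuous_const

end nmap

/-- The balanced polynomial embedding. -/
lemma balanced_map : ∃ C : ℝ, 0 < C ∧ ∀ (n d : ℕ) (K : Finset (Fin n → ℤ)) (M : (Fin n → ℤ) → ℝ),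
    (∀ q ∈ K, 0 ≤ M q) → ∑ q ∈ K, M q = 1 →
    ∃ u : (Fin n → ℝ) → EuclideanSpace ℝ (Fin n → Fin (d+1)), ContDiff ℝ 1 u ∧ (∀ x, ‖u x‖ = 1) ∧
      (∀ q ∈ K, ∀ w, ‖w‖ = 1 → ENNReal.ofReal (M q) * ∫⁻ x in cubeSet q, ENNReal.ofReal ((inner ℝ w (u x)) ^ 2)
        ≤ ENNReal.ofReal (2 / ((d:ℝ)+1)^n)) ∧
      (∀ p v : Fin n → ℝ, ∫⁻ t : ℝ, ‖fderiv ℝ u (p + t • v) v‖ₑ ≤ ENNReal.ofReal (C * (n * d))) := by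
  obtain ⟨C, hC, hlen⟩ := length_bound
  refine ⟨C, hC, ?_⟩
  intro n d K M hM hM1
  have hmc : Continuous (monVec n d) := (monVec_contDiff n d).continuous
  obtain ⟨A, hA, hiso⟩ := isotropic_position K M hM hM1
    (fun q s β => monVec n d (cellPt d q β s))
    (fun q β => hmc.comp (cellPt_continuous d q β))
    (fun q s => cellPt_det d q s)
  have hAinj : Function.Injective A := by
    have := LinearMap.isUnit_iff_isUnit_det (f := A)
    have hu : IsUnit A := this.2 (isUnit_iff_ne_zero.2 hA)
    exact ((Module.End.isUnit_iff A).1 hu).1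
  have hG0 : ∀ x, A (monVec n d x) ≠ 0 := fun x h =>
    monVec_ne_zero n d x (hAinj (by rw [h, map_zero]))
  refine ⟨nmap A, nmap_contDiff A hG0, nmap_norm A hG0, ?_, ?_⟩
  · intro q hq w hw
    apply nmap_cube A hG0 q (M q) (hM q hq) w
    refine le_trans ?_ (hiso w hw)
    apply Finset.single_le_sum (f := fun q => M q * ∫ s in Set.Icc (0 : Fin n → ℝ) 1,
      ∑ β, (inner ℝ w (A (monVec n d (cellPt d q β s)))) ^ 2 /
        ‖A (monVec n d (cellPt d q β s))‖ ^ 2) _ hq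
    intro q' hq'
    exact mul_nonneg (hM q' hq') (integral_nonneg fun s => Finset.sum_nonneg fun _ _ => by positivity)
  · intro p v
    have h := hlen (fun t => A (monVec n d (p + t • v))) (n * d)
      (fun t => fderiv ℝ (nmap A) (p + t • v) v)
      (fun t => hG0 _) (fun w => monVec_line n d A p v w) (nmap_line A hG0 p v)
      (nmap_line_cont A hG0 p v)
    rw [Nat.cast_mul] at h
    exact h

end concrete

section visibility
variable {n : ℕ} {E : Type} [NormedAddCommGroup E] [InnerProductSpace ℝ E] [CompleteSpace E]

lemma fderiv_enorm_cont (u : (Fin n → ℝ) → E) (hu : ContDiff ℝ 1 u) :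
    Continuous (fun z : (Fin n → ℝ) × (Fin n → ℝ) => ‖fderiv ℝ u z.1 z.2‖ₑ) := by
  have h1 : Continuous (fderiv ℝ u) := hu.continuous_fderiv (by norm_num)
  exact ((h1.comp continuous_fst).clm_apply continuous_snd).enorm

lemma segment_bound (u : (Fin n → ℝ) → E) (hu : ContDiff ℝ 1 u) (x h : Fin n → ℝ) :
    ‖u (x + h) - u x‖ₑ ≤ ∫⁻ t in Set.Icc (0:ℝ) 1, ‖fderiv ℝ u (x + t • h) h‖ₑ := by
  have hd : ∀ t : ℝ, HasDerivAt (fun t : ℝ => u (x + t • h)) (fderiv ℝ u (x + t • h) h) t := by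
    intro t
    have h1 : HasFDerivAt u (fderiv ℝ u (x + t • h)) (x + t • h) :=
      ((hu.differentiable (by norm_num)) _).hasFDerivAt
    have h2 : HasDerivAt (fun t : ℝ => x + t • h) h t := by
      simpa using ((hasDerivAt_id t).smul_const h).const_add x
    exact h1.comp_hasDerivAt t h2
  have hc : Continuous (fun t : ℝ => fderiv ℝ u (x + t • h) h) := by
    have h1 : Continuous (fderiv ℝ u) := hu.continuous_fderiv (by norm_num)
    have h2 : Continuous (fun t : ℝ => x + t • h) := by fun_prop
    exact (h1.comp h2).clm_apply continuous_const
  have hI := intervalIntegral.integral_eq_sub_of_hasDerivAt (a := 0) (b := 1) (fun t _ => hd t)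
    (hc.intervalIntegrable _ _)
  simp only [one_smul, zero_smul, add_zero] at hI
  rw [← hI, intervalIntegral.integral_of_le zero_le_one]
  refine (enorm_integral_le_lintegral_enorm _).trans ?_
  exact lintegral_mono_set Set.Ioc_subset_Icc_self

/-- The middle half of the unit cube. -/
def midCube (q : Fin n → ℤ) : Set (Fin n → ℝ) :=
  Set.Icc (fun i => (q i : ℝ) + 1/4) (fun i => (q i : ℝ) + 3/4)

lemma midCube_volume (q : Fin n → ℤ) : volume (midCube q) = ENNReal.ofReal ((1/2)^n) := by
  rw [midCube, Real.volume_Icc_pi]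
  have : ∀ i, (q i : ℝ) + 3/4 - (q i + 1/4) = 1/2 := fun i => by ring
  simp only [this]
  rw [Finset.prod_const, Finset.card_univ, Fintype.card_fin, ENNReal.ofReal_pow (by norm_num)]

lemma midCube_shift {q : Fin n → ℤ} {x h : Fin n → ℝ} (hx : x ∈ midCube q)
    (hh : ∀ i, |h i| < 1/4) : x + h ∈ cubeSet q := by
  intro i
  have h1 := hx.1 i
  have h2 := hx.2 i
  have h3 := abs_lt.1 (hh i)
  simp only [Pi.add_apply] at *
  constructor <;> linarith

lemma displacement (u : (Fin n → ℝ) → E) (hu : ContDiff ℝ 1 u) (q : Fin n → ℤ) (h : Fin n → ℝ)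
    (hh : ∀ i, |h i| < 1/4) :
    ∫⁻ x in midCube q, ‖u (x + h) - u x‖ₑ ≤ ∫⁻ x in cubeSet q, ‖fderiv ℝ u x h‖ₑ := by
  have hm : Measurable (fun x => ‖fderiv ℝ u x h‖ₑ) :=
    ((fderiv_enorm_cont u hu).comp (continuous_id.prodMk continuous_const)).measurable
  calc ∫⁻ x in midCube q, ‖u (x + h) - u x‖ₑ
      ≤ ∫⁻ x in midCube q, ∫⁻ t in Set.Icc (0:ℝ) 1, ‖fderiv ℝ u (x + t • h) h‖ₑ :=
        lintegral_mono fun x => segment_bound u hu x h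
    _ = ∫⁻ t in Set.Icc (0:ℝ) 1, ∫⁻ x in midCube q, ‖fderiv ℝ u (x + t • h) h‖ₑ := by
        apply lintegral_lintegral_swap
        apply Measurable.aemeasurable
        apply hm.comp (f := fun z : (Fin n → ℝ) × ℝ => z.1 + z.2 • h)
        fun_prop
    _ ≤ ∫⁻ t in Set.Icc (0:ℝ) 1, ∫⁻ x in cubeSet q, ‖fderiv ℝ u x h‖ₑ := by
        apply setLIntegral_mono measurable_const
        intro t ht
        rw [← lintegral_indicator (cubeSet_meas q), midCube, ← lintegral_indicator measurableSet_Icc,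
          ← lintegral_add_right_eq_self ((cubeSet q).indicator fun x => ‖fderiv ℝ u x h‖ₑ) (t • h)]
        apply lintegral_mono
        intro x
        by_cases hx : x ∈ midCube q
        · beta_reduce
          have hx' : x + t • h ∈ cubeSet q := by
            apply midCube_shift hx
            intro i
            have := hh i
            simp only [Pi.smul_apply, smul_eq_mul, abs_mul, abs_of_nonneg ht.1]
            nlinarith [ht.2, ht.1, abs_nonneg (h i)]
          rw [Set.indicator_of_mem hx']
          exact Set.indicator_le_self _ _ _
        · beta_reduce
          rw [midCube] at hx
          rw [Set.indicator_of_notMem hx]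
          exact zero_le
    _ = ∫⁻ x in cubeSet q, ‖fderiv ℝ u x h‖ₑ := by
        rw [setLIntegral_const]; simp

lemma cubeDeriv_combination (u : (Fin n → ℝ) → E) (hu : ContDiff ℝ 1 u) (q : Fin n → ℤ)
    (V : Fin n → Fin n → ℝ) (c s : Fin n → ℝ) (κ : ℝ) (hs : ∀ j, 1 ≤ s j)
    (hS : ∀ j, ∫⁻ x in cubeSet q, ‖fderiv ℝ u x (V j)‖ₑ ≤ ENNReal.ofReal (s j))
    (hc0 : ∀ j, 0 ≤ c j) (hc1 : ∀ j, c j ≤ κ / s j) (hκ : 0 ≤ κ) :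
    ∫⁻ x in cubeSet q, ‖fderiv ℝ u x (∑ j, c j • V j)‖ₑ ≤ ENNReal.ofReal (n * κ) := by
  have hm : ∀ h, Measurable (fun x => ‖fderiv ℝ u x h‖ₑ) := fun h =>
    ((fderiv_enorm_cont u hu).comp (continuous_id.prodMk continuous_const)).measurable
  calc ∫⁻ x in cubeSet q, ‖fderiv ℝ u x (∑ j, c j • V j)‖ₑ
      ≤ ∫⁻ x in cubeSet q, ∑ j, ENNReal.ofReal (c j) * ‖fderiv ℝ u x (V j)‖ₑ := by
        apply lintegral_mono
        intro x
        simp only [map_sum, map_smul]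
        refine (enorm_sum_le _ _).trans ?_
        apply Finset.sum_le_sum
        intro j _
        rw [enorm_smul, Real.enorm_eq_ofReal (hc0 j)]
    _ = ∑ j, ENNReal.ofReal (c j) * ∫⁻ x in cubeSet q, ‖fderiv ℝ u x (V j)‖ₑ := by
        rw [lintegral_finsetSum _ (fun j _ => (hm _).const_mul _)]
        simp only [lintegral_const_mul _ (hm _)]
    _ ≤ ∑ j : Fin n, ENNReal.ofReal κ := by
        apply Finset.sum_le_sum
        intro j _
        have hsj : 0 < s j := by linarith [hs j]
        calc _ ≤ ENNReal.ofReal (κ / s j) * ENNReal.ofReal (s j) := by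
              gcongr
              · exact hc1 j
              · exact hS j
          _ = ENNReal.ofReal κ := by
              rw [← ENNReal.ofReal_mul (by positivity), div_mul_cancel₀ _ hsj.ne']
    _ = ENNReal.ofReal (n * κ) := by
        rw [Finset.sum_const, Finset.card_univ, Fintype.card_fin, nsmul_eq_mul,
          ENNReal.ofReal_mul (by positivity), ENNReal.ofReal_natCast]

lemma sphere_inner (w y : E) (hw : ‖w‖ = 1) (hy : ‖y‖ = 1) :
    1 ≤ ENNReal.ofReal ((inner ℝ w y) ^ 2) + 2 * ‖y - w‖ₑ := by
  have h0 : ‖y - w‖ ^ 2 = 2 - 2 * inner ℝ w y := by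
    rw [norm_sub_sq_real, hw, hy, real_inner_comm]; ring
  have h1 : ‖y - w‖ ≤ 2 := by
    have := norm_sub_le y w
    rw [hw, hy] at this; linarith
  have h2 := norm_nonneg (y - w)
  have h3 : 1 ≤ (inner ℝ w y) ^ 2 + 2 * ‖y - w‖ := by
    have : inner ℝ w y = 1 - ‖y - w‖ ^ 2 / 2 := by linarith
    rw [this]
    nlinarith [sq_nonneg (‖y - w‖ ^ 2)]
  rw [← ofReal_norm, show (2:ℝ≥0∞) = ENNReal.ofReal 2 by simp,
    ← ENNReal.ofReal_mul (by norm_num), ← ENNReal.ofReal_add (sq_nonneg _) (by positivity),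
    ← ENNReal.ofReal_one]
  exact ENNReal.ofReal_le_ofReal h3

lemma good_point (u : (Fin n → ℝ) → E) (hu : Continuous u) (q : Fin n → ℤ)
    (L : (Fin n → ℝ) →ₗ[ℝ] (Fin n → ℝ)) (B : Set (Fin n → ℝ))
    (hdis : ∀ c ∈ B, ∫⁻ x in midCube q, ‖u (x + L c) - u x‖ₑ ≤ ENNReal.ofReal ((1/2)^n / 4)) :
    ∃ x0 ∈ midCube q, ∫⁻ c in B, ‖u (x0 + L c) - u x0‖ₑ ≤ volume B / 4 := by
  have hLc : Continuous L := LinearMap.continuous_of_finiteDimensional L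
  have hjc : Continuous (fun z : (Fin n → ℝ) × (Fin n → ℝ) => ‖u (z.1 + L z.2) - u z.1‖ₑ) := by
    fun_prop
  have htot : ∫⁻ x in midCube q, ∫⁻ c in B, ‖u (x + L c) - u x‖ₑ ≤
      ENNReal.ofReal ((1/2)^n / 4) * volume B := by
    rw [lintegral_lintegral_swap hjc.measurable.aemeasurable]
    calc _ ≤ ∫⁻ c in B, ENNReal.ofReal ((1/2)^n / 4) := setLIntegral_mono measurable_const hdis
      _ = _ := setLIntegral_const _ _
  have hv0 : volume (midCube q) ≠ 0 := by
    rw [midCube_volume]; simp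
  have hv1 : volume (midCube q) ≠ ∞ := by
    rw [midCube_volume]; simp
  obtain ⟨x0, hx0, hx⟩ := exists_le_setLAverage (f := fun x => ∫⁻ c in B, ‖u (x + L c) - u x‖ₑ)
    hv0 hv1 (hjc.measurable.lintegral_prod_right' (ν := volume.restrict B)).aemeasurable
  refine ⟨x0, hx0, hx.trans ?_⟩
  rw [setLAverage_eq]
  rw [ENNReal.div_le_iff hv0 hv1]
  refine htot.trans (le_of_eq ?_)
  rw [midCube_volume, ENNReal.ofReal_div_of_pos (by norm_num), ENNReal.div_eq_inv_mul,
    ENNReal.div_eq_inv_mul]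
  simp only [ENNReal.ofReal_ofNat]
  ring

lemma visibility (hn : 0 < n) (u : (Fin n → ℝ) → E) (hu : ContDiff ℝ 1 u) (hu1 : ∀ x, ‖u x‖ = 1)
    (q : Fin n → ℤ) (V : Fin n → Fin n → ℝ) (hV : ∀ j i, |V j i| ≤ 1) (θ : ℝ) (hθ : 0 < θ)
    (hdet : θ ≤ |Matrix.det (Matrix.of fun i j : Fin n => V j i)|) (m N : ℝ) (hm : 0 ≤ m)
    (hN : 0 < N)
    (hiso : ∀ w, ‖w‖ = 1 → ENNReal.ofReal m * ∫⁻ x in cubeSet q, ENNReal.ofReal ((inner ℝ w (u x)) ^ 2)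
        ≤ ENNReal.ofReal (2 / N))
    (s : Fin n → ℝ) (hs : ∀ j, 1 ≤ s j)
    (hS : ∀ j, ∫⁻ x in cubeSet q, ‖fderiv ℝ u x (V j)‖ₑ ≤ ENNReal.ofReal (s j)) :
    ((1/2)^n / 8 / n) ^ n * θ * N * m / 4 ≤ ∏ j, s j := by
  have hn' : (0:ℝ) < n := by exact_mod_cast hn
  set κ : ℝ := (1/2)^n / 8 / n with hκ
  have hκ0 : 0 < κ := by positivity
  have hnκ : n * κ = (1/2)^n / 8 := by rw [hκ]; field_simp
  have hp1 : ((1:ℝ)/2)^n ≤ 1 := pow_le_one₀ (by norm_num) (by norm_num)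
  have hs0 : ∀ j, 0 < s j := fun j => by linarith [hs j]
  set T : Matrix (Fin n) (Fin n) ℝ := Matrix.of fun i j : Fin n => V j i with hT
  set L : (Fin n → ℝ) →ₗ[ℝ] (Fin n → ℝ) := Matrix.toLin' T with hL
  have hLdet : LinearMap.det L = T.det := LinearMap.det_toLin' T
  have hLV : ∀ c, L c = ∑ j, c j • V j := by
    intro c
    funext i
    simp [hL, hT, Matrix.toLin'_apply, Matrix.mulVec, dotProduct, Finset.sum_apply, mul_comm]
  have hdet0 : LinearMap.det L ≠ 0 := by
    rw [hLdet]; intro h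
    rw [h, abs_zero] at hdet; linarith
  set B : Set (Fin n → ℝ) := Set.Icc 0 (fun j => κ / s j) with hB
  have hBm : MeasurableSet B := measurableSet_Icc
  have hBv : volume B = ENNReal.ofReal (κ ^ n / ∏ j, s j) := by
    rw [hB, Real.volume_Icc_pi]
    simp only [Pi.zero_apply, sub_zero]
    rw [← ENNReal.ofReal_prod_of_nonneg (fun j _ => (div_pos hκ0 (hs0 j)).le),
      Finset.prod_div_distrib]
    simp
  have hsmall : ∀ c ∈ B, ∀ i, |L c i| < 1/4 := by
    intro c hc i
    rw [hLV, Finset.sum_apply]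
    calc |∑ j, (c j • V j) i| ≤ ∑ j, |(c j • V j) i| := Finset.abs_sum_le_sum_abs _ _
      _ ≤ ∑ j : Fin n, κ := by
          apply Finset.sum_le_sum
          intro j _
          have h1 := hc.1 j
          have h2 := hc.2 j
          simp only [Pi.zero_apply] at h1 h2
          have h3 : κ / s j ≤ κ := div_le_self hκ0.le (hs j)
          simp only [Pi.smul_apply, smul_eq_mul, abs_mul, abs_of_nonneg h1]
          nlinarith [hV j i, abs_nonneg (V j i)]
      _ = n * κ := by simp
      _ < 1/4 := by rw [hnκ]; linarith
  obtain ⟨x0, hx0, hx⟩ := good_point u hu.continuous q L B (by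
    intro c hc
    refine (displacement u hu q (L c) (hsmall c hc)).trans ?_
    rw [hLV]
    refine (cubeDeriv_combination u hu q V c s κ hs hS hc.1 hc.2 hκ0.le).trans ?_
    apply ENNReal.ofReal_le_ofReal
    rw [hnκ]
    have : (0:ℝ) < (1/2)^n := by positivity
    linarith)
  set w := u x0 with hw
  have hLc : Continuous L := LinearMap.continuous_of_finiteDimensional L
  have huc := hu.continuous
  set g : (Fin n → ℝ) → ℝ≥0∞ := fun x => ENNReal.ofReal ((inner ℝ w (u x)) ^ 2) with hg
  have hgm : Measurable g := by
    have : Continuous (fun x => (inner ℝ w (u x)) ^ 2) := by fun_prop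
    exact this.measurable.ennreal_ofReal
  have h1 : volume B ≤ (∫⁻ c in B, g (x0 + L c)) + 2 * (volume B / 4) := by
    calc volume B = ∫⁻ c in B, 1 := by rw [setLIntegral_const, one_mul]
      _ ≤ ∫⁻ c in B, (g (x0 + L c) + 2 * ‖u (x0 + L c) - w‖ₑ) :=
          lintegral_mono fun c => sphere_inner w _ (hu1 _) (hu1 _)
      _ = (∫⁻ c in B, g (x0 + L c)) + 2 * ∫⁻ c in B, ‖u (x0 + L c) - w‖ₑ := by
          rw [lintegral_add_left (show Measurable (fun c => g (x0 + L c)) from hgm.comp (by fun_prop)), lintegral_const_mul]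
          have : Continuous (fun c => ‖u (x0 + L c) - w‖ₑ) := by fun_prop
          exact this.measurable
      _ ≤ _ := by gcongr
  have h2 : ∫⁻ c in B, g (x0 + L c) ≤ ENNReal.ofReal (1/θ) * ∫⁻ x in cubeSet q, g x := by
    calc ∫⁻ c in B, g (x0 + L c) ≤ ∫⁻ c, (cubeSet q).indicator g (x0 + L c) := by
          rw [← lintegral_indicator hBm]
          apply lintegral_mono
          intro c
          by_cases hc : c ∈ B
          · beta_reduce
            rw [Set.indicator_of_mem hc, Set.indicator_of_mem (midCube_shift hx0 (hsmall c hc))]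
          · rw [Set.indicator_of_notMem hc]; exact zero_le
      _ = ENNReal.ofReal |(LinearMap.det L)⁻¹| * ∫⁻ x in cubeSet q, g x := by
          rw [lintegral_affine L hdet0 x0 _ (hgm.indicator (cubeSet_meas q)),
            lintegral_indicator (cubeSet_meas q)]
      _ ≤ _ := by
          gcongr
          rw [abs_inv, hLdet, one_div]
          exact inv_anti₀ hθ hdet
  have h3 := hiso w (hu1 x0)
  set P := ∏ j, s j with hP
  have hP0 : 0 < P := Finset.prod_pos fun j _ => hs0 j
  have h4 : ENNReal.ofReal (m * (κ ^ n / P)) ≤ ENNReal.ofReal (1/θ * (2 / N) + m * (κ^n / P) / 2) := by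
    rw [ENNReal.ofReal_add (by positivity) (by positivity)]
    calc ENNReal.ofReal (m * (κ ^ n / P)) = ENNReal.ofReal m * volume B := by
          rw [ENNReal.ofReal_mul hm, hBv]
      _ ≤ ENNReal.ofReal m * (ENNReal.ofReal (1/θ) * (∫⁻ x in cubeSet q, g x) + 2 * (volume B / 4)) := by
          gcongr
          exact h1.trans (by gcongr)
      _ = ENNReal.ofReal (1/θ) * (ENNReal.ofReal m * ∫⁻ x in cubeSet q, g x) +
            ENNReal.ofReal m * (2 * (volume B / 4)) := by ring
      _ ≤ ENNReal.ofReal (1/θ) * ENNReal.ofReal (2/N) + ENNReal.ofReal m * (2 * (volume B / 4)) := by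
          gcongr
      _ = _ := by
          rw [← ENNReal.ofReal_mul (by positivity)]
          congr 1
          rw [hBv, show (2:ℝ≥0∞) = ENNReal.ofReal 2 by simp, show (4:ℝ≥0∞) = ENNReal.ofReal 4 by simp,
            ← ENNReal.ofReal_div_of_pos (by norm_num), ← ENNReal.ofReal_mul (by norm_num),
            ← ENNReal.ofReal_mul hm]
          congr 1
          ring
  rw [ENNReal.ofReal_le_ofReal_iff (by positivity)] at h4
  have h5 : m * (κ^n / P) / 2 ≤ 1/θ * (2/N) := by linarith
  have h6 : m * (κ^n / P) / 2 * (θ * N * P / 2) ≤ 1/θ * (2/N) * (θ * N * P / 2) := by gcongr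
  have h7 : m * (κ^n / P) / 2 * (θ * N * P / 2) = κ^n * θ * N * m / 4 := by
    field_simp; try ring
  have h8 : 1/θ * (2/N) * (θ * N * P / 2) = P := by
    field_simp
  linarith

end visibility

section tube
variable {n : ℕ}

lemma cubeSet_unique {k l : Fin n → ℤ} {x : Fin n → ℝ} (hk : x ∈ cubeSet k) (hl : x ∈ cubeSet l) :
    k = l := by
  funext i
  have h1 : ⌊x i⌋ = k i := Int.floor_eq_iff.2 (hk i)
  have h2 : ⌊x i⌋ = l i := Int.floor_eq_iff.2 (hl i)
  rw [← h1, h2]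

lemma tube_sum (f : (Fin n → ℝ) → ℝ≥0∞) (hf : Measurable f) (p v : Fin n → ℝ)
    (hv : ∀ i, |v i| ≤ 1) (s : Finset (Fin n → ℤ))
    (hR : ∀ q ∈ s, ∀ x ∈ cubeSet q, ∃ t : ℝ, ∀ i, |x i - (p i + t * v i)| ≤ 3)
    (b : ℝ≥0∞) (hline : ∀ p, ∫⁻ t : ℝ, f (p + t • v) ≤ b) :
    ∑ q ∈ s, ∫⁻ x in cubeSet q, f x ≤ b * ENNReal.ofReal (8 ^ n) := by
  classical
  set W : Set (Fin n → ℝ) := Set.Icc (fun i => p i - 4) (fun i => p i + 4) with hW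
  have hWm : MeasurableSet W := measurableSet_Icc
  have hWv : volume W = ENNReal.ofReal (8 ^ n) := by
    rw [hW, Real.volume_Icc_pi]
    have : ∀ i, p i + 4 - (p i - 4) = 8 := fun i => by ring
    simp only [this]
    rw [Finset.prod_const, Finset.card_univ, Fintype.card_fin, ENNReal.ofReal_pow (by norm_num)]
  set χ : (Fin n → ℝ) → ℝ≥0∞ := W.indicator (fun _ => 1) with hχ
  have hχm : Measurable χ := measurable_const.indicator hWm
  have hone : ∀ q ∈ s, ∀ y ∈ cubeSet q, 1 ≤ ∫⁻ t : ℝ, χ (y - t • v) := by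
    intro q hq y hy
    obtain ⟨t0, ht0⟩ := hR q hq y hy
    calc (1 : ℝ≥0∞) = ∫⁻ t in Set.Icc t0 (t0 + 1), (1 : ℝ≥0∞) := by
          rw [setLIntegral_const]; simp
      _ ≤ ∫⁻ t : ℝ, χ (y - t • v) := by
          rw [← lintegral_indicator measurableSet_Icc]
          apply lintegral_mono
          intro t
          beta_reduce
          by_cases ht : t ∈ Set.Icc t0 (t0 + 1)
          · have hmem : y - t • v ∈ W := by
              have key : ∀ i, |y i - t * v i - p i| ≤ 4 := by
                intro i
                have e : y i - t * v i - p i = (y i - (p i + t0 * v i)) - (t - t0) * v i := by ring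
                have h3 : |(t - t0) * v i| ≤ 1 := by
                  rw [abs_mul, abs_of_nonneg (by linarith [ht.1])]
                  nlinarith [ht.1, ht.2, hv i, abs_nonneg (v i)]
                rw [e]
                exact (abs_sub _ _).trans (by linarith [ht0 i])
              constructor
              · intro i
                have := (abs_le.1 (key i)).1
                simp only [Pi.sub_apply, Pi.smul_apply, smul_eq_mul]; linarith
              · intro i
                have := (abs_le.1 (key i)).2
                simp only [Pi.sub_apply, Pi.smul_apply, smul_eq_mul]; linarith
            rw [Set.indicator_of_mem ht, hχ, Set.indicator_of_mem hmem]
          · rw [Set.indicator_of_notMem ht]; exact zero_le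
  have hpt : ∀ y, ∑ q ∈ s, (cubeSet q).indicator f y ≤ ∫⁻ t : ℝ, f y * χ (y - t • v) := by
    intro y
    rw [lintegral_const_mul _ (show Measurable fun t : ℝ => χ (y - t • v) from hχm.comp (by fun_prop))]
    by_cases h : ∃ q ∈ s, y ∈ cubeSet q
    · obtain ⟨q, hq, hy⟩ := h
      rw [Finset.sum_eq_single q]
      · rw [Set.indicator_of_mem hy]
        calc f y = f y * 1 := (mul_one _).symm
          _ ≤ _ := by gcongr; exact hone q hq y hy
      · intro q' _ hne
        exact Set.indicator_of_notMem (fun h' => hne (cubeSet_unique h' hy)) _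
      · intro h'; exact absurd hq h'
    · push Not at h
      rw [Finset.sum_eq_zero (fun q hq => Set.indicator_of_notMem (h q hq) _)]
      exact zero_le
  calc ∑ q ∈ s, ∫⁻ x in cubeSet q, f x = ∫⁻ y, ∑ q ∈ s, (cubeSet q).indicator f y := by
        rw [lintegral_finsetSum _ (fun q _ => hf.indicator (cubeSet_meas q))]
        exact Finset.sum_congr rfl fun q _ => (lintegral_indicator (cubeSet_meas q) f).symm
    _ ≤ ∫⁻ y, ∫⁻ t : ℝ, f y * χ (y - t • v) := lintegral_mono hpt
    _ = ∫⁻ t : ℝ, ∫⁻ y, f y * χ (y - t • v) := by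
        apply lintegral_lintegral_swap
        apply Measurable.aemeasurable
        exact (hf.comp measurable_fst).mul (hχm.comp (f := fun z : (Fin n → ℝ) × ℝ => z.1 - z.2 • v)
          (by fun_prop))
    _ = ∫⁻ t : ℝ, ∫⁻ x, f (x + t • v) * χ x := by
        apply lintegral_congr
        intro t
        rw [← lintegral_add_right_eq_self _ (t • v)]
        simp only [add_sub_cancel_right]
    _ = ∫⁻ x, ∫⁻ t : ℝ, f (x + t • v) * χ x := by
        apply lintegral_lintegral_swap
        apply Measurable.aemeasurable
        exact (hf.comp (f := fun z : ℝ × (Fin n → ℝ) => z.2 + z.1 • v) (by fun_prop)).mul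
          (hχm.comp measurable_snd)
    _ ≤ ∫⁻ x, b * χ x := by
        apply lintegral_mono
        intro x
        beta_reduce
        rw [lintegral_mul_const _ (show Measurable fun t : ℝ => f (x + t • v) from hf.comp (by fun_prop))]
        gcongr
        exact hline x
    _ = b * ENNReal.ofReal (8 ^ n) := by
        rw [lintegral_const_mul _ hχm, hχ, lintegral_indicator hWm, setLIntegral_const, hWv, one_mul]

lemma touch_geom {p v : EuclideanSpace ℝ (Fin n)} {k : Fin n → ℤ}
    (h : (cylinder p v 1 ∩ latticeCube k).Nonempty) (x : Fin n → ℝ) (hx : x ∈ cubeSet k) :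
    ∃ t : ℝ, ∀ i, |x i - (p i + t * v i)| ≤ 3 := by
  obtain ⟨y, hy1, hy2⟩ := h
  have hlt : Metric.infDist y {y | ∃ t : ℝ, y = p + t • v} < 2 := lt_of_le_of_lt hy1 (by norm_num)
  have hne : ({y | ∃ t : ℝ, y = p + t • v} : Set (EuclideanSpace ℝ (Fin n))).Nonempty :=
    ⟨p, 0, by simp⟩
  rw [Metric.infDist_lt_iff hne] at hlt
  obtain ⟨z, ⟨t, rfl⟩, hz⟩ := hlt
  refine ⟨t, fun i => ?_⟩
  have h1 : |y i - (p i + t * v i)| ≤ 2 := by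
    have := PiLp.norm_apply_le (y - (p + t • v)) i
    rw [dist_eq_norm] at hz
    simp only [PiLp.sub_apply, PiLp.add_apply, PiLp.smul_apply, smul_eq_mul, Real.norm_eq_abs] at this
    linarith
  have h2 := hy2 i
  have h3 := hx i
  have h4 : |x i - y i| ≤ 1 := abs_le.2 ⟨by linarith, by linarith⟩
  calc |x i - (p i + t * v i)| = |(x i - y i) + (y i - (p i + t * v i))| := by ring_nf
    _ ≤ _ := abs_add_le _ _
    _ ≤ 3 := by linarith

end tube

lemma final_ineq {κ : Type*} (n : ℕ) (hn : 2 ≤ n) (s : Finset κ) (A : Fin n → ℝ) (hA : ∀ j, 0 < A j)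
    (C1 c θ Z : ℝ) (hC1 : 0 < C1) (hc : 0 < c) (hθ : 0 < θ) (hZ : 0 < Z) (F : κ → ℝ)
    (hF : ∀ k ∈ s, 0 ≤ F k) (hZs : Z = ∑ k ∈ s, F k ^ ((1:ℝ) / ((n:ℝ) - 1)))
    (a : Fin n → κ → ℝ) (ha : ∀ j, ∀ k ∈ s, 0 ≤ a j k) (hsum : ∀ j, ∑ k ∈ s, a j k ≤ C1 * A j)
    (hprod : ∀ k ∈ s, c * θ * (F k * (F k ^ ((1:ℝ) / ((n:ℝ) - 1)) / Z)) ≤ ∏ j, a j k) :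
    Z ≤ (C1 ^ n / c) ^ ((1:ℝ) / ((n:ℝ) - 1)) * θ ^ (-(1:ℝ) / ((n:ℝ) - 1)) *
      ∏ j, A j ^ ((1:ℝ) / ((n:ℝ) - 1)) := by
  have hn2 : (2:ℝ) ≤ n := by exact_mod_cast hn
  have hn0 : (0:ℝ) < n := by linarith
  have hn1 : (0:ℝ) < (n:ℝ) - 1 := by linarith
  set e : ℝ := (1:ℝ) / ((n:ℝ) - 1) with he
  have he0 : 0 < e := by positivity
  set P : ℝ := ∏ j, (C1 * A j) with hP
  have hP0 : 0 < P := Finset.prod_pos fun j _ => mul_pos hC1 (hA j)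
  set D : ℝ := c * θ / (Z * P) with hD
  have hD0 : 0 < D := by positivity
  have hstep : ∀ k ∈ s, D ^ ((1:ℝ)/n) * F k ^ e ≤ ∑ j, (1:ℝ)/n * (a j k / (C1 * A j)) := by
    intro k hk
    have hFk := hF k hk
    have hb : ∀ j, 0 ≤ a j k / (C1 * A j) := fun j =>
      div_nonneg (ha j k hk) (mul_pos hC1 (hA j)).le
    have hamgm := Real.geom_mean_le_arith_mean_weighted Finset.univ (fun _ : Fin n => (1:ℝ)/n)
      (fun j => a j k / (C1 * A j)) (fun _ _ => by positivity) (by simp; field_simp) (fun j _ => hb j)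
    refine le_trans ?_ hamgm
    rw [Real.finsetProd_rpow _ _ (fun j _ => hb j)]
    have hpow : F k * F k ^ e = (F k ^ e) ^ (n:ℝ) := by
      rcases hFk.eq_or_lt with h0 | h0
      · rw [← h0, Real.zero_rpow he0.ne', Real.zero_rpow hn0.ne', zero_mul]
      · rw [← Real.rpow_mul h0.le]
        nth_rewrite 1 [← Real.rpow_one (F k)]
        rw [← Real.rpow_add h0]
        congr 1
        rw [he]; field_simp; ring
    have hineq : D * (F k ^ e) ^ (n:ℝ) ≤ ∏ j, (a j k / (C1 * A j)) := by
      rw [Finset.prod_div_distrib, ← hP, le_div_iff₀ hP0]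
      refine le_trans (le_of_eq ?_) (hprod k hk)
      rw [← hpow, hD]
      field_simp
    calc D ^ ((1:ℝ)/n) * F k ^ e = (D * (F k ^ e) ^ (n:ℝ)) ^ ((1:ℝ)/n) := by
          rw [Real.mul_rpow hD0.le (by positivity), ← Real.rpow_mul (by positivity) (n:ℝ),
            mul_one_div_cancel hn0.ne', Real.rpow_one]
      _ ≤ _ := Real.rpow_le_rpow (by positivity) hineq (by positivity)
  have hDZ : D ^ ((1:ℝ)/n) * Z ≤ 1 := by
    calc D ^ ((1:ℝ)/n) * Z = ∑ k ∈ s, D ^ ((1:ℝ)/n) * F k ^ e := by rw [← Finset.mul_sum, ← hZs]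
      _ ≤ ∑ k ∈ s, ∑ j, (1:ℝ)/n * (a j k / (C1 * A j)) := Finset.sum_le_sum hstep
      _ = ∑ j, (1:ℝ)/n * ((∑ k ∈ s, a j k) / (C1 * A j)) := by
          rw [Finset.sum_comm]
          apply Finset.sum_congr rfl
          intro j _
          rw [← Finset.mul_sum, Finset.sum_div]
      _ ≤ ∑ j : Fin n, (1:ℝ)/n := by
          apply Finset.sum_le_sum
          intro j _
          have : (∑ k ∈ s, a j k) / (C1 * A j) ≤ 1 :=
            (div_le_one (mul_pos hC1 (hA j))).2 (hsum j)
          have h1n : (0:ℝ) < 1 / n := by positivity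
          nlinarith
      _ = 1 := by simp; field_simp
  have hDZn : D * Z ^ (n:ℝ) ≤ 1 := by
    have h := Real.rpow_le_rpow (by positivity) hDZ hn0.le
    rw [Real.mul_rpow (by positivity) hZ.le, ← Real.rpow_mul hD0.le, one_div_mul_cancel hn0.ne',
      Real.rpow_one, Real.one_rpow] at h
    exact h
  have hZP : Z ^ ((n:ℝ) - 1) ≤ P / (c * θ) := by
    rw [Real.rpow_sub hZ, Real.rpow_one, le_div_iff₀ (by positivity)]
    rw [hD, div_mul_eq_mul_div, div_le_one (by positivity)] at hDZn
    rw [div_mul_eq_mul_div, div_le_iff₀ hZ]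
    linarith
  have hfin := Real.rpow_le_rpow (by positivity) hZP he0.le
  rw [← Real.rpow_mul hZ.le, he, mul_one_div_cancel hn1.ne', Real.rpow_one, ← he] at hfin
  refine hfin.trans (le_of_eq ?_)
  have hPA : P / (c * θ) = (C1 ^ n / c) * θ⁻¹ * ∏ j, A j := by
    rw [hP, Finset.prod_mul_distrib, Finset.prod_const, Finset.card_univ, Fintype.card_fin]
    field_simp
  have hA0 : 0 < ∏ j, A j := Finset.prod_pos fun j _ => hA j
  rw [hPA, Real.mul_rpow (by positivity) hA0.le, Real.mul_rpow (by positivity) (by positivity),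
    Real.finsetProd_rpow _ _ (fun j _ => (hA j).le), neg_div, ← he, Real.rpow_neg hθ.le,
    Real.inv_rpow hθ.le]

section assembly
variable {n : ℕ} {E : Type} [NormedAddCommGroup E] [InnerProductSpace ℝ E] [CompleteSpace E]

/-- The directional variation of `u` over a lattice cube. -/
noncomputable def cubeVar (u : (Fin n → ℝ) → E) (q : Fin n → ℤ) (v : Fin n → ℝ) : ℝ≥0∞ :=
  ∫⁻ x in cubeSet q, ‖fderiv ℝ u x v‖ₑ

lemma tube_real (u : (Fin n → ℝ) → E) (hu : ContDiff ℝ 1 u) (b : ℝ) (hb : 0 ≤ b)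
    (hline : ∀ p v : Fin n → ℝ, ∫⁻ t : ℝ, ‖fderiv ℝ u (p + t • v) v‖ₑ ≤ ENNReal.ofReal b)
    (p v : EuclideanSpace ℝ (Fin n)) (hv : ‖v‖ = 1) (s : Finset (Fin n → ℤ))
    (hs : ∀ k ∈ s, (cylinder p v 1 ∩ latticeCube k).Nonempty) :
    (∀ k ∈ s, cubeVar u k (fun i => v i) ≠ ∞) ∧
      ∑ k ∈ s, (cubeVar u k (fun i => v i)).toReal ≤ b * 8 ^ n := by
  have h1 : ∑ k ∈ s, cubeVar u k (fun i => v i) ≤ ENNReal.ofReal b * ENNReal.ofReal (8 ^ n) := by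
    apply tube_sum (fun x => ‖fderiv ℝ u x (fun i => v i)‖ₑ)
      ((fderiv_enorm_cont u hu).comp (continuous_id.prodMk continuous_const)).measurable
      (fun i => p i) (fun i => v i)
    · intro i
      have := PiLp.norm_apply_le v i
      rwa [hv, Real.norm_eq_abs] at this
    · intro q hq x hx
      exact touch_geom (hs q hq) x hx
    · intro p'
      exact hline p' _
  rw [← ENNReal.ofReal_mul hb] at h1
  have hfin : ∀ k ∈ s, cubeVar u k (fun i => v i) ≠ ∞ := by
    intro k hk
    apply ne_top_of_le_ne_top ENNReal.ofReal_ne_top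
    refine le_trans ?_ h1
    exact Finset.single_le_sum (f := fun k => cubeVar u k (fun i => v i)) (fun _ _ => zero_le) hk
  refine ⟨hfin, ?_⟩
  rw [← ENNReal.toReal_sum hfin]
  exact ENNReal.toReal_le_of_le_ofReal (by positivity) h1

end assembly

lemma finite_bound (n : ℕ) (hn : 2 ≤ n) (C0 : ℝ) (hC0 : 0 < C0)
    (hbal : ∀ (d : ℕ) (K : Finset (Fin n → ℤ)) (M : (Fin n → ℤ) → ℝ),
    (∀ q ∈ K, 0 ≤ M q) → ∑ q ∈ K, M q = 1 →
    ∃ u : (Fin n → ℝ) → EuclideanSpace ℝ (Fin n → Fin (d+1)), ContDiff ℝ 1 u ∧ (∀ x, ‖u x‖ = 1) ∧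
      (∀ q ∈ K, ∀ w, ‖w‖ = 1 → ENNReal.ofReal (M q) * ∫⁻ x in cubeSet q, ENNReal.ofReal ((inner ℝ w (u x)) ^ 2)
        ≤ ENNReal.ofReal (2 / ((d:ℝ)+1)^n)) ∧
      (∀ p v : Fin n → ℝ, ∫⁻ t : ℝ, ‖fderiv ℝ u (p + t • v) v‖ₑ ≤ ENNReal.ofReal (C0 * (n * d))))
    (A : Fin n → ℕ) (p v : ∀ j : Fin n, Fin (A j) → EuclideanSpace ℝ (Fin n)) (θ : ℝ)
    (hθ : 0 < θ) (hv : ∀ j a, ‖v j a‖ = 1)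
    (hdet : ∀ a : ∀ j : Fin n, Fin (A j),
          θ ≤ |Matrix.det (Matrix.of fun i j : Fin n => v j (a j) i)|)
    (J : ∀ j : Fin n, (Fin n → ℤ) → Finset (Fin (A j)))
    (hJ : ∀ j k a, a ∈ J j k ↔ (cylinder (p j a) (v j a) 1 ∩ latticeCube k).Nonempty)
    (s : Finset (Fin n → ℤ)) :
    ∑ k ∈ s, (∏ j : Fin n, ((J j k).card : ℝ)) ^ ((1:ℝ) / ((n:ℝ) - 1)) ≤
      ((1 + C0 * n * 8 ^ n) ^ n / (((1/2)^n / 8 / n) ^ n / 4)) ^ ((1:ℝ) / ((n:ℝ) - 1)) *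
        θ ^ (-(1:ℝ) / ((n:ℝ) - 1)) * ∏ j : Fin n, (A j : ℝ) ^ ((1:ℝ) / ((n:ℝ) - 1)) := by
  classical
  have hn2 : (2:ℝ) ≤ n := by exact_mod_cast hn
  have hn0 : (0:ℝ) < n := by linarith
  have hn1 : (0:ℝ) < (n:ℝ) - 1 := by linarith
  set e : ℝ := (1:ℝ) / ((n:ℝ) - 1) with he
  have he0 : 0 < e := by positivity
  set F : (Fin n → ℤ) → ℝ := fun k => ∏ j : Fin n, ((J j k).card : ℝ) with hFdef
  have hF : ∀ k, 0 ≤ F k := fun k => Finset.prod_nonneg fun j _ => Nat.cast_nonneg _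
  set Z : ℝ := ∑ k ∈ s, F k ^ e with hZdef
  have hZ0 : 0 ≤ Z := Finset.sum_nonneg fun k _ => Real.rpow_nonneg (hF k) _
  rcases hZ0.eq_or_lt with hZ | hZ
  · rw [← hZ]
    positivity
  have hAne : ∀ j, 0 < (A j : ℝ) := by
    obtain ⟨k, hk, hk0⟩ := Finset.exists_ne_zero_of_sum_ne_zero hZ.ne'
    have hFk : F k ≠ 0 := by
      intro h; rw [h, Real.zero_rpow he0.ne'] at hk0; exact hk0 rfl
    intro j
    have h1 := (Finset.prod_ne_zero_iff.1 hFk) j (Finset.mem_univ j)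
    have h2 : (J j k).card ≤ A j := by
      simpa using Finset.card_le_univ (J j k)
    have h3 : (J j k).card ≠ 0 := by exact_mod_cast h1
    have : 0 < A j := by omega
    exact_mod_cast this
  set d : ℕ := s.card with hd
  obtain ⟨u, hu, hu1, hiso, hline⟩ := hbal d s (fun k => F k ^ e / Z)
    (fun k _ => div_nonneg (Real.rpow_nonneg (hF k) _) hZ.le)
    (by rw [← Finset.sum_div, div_self hZ.ne'])
  have hd1 : (0:ℝ) < (d:ℝ) + 1 := by positivity
  let σ : ∀ j : Fin n, Fin (A j) → (Fin n → ℤ) → ℝ := fun j a k =>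
    1 + (cubeVar u k (fun i => v j a i)).toReal
  have hσ : ∀ j a k, 1 ≤ σ j a k := fun j a k => by
    have := ENNReal.toReal_nonneg (a := cubeVar u k (fun i => v j a i))
    simp only [σ]; linarith
  have htube : ∀ j a, (∀ k ∈ s.filter (fun k => a ∈ J j k), cubeVar u k (fun i => v j a i) ≠ ∞) ∧
      ∑ k ∈ s.filter (fun k => a ∈ J j k), (cubeVar u k (fun i => v j a i)).toReal ≤
        C0 * (n * d) * 8 ^ n := by
    intro j a
    apply tube_real u hu (C0 * (n * d)) (by positivity) hline (p j a) (v j a) (hv j a)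
    intro k hk
    exact (hJ j k a).1 (Finset.mem_filter.1 hk).2
  apply final_ineq n hn s (fun j => (A j : ℝ)) hAne (1 + C0 * n * 8 ^ n) (((1/2)^n / 8 / n) ^ n / 4)
    θ Z (by positivity) (by positivity) hθ hZ F (fun k _ => hF k) hZdef
    (fun j k => ∑ a ∈ J j k, σ j a k / ((d:ℝ) + 1))
  · intro j k _
    exact Finset.sum_nonneg fun a _ => div_nonneg (by linarith [hσ j a k]) hd1.le
  · intro j
    have hswap : ∑ k ∈ s, ∑ a ∈ J j k, σ j a k / ((d:ℝ) + 1) =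
        ∑ a : Fin (A j), ∑ k ∈ s.filter (fun k => a ∈ J j k), σ j a k / ((d:ℝ) + 1) := by
      apply Finset.sum_comm'
      intro k a
      simp
    rw [hswap]
    calc _ ≤ ∑ a : Fin (A j), (1 + C0 * n * 8 ^ n) := by
          apply Finset.sum_le_sum
          intro a _
          rw [← Finset.sum_div, div_le_iff₀ hd1]
          simp only [σ]
          rw [Finset.sum_add_distrib, Finset.sum_const, nsmul_eq_mul, mul_one]
          have h1 := (htube j a).2
          have h2 : (((s.filter (fun k => a ∈ J j k)).card : ℕ) : ℝ) ≤ d := by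
            exact_mod_cast Finset.card_filter_le _ _
          have h3 : 0 ≤ C0 * n * 8 ^ n := by positivity
          nlinarith
      _ = (1 + C0 * n * 8 ^ n) * A j := by
          rw [Finset.sum_const, Finset.card_univ, Fintype.card_fin, nsmul_eq_mul, mul_comm]
  · intro k hk
    rw [Finset.prod_univ_sum]
    have hcount : ((Fintype.piFinset (fun j => J j k)).card : ℝ) = F k := by
      rw [Fintype.card_piFinset, hFdef]
      push_cast
      rfl
    have hterm : ∀ a ∈ Fintype.piFinset (fun j => J j k),
        (((1/2)^n / 8 / n) ^ n / 4) * θ * (F k ^ e / Z) ≤ ∏ j, σ j (a j) k / ((d:ℝ) + 1) := by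
      intro a ha
      rw [Fintype.mem_piFinset] at ha
      have hvis := visibility (by omega : 0 < n) u hu hu1 k (fun j i => v j (a j) i)
        (fun j i => by
          have := PiLp.norm_apply_le (v j (a j)) i
          rwa [hv, Real.norm_eq_abs] at this)
        θ hθ (hdet a) (F k ^ e / Z) (((d:ℝ)+1)^n)
        (div_nonneg (Real.rpow_nonneg (hF k) _) hZ.le) (by positivity) (hiso k hk)
        (fun j => σ j (a j) k) (fun j => hσ j (a j) k)
        (fun j => by
          have hfin := (htube j (a j)).1 k (Finset.mem_filter.2 ⟨hk, ha j⟩)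
          change cubeVar u k (fun i => v j (a j) i) ≤ _
          rw [← ENNReal.ofReal_toReal hfin]
          apply ENNReal.ofReal_le_ofReal
          simp only [σ]
          linarith)
      rw [Finset.prod_div_distrib, Finset.prod_const, Finset.card_univ, Fintype.card_fin,
        le_div_iff₀ (by positivity)]
      refine le_trans (le_of_eq ?_) hvis
      ring
    calc _ = ∑ a ∈ Fintype.piFinset (fun j => J j k),
          (((1/2)^n / 8 / n) ^ n / 4) * θ * (F k ^ e / Z) := by
          rw [Finset.sum_const, nsmul_eq_mul, hcount]
          ring
      _ ≤ _ := Finset.sum_le_sum hterm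

/-- **Discretized multilinear Kakeya.** For transverse families of unit cylinders, with
`M_j(Q)` the number of cylinders `T_{j,a}` meeting the unit lattice cube `Q` and
`F(Q) = ∏_j M_j(Q)`, one has `∑_Q F(Q)^{1/(n-1)} ≤ C(n) θ^{-1/(n-1)} ∏_j A(j)^{1/(n-1)}`. -/
theorem multilinear_kakeya_cubes (n : ℕ) (hn : 2 ≤ n) :
    ∃ C : ℝ, 0 < C ∧
      ∀ (A : Fin n → ℕ) (p v : ∀ j : Fin n, Fin (A j) → EuclideanSpace ℝ (Fin n)) (θ : ℝ),
        0 < θ →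
        (∀ j a, ‖v j a‖ = 1) →
        (∀ a : ∀ j : Fin n, Fin (A j),
          θ ≤ |Matrix.det (Matrix.of fun i j : Fin n => v j (a j) i)|) →
        (∑' k : Fin n → ℤ,
            (∏ j : Fin n,
              (({a : Fin (A j) | (cylinder (p j a) (v j a) 1 ∩ latticeCube k).Nonempty}.ncard : ℝ)))
            ^ ((1:ℝ) / ((n:ℝ) - 1)))
          ≤ C * θ ^ (-(1:ℝ) / ((n:ℝ) - 1)) *
              ∏ j : Fin n, (A j : ℝ) ^ ((1:ℝ) / ((n:ℝ) - 1)) := by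
  classical
  obtain ⟨C0, hC0, hbal⟩ := balanced_map
  have hn0 : (0:ℝ) < n := by
    have : 0 < n := by omega
    exact_mod_cast this
  refine ⟨((1 + C0 * n * 8 ^ n) ^ n / (((1/2)^n / 8 / n) ^ n / 4)) ^ ((1:ℝ) / ((n:ℝ) - 1)),
    by positivity, ?_⟩
  intro A p v θ hθ hv hdet
  have hcard : ∀ (j : Fin n) (k : Fin n → ℤ),
      {a : Fin (A j) | (cylinder (p j a) (v j a) 1 ∩ latticeCube k).Nonempty}.ncard =
      (Finset.univ.filter
        (fun a : Fin (A j) => (cylinder (p j a) (v j a) 1 ∩ latticeCube k).Nonempty)).card := by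
    intro j k
    rw [← Set.ncard_coe_finset]
    congr 1
    ext a
    simp
  simp only [hcard]
  apply Real.tsum_le_of_sum_le
  · intro k
    exact Real.rpow_nonneg (Finset.prod_nonneg fun j _ => Nat.cast_nonneg _) _
  · intro s
    exact finite_bound n hn C0 hC0 (hbal n) A p v θ hθ hv hdet
      (fun j k => Finset.univ.filter
        (fun a : Fin (A j) => (cylinder (p j a) (v j a) 1 ∩ latticeCube k).Nonempty))
      (fun j k a => by simp) s
end
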